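/- arXiv:0812.4002 — 9 statements merged into one kernel-verified Lean document; each statement's English description precedes it below -/
import Mathlib

section
/- Let p ≥ 1 be an integer and let θ ∈ ℝ be such that cos(pθ) ≠ 0 and sin(θ − (2l−1)π/(2p)) ≠ 0 for all 1 ≤ l ≤ p. Then ∑_{l=1}^{p} cot(θ − (2l−1)π/(2p)) = −p·tan(pθ). -/
open Real Finset

/-- Product formula, up to a constant, over the complex numbers. -/
lemma prod_sin_aux (p : ℕ) (hp : 1 ≤ p) : ∃ c : ℂ, ∀ x : ℂ,
    ∏ l ∈ Finset.Icc 1 p, Complex.sin (x - (2 * (l : ℂ) - 1) * π / (2 * p))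
      = c * Complex.cos (p * x) := by
  have hp0 : (p : ℂ) ≠ 0 := by exact_mod_cast (by omega : p ≠ 0)
  refine ⟨(∏ l ∈ Finset.Icc 1 p,
    (Complex.exp (-((2 * (l : ℂ) - 1) * π / (2 * p)) * Complex.I) / (2 * Complex.I))) * 2, ?_⟩
  intro x
  have hz := Complex.isPrimitiveRoot_exp p (by omega)
  have hb : (Complex.exp (π * Complex.I / p)) ^ p = (-1 : ℂ) := by
    rw [← Complex.exp_nat_mul, mul_div_cancel₀ _ hp0, Complex.exp_pi_mul_I]
  have key := congrArg (Polynomial.eval (Complex.exp (2 * x * Complex.I)))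
    (X_pow_sub_C_eq_prod hz (by omega) hb)
  simp only [Polynomial.eval_sub, Polynomial.eval_pow, Polynomial.eval_X, Polynomial.eval_C,
    Polynomial.eval_prod] at key
  have hI : (Complex.I : ℂ) ≠ 0 := Complex.I_ne_zero
  have hterm : ∀ l ∈ Finset.Icc 1 p, Complex.sin (x - (2 * (l : ℂ) - 1) * π / (2 * p)) =
      (Complex.exp (-((2 * (l : ℂ) - 1) * π / (2 * p)) * Complex.I) / (2 * Complex.I)) *
      (Complex.exp (-x * Complex.I) * (Complex.exp (2 * x * Complex.I) -
        Complex.exp (2 * π * Complex.I / p) ^ (l - 1) * Complex.exp (π * Complex.I / p))) := by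
    intro l hl
    have hl1 : 1 ≤ l := (Finset.mem_Icc.mp hl).1
    have e1 : Complex.exp (2 * π * Complex.I / p) ^ (l - 1) * Complex.exp (π * Complex.I / p)
        = Complex.exp (2 * ((2 * (l : ℂ) - 1) * π / (2 * p)) * Complex.I) := by
      rw [← Complex.exp_nat_mul, ← Complex.exp_add]
      congr 1
      push_cast [Nat.cast_sub hl1]
      field_simp
      ring
    rw [e1]
    generalize (2 * (l : ℂ) - 1) * π / (2 * p) = a
    have e2 : Complex.exp (-a * Complex.I) * (Complex.exp (-x * Complex.I) *
        (Complex.exp (2 * x * Complex.I) - Complex.exp (2 * a * Complex.I)))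
        = Complex.exp ((x - a) * Complex.I) - Complex.exp (-(x - a) * Complex.I) := by
      simp only [mul_sub, ← Complex.exp_add]
      congr 2 <;> ring
    rw [div_mul_eq_mul_div, e2, Complex.sin, div_eq_div_iff (by norm_num) (by simp)]
    linear_combination (-2 * (Complex.exp ((x - a) * Complex.I)
      - Complex.exp (-(x - a) * Complex.I))) * Complex.I_sq
  rw [Finset.prod_congr rfl hterm, Finset.prod_mul_distrib, mul_assoc (∏ l ∈ Finset.Icc 1 p, _)]
  congr 1
  rw [Finset.prod_mul_distrib, Finset.prod_const, Nat.card_Icc, Nat.add_sub_cancel]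
  have hre : ∏ l ∈ Finset.Icc 1 p, (Complex.exp (2 * x * Complex.I) -
        Complex.exp (2 * π * Complex.I / p) ^ (l - 1) * Complex.exp (π * Complex.I / p))
      = ∏ i ∈ Finset.range p, (Complex.exp (2 * x * Complex.I) -
        Complex.exp (2 * π * Complex.I / p) ^ i * Complex.exp (π * Complex.I / p)) := by
    rw [Finset.prod_bij (fun l _ => l - 1)]
    · intro a ha; simp at *; omega
    · intro a ha b hb h; simp at *; omega
    · intro b hb
      refine ⟨b + 1, ?_, by simp⟩
      simp at *; omega
    · intros; rfl
  rw [hre, ← key, ← Complex.exp_nat_mul, ← Complex.exp_nat_mul, sub_neg_eq_add, mul_add,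
    ← Complex.exp_add, Complex.cos]
  rw [mul_div_cancel₀ _ (by norm_num : (2 : ℂ) ≠ 0), mul_one]
  congr 2 <;> ring

/-- For an integer `p ≥ 1` and `θ ∈ ℝ` with `cos(pθ) ≠ 0` and
`sin(θ − (2l−1)π/(2p)) ≠ 0` for all `1 ≤ l ≤ p`,
`∑_{l=1}^{p} cot(θ − (2l−1)π/(2p)) = −p·tan(pθ)`. -/
theorem stmt_4 (p : ℕ) (hp : 1 ≤ p) (θ : ℝ) (h1 : cos (p * θ) ≠ 0)
    (h2 : ∀ l ∈ Finset.Icc 1 p, sin (θ - (2 * (l : ℝ) - 1) * π / (2 * p)) ≠ 0) :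
    ∑ l ∈ Finset.Icc 1 p, Real.cot (θ - (2 * (l : ℝ) - 1) * π / (2 * p))
      = -(p : ℝ) * Real.tan (p * θ) := by
  obtain ⟨c, hc⟩ := prod_sin_aux p hp
  have h2' : ∀ l ∈ Finset.Icc 1 p,
      Complex.sin ((θ : ℂ) - (2 * (l : ℂ) - 1) * π / (2 * p)) ≠ 0 := by
    intro l hl
    exact_mod_cast h2 l hl
  have hc0 : c ≠ 0 := by
    rintro rfl
    have := hc θ
    rw [zero_mul] at this
    exact Finset.prod_ne_zero_iff.mpr h2' this
  have hL := logDeriv_prod (𝕜 := ℂ) (s := Finset.Icc 1 p)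
    (f := fun (l : ℕ) (x : ℂ) => Complex.sin (x - (2 * (l : ℂ) - 1) * π / (2 * p)))
    (x := (θ : ℂ)) h2' (fun i _ => by fun_prop)
  have hfun : (fun x : ℂ => ∏ l ∈ Finset.Icc 1 p,
      Complex.sin (x - (2 * (l : ℂ) - 1) * π / (2 * p))) =
      fun x => c * Complex.cos (p * x) := funext hc
  rw [hfun, logDeriv_const_mul _ _ hc0, logDeriv_apply] at hL
  have hd : HasDerivAt (fun x : ℂ => Complex.cos (p * x)) (-Complex.sin (p * θ) * (p * 1)) θ :=
    ((hasDerivAt_id (θ : ℂ)).const_mul (p : ℂ)).ccos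
  rw [hd.deriv] at hL
  have hs : ∀ l ∈ Finset.Icc 1 p,
      logDeriv (fun x : ℂ => Complex.sin (x - (2 * (l : ℂ) - 1) * π / (2 * p))) θ
      = ((Real.cot (θ - (2 * (l : ℝ) - 1) * π / (2 * p)) : ℝ) : ℂ) := by
    intro l _
    have hd : HasDerivAt (fun x : ℂ => Complex.sin (x - (2 * (l : ℂ) - 1) * π / (2 * p)))
        (Complex.cos (θ - (2 * (l : ℂ) - 1) * π / (2 * p)) * 1) θ :=
      ((hasDerivAt_id (θ : ℂ)).sub_const _).csin
    rw [logDeriv_apply, hd.deriv, Real.cot_eq_cos_div_sin]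
    push_cast
    rw [mul_one]
  rw [Finset.sum_congr rfl hs] at hL
  have : ((∑ l ∈ Finset.Icc 1 p, Real.cot (θ - (2 * (l : ℝ) - 1) * π / (2 * p)) : ℝ) : ℂ)
      = ((-(p : ℝ) * Real.tan (p * θ) : ℝ) : ℂ) := by
    rw [Complex.ofReal_sum, ← hL, Real.tan_eq_sin_div_cos]
    push_cast
    ring
  exact_mod_cast this
end

section
/- Let k₀, k₁ ≥ 0 and let (c_j)_{j≥0} be a sequence of real numbers with |c_j| ≤ C·R^j for some constants C, R > 0. Then for every t > 0 the series u(t,φ) = ∑_{j=0}^{∞} c_j e^{−2j(j+k₀+k₁)t} P_j^{(k₀−1/2,k₁−1/2)}(cos 2φ) converges absolutely, locally uniformly on (0,∞)×(0,π/2) together with its term-by-term derivatives, and u satisfies the heat-type equation ∂_t u(t,φ) = (1/2)∂²_φ u(t,φ) + (k₀ cot φ − k₁ tan φ) ∂_φ u(t,φ) for all t > 0 and φ ∈ (0, π/2). -/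
open Real Finset Filter

/-- The Jacobi polynomial
`P_j^{(α,β)}(x) = ∑_{s=0}^{j} [Γ(j+α+1)/(Γ(s+α+1)(j−s)!)]·[Γ(j+β+1)/(Γ(j−s+β+1)s!)]
  ((x−1)/2)^s ((x+1)/2)^{j−s}`. -/
noncomputable def jacobiPoly (α β : ℝ) (j : ℕ) (x : ℝ) : ℝ :=
  ∑ s ∈ Finset.range (j + 1),
    (Real.Gamma ((j : ℝ) + α + 1) / (Real.Gamma ((s : ℝ) + α + 1) * (Nat.factorial (j - s)))) *
    (Real.Gamma ((j : ℝ) + β + 1) / (Real.Gamma ((j : ℝ) - s + β + 1) * (Nat.factorial s))) *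
    ((x - 1) / 2) ^ s * ((x + 1) / 2) ^ (j - s)

/-- coefficient of the Jacobi polynomial -/
noncomputable def jcoef (α β : ℝ) (j s : ℕ) : ℝ :=
    (Real.Gamma ((j : ℝ) + α + 1) / (Real.Gamma ((s : ℝ) + α + 1) * (Nat.factorial (j - s)))) *
    (Real.Gamma ((j : ℝ) + β + 1) / (Real.Gamma ((j : ℝ) - s + β + 1) * (Nat.factorial s)))

noncomputable def jq0 (s m : ℕ) (x : ℝ) : ℝ := ((x - 1) / 2) ^ s * ((x + 1) / 2) ^ m

noncomputable def jq1 (s m : ℕ) (x : ℝ) : ℝ :=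
  (1 / 2) * (s * jq0 (s - 1) m x + m * jq0 s (m - 1) x)

noncomputable def jq2 (s m : ℕ) (x : ℝ) : ℝ :=
  (1 / 2) * (s * jq1 (s - 1) m x + m * jq1 s (m - 1) x)

lemma jq0_deriv (s m : ℕ) (x : ℝ) : HasDerivAt (jq0 s m) (jq1 s m x) x := by
  have h1 : HasDerivAt (fun x : ℝ => (x - 1) / 2) (1 / 2) x :=
    ((hasDerivAt_id x).sub_const 1).div_const 2
  have h2 : HasDerivAt (fun x : ℝ => (x + 1) / 2) (1 / 2) x :=
    ((hasDerivAt_id x).add_const 1).div_const 2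
  have := (h1.pow s).mul (h2.pow m)
  refine HasDerivAt.congr_deriv (f := jq0 s m) this ?_
  simp only [jq1, jq0, Pi.pow_apply]
  ring

lemma jq1_deriv (s m : ℕ) (x : ℝ) : HasDerivAt (jq1 s m) (jq2 s m x) x := by
  have := (((jq0_deriv (s - 1) m x).const_mul (s : ℝ)).add
    ((jq0_deriv s (m - 1) x).const_mul (m : ℝ))).const_mul (1 / 2)
  exact this

lemma jq0_bound (s m : ℕ) (x : ℝ) (hx : |x| ≤ 1) : |jq0 s m x| ≤ 1 := by
  obtain ⟨h1, h2⟩ := abs_le.mp hx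
  unfold jq0
  rw [abs_mul, abs_pow, abs_pow]
  have e1 : |(x - 1) / 2| ≤ 1 := abs_le.mpr ⟨by linarith, by linarith⟩
  have e2 : |(x + 1) / 2| ≤ 1 := abs_le.mpr ⟨by linarith, by linarith⟩
  exact mul_le_one₀ (pow_le_one₀ (abs_nonneg _) e1) (by positivity) (pow_le_one₀ (abs_nonneg _) e2)

lemma jq1_bound (s m : ℕ) (x : ℝ) (hx : |x| ≤ 1) : |jq1 s m x| ≤ s + m := by
  unfold jq1
  have h1 := abs_le.mp (jq0_bound (s - 1) m x hx)
  have h2 := abs_le.mp (jq0_bound s (m - 1) x hx)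
  have hs : (0 : ℝ) ≤ s := by positivity
  have hm : (0 : ℝ) ≤ m := by positivity
  rw [abs_le]
  constructor <;> nlinarith

lemma jq2_bound (s m : ℕ) (x : ℝ) (hx : |x| ≤ 1) : |jq2 s m x| ≤ ((s : ℝ) + m) ^ 2 := by
  unfold jq2
  have hs : (0 : ℝ) ≤ s := by positivity
  have hm : (0 : ℝ) ≤ m := by positivity
  have hs1 : ((s - 1 : ℕ) : ℝ) ≤ s := by exact_mod_cast Nat.sub_le _ _
  have hm1 : ((m - 1 : ℕ) : ℝ) ≤ m := by exact_mod_cast Nat.sub_le _ _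
  have h1 := abs_le.mp ((jq1_bound (s - 1) m x hx).trans (by linarith : _ ≤ (s : ℝ) + m))
  have h2 := abs_le.mp ((jq1_bound s (m - 1) x hx).trans (by linarith : _ ≤ (s : ℝ) + m))
  rw [abs_le]
  constructor <;> nlinarith

lemma jq_ode (α β : ℝ) (s m : ℕ) (x : ℝ) :
    (1 - x ^ 2) * jq2 s m x + (β - α - (α + β + 2) * x) * jq1 s m x
      + ((s : ℝ) + m) * (s + m + α + β + 1) * jq0 s m x
    = m * (m + β) * jq0 s (m - 1) x - s * (s + α) * jq0 (s - 1) m x := by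
  obtain ⟨y, rfl⟩ : ∃ y, x = 2 * y + 1 := ⟨(x - 1) / 2, by ring⟩
  have e1 : (2 * y + 1 - 1) / 2 = y := by ring
  have e2 : (2 * y + 1 + 1) / 2 = y + 1 := by ring
  rcases s with _ | _ | s <;> rcases m with _ | _ | m <;>
    simp only [jq2, jq1, jq0, e1, e2, Nat.add_sub_cancel, Nat.zero_sub, Nat.cast_add, Nat.cast_zero,
      Nat.cast_one, Nat.sub_self, pow_zero, zero_add, pow_one] <;> ring

lemma jcoef_rec (α β : ℝ) (hα : -1 < α) (hβ : -1 < β) (j s : ℕ) (h : s < j) :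
    jcoef α β j (s + 1) * ((s + 1 : ℕ) * ((s + 1 : ℕ) + α))
      = jcoef α β j s * ((j - s : ℕ) * ((j - s : ℕ) + β)) := by
  obtain ⟨m, rfl⟩ : ∃ m, j = s + 1 + m := ⟨j - (s + 1), by omega⟩
  have e1 : s + 1 + m - s = m + 1 := by omega
  have e2 : s + 1 + m - (s + 1) = m := by omega
  unfold jcoef
  rw [e1, e2]
  have a1 : (0 : ℝ) < s + α + 1 := by have : (0 : ℝ) ≤ s := by positivity
                                      linarith
  have a2 : (0 : ℝ) < m + β + 1 := by have : (0 : ℝ) ≤ m := by positivity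
                                      linarith
  have g1 : Real.Gamma (((s + 1 : ℕ) : ℝ) + α + 1) = (s + α + 1) * Real.Gamma (s + α + 1) := by
    rw [← Real.Gamma_add_one a1.ne']; push_cast; ring_nf
  have g2 : Real.Gamma (((s + 1 + m : ℕ) : ℝ) - s + β + 1) = (m + β + 1) * Real.Gamma (m + β + 1) := by
    rw [← Real.Gamma_add_one a2.ne']; push_cast; ring_nf
  have g3 : (((s + 1 + m : ℕ) : ℝ) - (s + 1 : ℕ) + β + 1) = m + β + 1 := by push_cast; ring
  rw [g1, g2, g3, Nat.factorial_succ, Nat.factorial_succ]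
  have p1 := (Real.Gamma_pos_of_pos a1).ne'
  have p2 := (Real.Gamma_pos_of_pos a2).ne'
  have f1 : (Nat.factorial m : ℝ) ≠ 0 := by positivity
  have f2 : (Nat.factorial s : ℝ) ≠ 0 := by positivity
  have n1 := a1.ne'
  have n2 := a2.ne'
  have n3 : (s : ℝ) + 1 ≠ 0 := by positivity
  have n4 : (m : ℝ) + 1 ≠ 0 := by positivity
  push_cast
  generalize Real.Gamma (s + α + 1) = G1 at *
  generalize Real.Gamma (m + β + 1) = G2 at *
  field_simp
  ring

lemma gamma_ratio_bound (α K : ℝ) (hα : -1 < α) (hK : 1 ≤ K) (hαK : α ≤ K - 1) (s d : ℕ) :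
    0 ≤ Real.Gamma ((s : ℝ) + d + α + 1) / (Real.Gamma ((s : ℝ) + α + 1) * Nat.factorial d) ∧
    Real.Gamma ((s : ℝ) + d + α + 1) / (Real.Gamma ((s : ℝ) + α + 1) * Nat.factorial d)
      ≤ K ^ d * Nat.choose (s + d) d := by
  have hs : (0 : ℝ) ≤ s := by positivity
  have p1 := Real.Gamma_pos_of_pos (by linarith : (0 : ℝ) < s + α + 1)
  constructor
  · have hd : (0 : ℝ) ≤ d := by positivity
    have p2 := Real.Gamma_pos_of_pos (by linarith : (0 : ℝ) < s + d + α + 1)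
    positivity
  induction d with
  | zero => simp [p1.ne']
  | succ d ih =>
    have hd : (0 : ℝ) ≤ d := by positivity
    have a1 : (0 : ℝ) < s + d + α + 1 := by linarith
    have p2 := Real.Gamma_pos_of_pos a1
    have g : Real.Gamma ((s : ℝ) + (d + 1 : ℕ) + α + 1)
        = (s + d + α + 1) * Real.Gamma (s + d + α + 1) := by
      rw [← Real.Gamma_add_one a1.ne']; push_cast; ring_nf
    have hch : (Nat.choose (s + (d + 1)) (d + 1) : ℝ) = (s + d + 1) * Nat.choose (s + d) d / (d + 1) := by
      rw [eq_div_iff (by positivity)]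
      have := Nat.add_one_mul_choose_eq (s + d) d
      exact_mod_cast this.symm
    rw [g, hch, Nat.factorial_succ]
    have e : (s + d + α + 1) * Real.Gamma (s + d + α + 1) /
        (Real.Gamma ((s : ℝ) + α + 1) * ((d + 1) * Nat.factorial d : ℕ))
        = ((s + d + α + 1) / (d + 1)) * (Real.Gamma ((s : ℝ) + d + α + 1) / (Real.Gamma ((s : ℝ) + α + 1) * Nat.factorial d)) := by
      push_cast
      field_simp
    rw [e]
    have e2 : K ^ (d + 1) * ((s + d + 1) * Nat.choose (s + d) d / (d + 1) : ℝ)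
       = (K * (s + d + 1) / (d + 1)) * (K ^ d * Nat.choose (s + d) d) := by
      ring
    rw [e2]
    apply mul_le_mul _ ih (by positivity) (by positivity)
    gcongr
    nlinarith

lemma jcoef_bound (α β K : ℝ) (hα : -1 < α) (hβ : -1 < β) (hK : 1 ≤ K) (hαK : α ≤ K - 1)
    (hβK : β ≤ K - 1) (j s : ℕ) (h : s ≤ j) : |jcoef α β j s| ≤ (4 * K ^ 2) ^ j := by
  obtain ⟨m, rfl⟩ : ∃ m, j = s + m := ⟨j - s, by omega⟩
  have e1 : s + m - s = m := by omega
  have h1 := gamma_ratio_bound α K hα hK hαK s m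
  have h2 := gamma_ratio_bound β K hβ hK hβK m s
  unfold jcoef
  rw [e1]
  have e3 : ((s + m : ℕ) : ℝ) - s = m := by push_cast; ring
  rw [e3]
  have e4 : ((s + m : ℕ) : ℝ) = s + m := by push_cast; ring
  rw [e4]
  rw [add_comm (m : ℝ) s] at h2
  rw [abs_of_nonneg (mul_nonneg h1.1 h2.1)]
  have c1 : (Nat.choose (s + m) m : ℝ) ≤ 2 ^ (s + m) := by exact_mod_cast Nat.choose_le_two_pow _ _
  have c2 : (Nat.choose (m + s) s : ℝ) ≤ 2 ^ (s + m) := by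
    rw [add_comm s m]; exact_mod_cast Nat.choose_le_two_pow _ _
  have k1 : K ^ m ≤ K ^ (s + m) := pow_le_pow_right₀ hK (by omega)
  have k2 : K ^ s ≤ K ^ (s + m) := pow_le_pow_right₀ hK (by omega)
  have b1 := h1.2.trans (mul_le_mul k1 c1 (by positivity) (by positivity))
  have b2 := h2.2.trans (mul_le_mul k2 c2 (by positivity) (by positivity))
  refine (mul_le_mul b1 b2 h2.1 (by positivity)).trans (le_of_eq ?_)
  rw [← mul_pow, ← mul_pow]
  congr 1
  ring

noncomputable def jP1 (α β : ℝ) (j : ℕ) (x : ℝ) : ℝ :=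
  ∑ s ∈ Finset.range (j + 1), jcoef α β j s * jq1 s (j - s) x

noncomputable def jP2 (α β : ℝ) (j : ℕ) (x : ℝ) : ℝ :=
  ∑ s ∈ Finset.range (j + 1), jcoef α β j s * jq2 s (j - s) x

lemma jacobiPoly_eq (α β : ℝ) (j : ℕ) (x : ℝ) : jacobiPoly α β j x =
    ∑ s ∈ Finset.range (j + 1), jcoef α β j s * jq0 s (j - s) x := by
  unfold jacobiPoly jcoef jq0
  refine Finset.sum_congr rfl fun s _ => ?_
  ring

lemma jP0_deriv (α β : ℝ) (j : ℕ) (x : ℝ) :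
    HasDerivAt (jacobiPoly α β j) (jP1 α β j x) x := by
  have : jacobiPoly α β j = fun x => ∑ s ∈ Finset.range (j + 1), jcoef α β j s * jq0 s (j - s) x :=
    funext (jacobiPoly_eq α β j)
  rw [this]
  exact HasDerivAt.fun_sum fun s _ => (jq0_deriv s (j - s) x).const_mul _

lemma jP1_deriv (α β : ℝ) (j : ℕ) (x : ℝ) :
    HasDerivAt (jP1 α β j) (jP2 α β j x) x :=
  HasDerivAt.fun_sum fun s _ => (jq1_deriv s (j - s) x).const_mul _

lemma jacobi_ode (α β : ℝ) (hα : -1 < α) (hβ : -1 < β) (j : ℕ) (x : ℝ) :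
    (1 - x ^ 2) * jP2 α β j x + (β - α - (α + β + 2) * x) * jP1 α β j x
      + (j : ℝ) * (j + α + β + 1) * jacobiPoly α β j x = 0 := by
  set G : ℕ → ℝ := fun s => jcoef α β j s * (s * (s + α)) * jq0 (s - 1) (j - s) x with hG
  rw [jacobiPoly_eq, jP1, jP2, Finset.mul_sum, Finset.mul_sum, Finset.mul_sum,
    ← Finset.sum_add_distrib, ← Finset.sum_add_distrib]
  have key : ∀ s ∈ Finset.range (j + 1),
      (1 - x ^ 2) * (jcoef α β j s * jq2 s (j - s) x)
        + (β - α - (α + β + 2) * x) * (jcoef α β j s * jq1 s (j - s) x)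
        + (j : ℝ) * (j + α + β + 1) * (jcoef α β j s * jq0 s (j - s) x)
      = jcoef α β j s * ((j - s : ℕ) * ((j - s : ℕ) + β)) * jq0 s (j - s - 1) x - G s := by
    intro s hs
    have hsj : s ≤ j := by simpa [Nat.lt_succ_iff] using hs
    have h := jq_ode α β s (j - s) x
    have e : (s : ℝ) + (j - s : ℕ) = j := by rw [Nat.cast_sub hsj]; ring
    rw [e] at h
    simp only [hG]
    linear_combination jcoef α β j s * h
  rw [Finset.sum_congr rfl key, Finset.sum_sub_distrib, Finset.sum_range_succ,
    Finset.sum_range_succ' G]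
  have : ∑ s ∈ Finset.range j, jcoef α β j s * ((j - s : ℕ) * ((j - s : ℕ) + β)) * jq0 s (j - s - 1) x
      = ∑ s ∈ Finset.range j, G (s + 1) := by
    refine Finset.sum_congr rfl fun s hs => ?_
    rw [← jcoef_rec α β hα hβ j s (Finset.mem_range.mp hs)]
    simp only [hG, Nat.add_sub_cancel, Nat.sub_sub]
  rw [this]
  simp [hG]

lemma jsum_bound (α β K : ℝ) (hα : -1 < α) (hβ : -1 < β) (hK : 1 ≤ K) (hαK : α ≤ K - 1)
    (hβK : β ≤ K - 1) (j : ℕ) (q : ℕ → ℝ)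
    (hq : ∀ s, s ≤ j → |q s| ≤ ((j : ℝ) + 1) ^ 2) :
    |∑ s ∈ Finset.range (j + 1), jcoef α β j s * q s| ≤ (32 * K ^ 2) ^ j := by
  have h2 : (j : ℝ) + 1 ≤ 2 ^ j := by exact_mod_cast Nat.lt_two_pow_self
  calc _ ≤ ∑ s ∈ Finset.range (j + 1), |jcoef α β j s * q s| := Finset.abs_sum_le_sum_abs _ _
    _ ≤ ∑ s ∈ Finset.range (j + 1), (4 * K ^ 2) ^ j * ((j : ℝ) + 1) ^ 2 := by
      refine Finset.sum_le_sum fun s hs => ?_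
      have hsj : s ≤ j := by simpa [Nat.lt_succ_iff] using hs
      rw [abs_mul]
      exact mul_le_mul (jcoef_bound α β K hα hβ hK hαK hβK j s hsj) (hq s hsj) (abs_nonneg _)
        (by positivity)
    _ = (4 * K ^ 2) ^ j * ((j : ℝ) + 1) ^ 3 := by simp; ring
    _ ≤ (4 * K ^ 2) ^ j * (2 ^ j) ^ 3 := by gcongr
    _ = (32 * K ^ 2) ^ j := by
      rw [← pow_mul, mul_comm j 3, pow_mul, ← mul_pow]; ring_nf

/-- the exponential series -/
lemma expo_summable (B δ : ℝ) (hB : 0 ≤ B) (hδ : 0 < δ) :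
    Summable fun j : ℕ => B ^ j * Real.exp (-(δ * (j : ℝ) ^ 2)) := by
  have ht : Tendsto (fun j : ℕ => B * Real.exp (-(δ * j))) atTop (nhds (B * 0)) := by
    refine Tendsto.const_mul _ ?_
    refine Real.tendsto_exp_neg_atTop_nhds_zero.comp ?_
    exact Tendsto.const_mul_atTop hδ tendsto_natCast_atTop_atTop
  rw [mul_zero] at ht
  have hev := ht.eventually (gt_mem_nhds (by norm_num : (0 : ℝ) < 1 / 2))
  refine Summable.of_norm_bounded_eventually_nat (g := fun j => (1 / 2 : ℝ) ^ j)
    (summable_geometric_of_lt_one (by norm_num) (by norm_num)) ?_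
  filter_upwards [hev] with j hj
  have : B ^ j * Real.exp (-(δ * (j : ℝ) ^ 2)) = (B * Real.exp (-(δ * j))) ^ j := by
    rw [mul_pow, ← Real.exp_nat_mul]; ring_nf
  rw [this, Real.norm_of_nonneg (by positivity)]
  exact pow_le_pow_left₀ (by positivity) hj.le j

noncomputable def jF1 (α β : ℝ) (j : ℕ) (φ : ℝ) : ℝ :=
  jP1 α β j (Real.cos (2 * φ)) * (-2 * Real.sin (2 * φ))

noncomputable def jF2 (α β : ℝ) (j : ℕ) (φ : ℝ) : ℝ :=
  jP2 α β j (Real.cos (2 * φ)) * (-2 * Real.sin (2 * φ)) * (-2 * Real.sin (2 * φ))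
   + jP1 α β j (Real.cos (2 * φ)) * (-4 * Real.cos (2 * φ))

lemma cos2_deriv (φ : ℝ) : HasDerivAt (fun φ => Real.cos (2 * φ)) (-2 * Real.sin (2 * φ)) φ := by
  have := ((hasDerivAt_id' φ).const_mul 2).cos
  exact this.congr_deriv (by ring)

lemma sin2_deriv (φ : ℝ) :
    HasDerivAt (fun φ => -2 * Real.sin (2 * φ)) (-4 * Real.cos (2 * φ)) φ := by
  have := (((hasDerivAt_id' φ).const_mul 2).sin).const_mul (-2)
  exact this.congr_deriv (by ring)

lemma jF0_deriv (α β : ℝ) (j : ℕ) (φ : ℝ) :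
    HasDerivAt (fun φ => jacobiPoly α β j (Real.cos (2 * φ))) (jF1 α β j φ) φ :=
  (jP0_deriv α β j _).comp φ (cos2_deriv φ)

lemma jF1_deriv (α β : ℝ) (j : ℕ) (φ : ℝ) : HasDerivAt (jF1 α β j) (jF2 α β j φ) φ :=
  ((jP1_deriv α β j _).comp φ (cos2_deriv φ)).mul (sin2_deriv φ)

lemma jF_ode (k₀ k₁ : ℝ) (hk₀ : 0 ≤ k₀) (hk₁ : 0 ≤ k₁) (j : ℕ) (φ : ℝ) (h0 : 0 < φ)
    (h1 : φ < π / 2) :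
    -2 * j * (j + k₀ + k₁) * jacobiPoly (k₀ - 1 / 2) (k₁ - 1 / 2) j (Real.cos (2 * φ))
    = (1 / 2) * jF2 (k₀ - 1 / 2) (k₁ - 1 / 2) j φ
      + (k₀ * Real.cot φ - k₁ * Real.tan φ) * jF1 (k₀ - 1 / 2) (k₁ - 1 / 2) j φ := by
  have h := jacobi_ode (k₀ - 1 / 2) (k₁ - 1 / 2) (by linarith) (by linarith) j (Real.cos (2 * φ))
  have hs : Real.sin φ ≠ 0 := (Real.sin_pos_of_pos_of_lt_pi h0 (by linarith [Real.pi_pos])).ne'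
  have hc : Real.cos φ ≠ 0 := (Real.cos_pos_of_mem_Ioo ⟨by linarith, h1⟩).ne'
  have e1 : Real.cot φ * Real.sin (2 * φ) = 1 + Real.cos (2 * φ) := by
    rw [Real.cot_eq_cos_div_sin, Real.sin_two_mul, Real.cos_two_mul]; field_simp; ring
  have e2 : Real.tan φ * Real.sin (2 * φ) = 1 - Real.cos (2 * φ) := by
    rw [Real.tan_eq_sin_div_cos, Real.sin_two_mul, Real.cos_two_mul']; field_simp
    linear_combination Real.sin_sq_add_cos_sq φ
  have e3 := Real.sin_sq_add_cos_sq (2 * φ)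
  unfold jF2 jF1
  generalize jP2 (k₀ - 1 / 2) (k₁ - 1 / 2) j (Real.cos (2 * φ)) = p2 at *
  generalize jP1 (k₀ - 1 / 2) (k₁ - 1 / 2) j (Real.cos (2 * φ)) = p1 at *
  generalize jacobiPoly (k₀ - 1 / 2) (k₁ - 1 / 2) j (Real.cos (2 * φ)) = p0 at *
  linear_combination (-2) * h - 2 * p2 * e3 + 2 * k₀ * p1 * e1 - 2 * k₁ * p1 * e2

lemma jF_bounds (k₀ k₁ : ℝ) (hk₀ : 0 ≤ k₀) (hk₁ : 0 ≤ k₁) : ∃ E : ℝ, 0 < E ∧ ∀ j φ,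
    |jacobiPoly (k₀ - 1 / 2) (k₁ - 1 / 2) j (Real.cos (2 * φ))| ≤ 8 * E ^ j ∧
    |jF1 (k₀ - 1 / 2) (k₁ - 1 / 2) j φ| ≤ 8 * E ^ j ∧
    |jF2 (k₀ - 1 / 2) (k₁ - 1 / 2) j φ| ≤ 8 * E ^ j := by
  refine ⟨32 * (1 + k₀ + k₁) ^ 2, by positivity, fun j φ => ?_⟩
  have hx := Real.abs_cos_le_one (2 * φ)
  have hB := jsum_bound (k₀ - 1 / 2) (k₁ - 1 / 2) (1 + k₀ + k₁) (by linarith) (by linarith)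
    (by linarith) (by linarith) (by linarith) j
  have hj : (0 : ℝ) ≤ j := by positivity
  have hsm : ∀ s, s ≤ j → (s : ℝ) + (j - s : ℕ) = j := fun s hs => by
    rw [Nat.cast_sub hs]; ring
  have b0 := hB (fun s => jq0 s (j - s) (Real.cos (2 * φ)))
    (fun s hs => (jq0_bound _ _ _ hx).trans (by nlinarith))
  have b1 := hB (fun s => jq1 s (j - s) (Real.cos (2 * φ)))
    (fun s hs => (jq1_bound _ _ _ hx).trans (by rw [hsm s hs]; nlinarith))
  have b2 := hB (fun s => jq2 s (j - s) (Real.cos (2 * φ)))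
    (fun s hs => (jq2_bound _ _ _ hx).trans (by rw [hsm s hs]; nlinarith))
  rw [← jacobiPoly_eq] at b0
  change |jP1 _ _ j _| ≤ _ at b1
  change |jP2 _ _ j _| ≤ _ at b2
  unfold jF1 jF2
  have hs := Real.abs_sin_le_one (2 * φ)
  generalize (32 * (1 + k₀ + k₁) ^ 2) ^ j = M at *
  generalize jP2 (k₀ - 1 / 2) (k₁ - 1 / 2) j (Real.cos (2 * φ)) = p2 at *
  generalize jP1 (k₀ - 1 / 2) (k₁ - 1 / 2) j (Real.cos (2 * φ)) = p1 at *
  generalize jacobiPoly (k₀ - 1 / 2) (k₁ - 1 / 2) j (Real.cos (2 * φ)) = p0 at *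
  have hM : 0 ≤ M := (abs_nonneg _).trans b0
  have t1 : |p1 * Real.sin (2 * φ)| ≤ M := by
    rw [abs_mul]; exact (mul_le_mul b1 hs (abs_nonneg _) hM).trans (by simp)
  have t2 : |p1 * Real.cos (2 * φ)| ≤ M := by
    rw [abs_mul]; exact (mul_le_mul b1 hx (abs_nonneg _) hM).trans (by simp)
  have t3 : |p2 * Real.sin (2 * φ)| ≤ M := by
    rw [abs_mul]; exact (mul_le_mul b2 hs (abs_nonneg _) hM).trans (by simp)
  have t4 : |p2 * Real.sin (2 * φ) * Real.sin (2 * φ)| ≤ M := by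
    rw [abs_mul]; exact (mul_le_mul t3 hs (abs_nonneg _) hM).trans (by simp)
  rw [abs_le] at t1 t2 t4 b0
  refine ⟨abs_le.mpr ⟨by linarith, by linarith⟩, abs_le.mpr ⟨by linarith, by linarith⟩,
    abs_le.mpr ⟨by linarith, by linarith⟩⟩


lemma term_bound (k₀ k₁ : ℝ) (hk₀ : 0 ≤ k₀) (hk₁ : 0 ≤ k₁)
    (c : ℕ → ℝ) (C R E : ℝ) (hC : 0 < C) (hR : 0 < R) (hE : 0 < E)
    (hc : ∀ j, |c j| ≤ C * R ^ j) (δ : ℝ) (hδ : 0 < δ) :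
    ∃ w : ℕ → ℝ, Summable w ∧ ∀ (j : ℕ) (t v : ℝ), δ < t → |v| ≤ 8 * E ^ j →
      |c j * Real.exp (-2 * j * (j + k₀ + k₁) * t) * v| ≤ w j ∧
      |c j * (Real.exp (-2 * j * (j + k₀ + k₁) * t) * (-2 * j * (j + k₀ + k₁))) * v| ≤ w j := by
  refine ⟨fun j => (8 * C * (1 + 2 / δ)) * ((R * E) ^ j * Real.exp (-(δ * (j : ℝ) ^ 2))),
    (expo_summable (R * E) δ (by positivity) hδ).mul_left _, fun j t v ht hv => ?_⟩
  beta_reduce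
  have hj : (0 : ℝ) ≤ j := by positivity
  obtain ⟨L, hL⟩ : ∃ L : ℝ, L = 2 * j * (j + k₀ + k₁) := ⟨_, rfl⟩
  have hL0 : 0 ≤ L := by rw [hL]; positivity
  have hLj : 2 * (j : ℝ) ^ 2 ≤ L := by
    rw [hL]; nlinarith [mul_nonneg hj hk₀, mul_nonneg hj hk₁]
  have e1 : -2 * (j : ℝ) * (j + k₀ + k₁) = -L := by rw [hL]; ring
  rw [e1]
  have hA : Real.exp (-L * t) ≤ Real.exp (-(L * δ / 2)) * Real.exp (-(δ * (j : ℝ) ^ 2)) := by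
    rw [← Real.exp_add]
    apply Real.exp_le_exp.mpr
    nlinarith [mul_nonneg hL0 (sub_nonneg.mpr ht.le), mul_le_mul_of_nonneg_right hLj hδ.le]
  have hone : Real.exp (-(L * δ / 2)) ≤ 1 := Real.exp_le_one_iff.mpr (by
    have := mul_nonneg hL0 hδ.le
    linarith)
  have hLe : L * Real.exp (-(L * δ / 2)) ≤ 2 / δ := by
    rw [Real.exp_neg, ← div_eq_mul_inv, div_le_div_iff₀ (Real.exp_pos _) hδ]
    have := Real.add_one_le_exp (L * δ / 2)
    linarith
  have hX := Real.exp_pos (-(δ * (j : ℝ) ^ 2))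
  have hY := Real.exp_pos (-L * t)
  have h2d : 0 < 2 / δ := by positivity
  generalize Real.exp (-(δ * (j : ℝ) ^ 2)) = X at *
  generalize Real.exp (-(L * δ / 2)) = Z at *
  generalize Real.exp (-L * t) = Y at *
  have q1 : Y ≤ (1 + 2 / δ) * X := by nlinarith
  have q2 : Y * L ≤ (1 + 2 / δ) * X := by nlinarith
  have key : ∀ W, 0 ≤ W → W ≤ (1 + 2 / δ) * X →
      |c j| * W * |v| ≤ (8 * C * (1 + 2 / δ)) * ((R * E) ^ j * X) := by
    intro W hW hWX
    calc |c j| * W * |v| ≤ (C * R ^ j) * ((1 + 2 / δ) * X) * (8 * E ^ j) := by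
          gcongr
          exact hc j
      _ = _ := by rw [mul_pow]; ring
  constructor
  · rw [abs_mul, abs_mul, abs_of_pos hY]
    exact key Y hY.le q1
  · rw [abs_mul, abs_mul, abs_mul, abs_neg, abs_of_pos hY, abs_of_nonneg hL0]
    exact key (Y * L) (by positivity) q2

lemma loc_unif (f : ℕ → ℝ × ℝ → ℝ) (S : Set (ℝ × ℝ)) (hS : ∀ x ∈ S, 0 < x.1)
    (hf : ∀ δ > 0, ∃ w : ℕ → ℝ, Summable w ∧ ∀ j (x : ℝ × ℝ), δ < x.1 → |f j x| ≤ w j) :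
    TendstoLocallyUniformlyOn (fun N x => ∑ j ∈ Finset.range N, f j x)
      (fun x => ∑' j, f j x) atTop S := by
  intro U hU x hx
  have h0 := hS x hx
  obtain ⟨w, hw, hb⟩ := hf (x.1 / 2) (by linarith)
  refine ⟨{y : ℝ × ℝ | x.1 / 2 < y.1}, mem_nhdsWithin_of_mem_nhds ?_, ?_⟩
  · refine (isOpen_lt continuous_const continuous_fst).mem_nhds ?_
    show x.1 / 2 < x.1
    linarith
  · exact tendstoUniformlyOn_tsum_nat hw (fun n y hy => by
      rw [Real.norm_eq_abs]; exact hb n y hy) U hU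

/-- Let `k₀, k₁ ≥ 0` and `|c_j| ≤ C·R^j`. Then the spectral series
`u(t,φ) = ∑_j c_j e^{−2j(j+k₀+k₁)t} P_j^{(k₀−1/2,k₁−1/2)}(cos 2φ)` converges absolutely on
`(0,∞)×(0,π/2)`, locally uniformly together with its term-by-term `t`-, `φ`- and
second `φ`-derivatives, and `u` solves the heat-type equation
`∂_t u = (1/2)∂²_φ u + (k₀ cot φ − k₁ tan φ)∂_φ u`. -/
theorem stmt_8 (k₀ k₁ : ℝ) (hk₀ : 0 ≤ k₀) (hk₁ : 0 ≤ k₁)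
    (c : ℕ → ℝ) (C R : ℝ) (hC : 0 < C) (hR : 0 < R) (hc : ∀ j, |c j| ≤ C * R ^ j)
    (T : ℕ → ℝ × ℝ → ℝ)
    (hT : ∀ (j : ℕ) (x : ℝ × ℝ), T j x
      = c j * Real.exp (-2 * j * (j + k₀ + k₁) * x.1)
          * jacobiPoly (k₀ - 1 / 2) (k₁ - 1 / 2) j (Real.cos (2 * x.2)))
    (u : ℝ × ℝ → ℝ) (hu : ∀ x, u x = ∑' j, T j x)
    (S : Set (ℝ × ℝ)) (hS : S = Set.Ioi (0 : ℝ) ×ˢ Set.Ioo (0 : ℝ) (π / 2)) :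
    (∀ x ∈ S, Summable fun j => |T j x|)
    ∧ TendstoLocallyUniformlyOn
        (fun N x => ∑ j ∈ Finset.range N, T j x) u atTop S
    ∧ TendstoLocallyUniformlyOn
        (fun N x => ∑ j ∈ Finset.range N, deriv (fun t => T j (t, x.2)) x.1)
        (fun x => deriv (fun t => u (t, x.2)) x.1) atTop S
    ∧ TendstoLocallyUniformlyOn
        (fun N x => ∑ j ∈ Finset.range N, deriv (fun φ => T j (x.1, φ)) x.2)
        (fun x => deriv (fun φ => u (x.1, φ)) x.2) atTop S
    ∧ TendstoLocallyUniformlyOn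
        (fun N x => ∑ j ∈ Finset.range N, deriv (deriv (fun φ => T j (x.1, φ))) x.2)
        (fun x => deriv (deriv (fun φ => u (x.1, φ))) x.2) atTop S
    ∧ ∀ t φ : ℝ, 0 < t → 0 < φ → φ < π / 2 →
        deriv (fun s => u (s, φ)) t
          = (1 / 2) * deriv (deriv (fun ψ => u (t, ψ))) φ
            + (k₀ * Real.cot φ - k₁ * Real.tan φ) * deriv (fun ψ => u (t, ψ)) φ := by
  
  obtain ⟨E, hE, hF⟩ := jF_bounds k₀ k₁ hk₀ hk₁
  have hTB := term_bound k₀ k₁ hk₀ hk₁ c C R E hC hR hE hc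
  set P : ℕ → ℝ → ℝ := fun j φ => jacobiPoly (k₀ - 1 / 2) (k₁ - 1 / 2) j (Real.cos (2 * φ)) with hP
  set F1 : ℕ → ℝ → ℝ := jF1 (k₀ - 1 / 2) (k₁ - 1 / 2) with hF1
  set F2 : ℕ → ℝ → ℝ := jF2 (k₀ - 1 / 2) (k₁ - 1 / 2) with hF2
  set ft : ℕ → ℝ × ℝ → ℝ := fun j x =>
    c j * (Real.exp (-2 * j * (j + k₀ + k₁) * x.1) * (-2 * j * (j + k₀ + k₁))) * P j x.2 with hft
  set f1 : ℕ → ℝ × ℝ → ℝ := fun j x =>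
    c j * Real.exp (-2 * j * (j + k₀ + k₁) * x.1) * F1 j x.2 with hf1
  set f2 : ℕ → ℝ × ℝ → ℝ := fun j x =>
    c j * Real.exp (-2 * j * (j + k₀ + k₁) * x.1) * F2 j x.2 with hf2
  have hTeq : ∀ j x, T j x = c j * Real.exp (-2 * j * (j + k₀ + k₁) * x.1) * P j x.2 := hT
  have B0 : ∀ δ > 0, ∃ w : ℕ → ℝ, Summable w ∧ ∀ j (x : ℝ × ℝ), δ < x.1 → |T j x| ≤ w j := by
    intro δ hδ
    obtain ⟨w, hw, hb⟩ := hTB δ hδ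
    refine ⟨w, hw, fun j x hx => ?_⟩
    rw [hTeq]
    exact (hb j x.1 _ hx (hF j x.2).1).1
  have Bt : ∀ δ > 0, ∃ w : ℕ → ℝ, Summable w ∧ ∀ j (x : ℝ × ℝ), δ < x.1 → |ft j x| ≤ w j := by
    intro δ hδ
    obtain ⟨w, hw, hb⟩ := hTB δ hδ
    exact ⟨w, hw, fun j x hx => (hb j x.1 _ hx (hF j x.2).1).2⟩
  have B1 : ∀ δ > 0, ∃ w : ℕ → ℝ, Summable w ∧ ∀ j (x : ℝ × ℝ), δ < x.1 → |f1 j x| ≤ w j := by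
    intro δ hδ
    obtain ⟨w, hw, hb⟩ := hTB δ hδ
    exact ⟨w, hw, fun j x hx => (hb j x.1 _ hx (hF j x.2).2.1).1⟩
  have B2 : ∀ δ > 0, ∃ w : ℕ → ℝ, Summable w ∧ ∀ j (x : ℝ × ℝ), δ < x.1 → |f2 j x| ≤ w j := by
    intro δ hδ
    obtain ⟨w, hw, hb⟩ := hTB δ hδ
    exact ⟨w, hw, fun j x hx => (hb j x.1 _ hx (hF j x.2).2.2).1⟩
  -- summability
  have sumAbs : ∀ f : ℕ → ℝ × ℝ → ℝ,
      (∀ δ > 0, ∃ w : ℕ → ℝ, Summable w ∧ ∀ j (x : ℝ × ℝ), δ < x.1 → |f j x| ≤ w j) →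
      ∀ x : ℝ × ℝ, 0 < x.1 → Summable fun j => |f j x| := by
    intro f hf x hx
    obtain ⟨w, hw, hb⟩ := hf (x.1 / 2) (by linarith)
    exact Summable.of_nonneg_of_le (fun j => abs_nonneg _) (fun j => hb j x (by linarith)) hw
  -- termwise derivatives
  have dt : ∀ j t φ, HasDerivAt (fun t => T j (t, φ)) (ft j (t, φ)) t := by
    intro j t φ
    have h1 : HasDerivAt (fun t : ℝ => -2 * (j : ℝ) * (j + k₀ + k₁) * t)
        (-2 * (j : ℝ) * (j + k₀ + k₁)) t := by
      simpa using (hasDerivAt_id' t).const_mul (-2 * (j : ℝ) * (j + k₀ + k₁))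
    have h2 := ((h1.exp).const_mul (c j)).mul_const (P j φ)
    have : (fun t => T j (t, φ))
        = fun t => c j * Real.exp (-2 * j * (j + k₀ + k₁) * t) * P j φ :=
      funext fun t => hTeq j (t, φ)
    rw [this]
    exact h2
  have d1 : ∀ j t φ, HasDerivAt (fun φ => T j (t, φ)) (f1 j (t, φ)) φ := by
    intro j t φ
    have : (fun φ => T j (t, φ))
        = fun φ => c j * Real.exp (-2 * j * (j + k₀ + k₁) * t) * P j φ :=
      funext fun φ => hTeq j (t, φ)
    rw [this]
    exact (jF0_deriv (k₀ - 1 / 2) (k₁ - 1 / 2) j φ).const_mul _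
  have d2 : ∀ j t φ, HasDerivAt (fun φ => f1 j (t, φ)) (f2 j (t, φ)) φ := by
    intro j t φ
    exact (jF1_deriv (k₀ - 1 / 2) (k₁ - 1 / 2) j φ).const_mul
      (c j * Real.exp (-2 * j * (j + k₀ + k₁) * t))
  -- derivatives of the sum
  have Dt : ∀ t φ, 0 < t → HasDerivAt (fun t => u (t, φ)) (∑' j, ft j (t, φ)) t := by
    intro t φ ht
    have : (fun t => u (t, φ)) = fun t => ∑' j, T j (t, φ) := funext fun t => hu _
    rw [this]
    obtain ⟨w, hw, hb⟩ := Bt (t / 2) (by linarith)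
    have hmem : t ∈ Set.Ioi (t / 2) := by show t / 2 < t; linarith
    exact hasDerivAt_tsum_of_isPreconnected hw isOpen_Ioi isPreconnected_Ioi
      (fun j y _ => dt j y φ) (fun j y hy => hb j (y, φ) hy) hmem
      (sumAbs T B0 (t, φ) ht).of_abs hmem
  have D1 : ∀ t φ, 0 < t → HasDerivAt (fun φ => u (t, φ)) (∑' j, f1 j (t, φ)) φ := by
    intro t φ ht
    have : (fun φ => u (t, φ)) = fun φ => ∑' j, T j (t, φ) := funext fun φ => hu _
    rw [this]
    obtain ⟨w, hw, hb⟩ := B1 (t / 2) (by linarith)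
    exact hasDerivAt_tsum_of_isPreconnected hw isOpen_univ isPreconnected_univ
      (fun j y _ => d1 j t y) (fun j y _ => hb j (t, y) (by show t / 2 < t; linarith))
      (Set.mem_univ φ) (sumAbs T B0 (t, φ) ht).of_abs (Set.mem_univ φ)
  have D1' : ∀ t, 0 < t → deriv (fun φ => u (t, φ)) = fun φ => ∑' j, f1 j (t, φ) :=
    fun t ht => funext fun φ => (D1 t φ ht).deriv
  have D2 : ∀ t φ, 0 < t → HasDerivAt (deriv (fun φ => u (t, φ))) (∑' j, f2 j (t, φ)) φ := by
    intro t φ ht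
    rw [D1' t ht]
    obtain ⟨w, hw, hb⟩ := B2 (t / 2) (by linarith)
    exact hasDerivAt_tsum_of_isPreconnected hw isOpen_univ isPreconnected_univ
      (fun j y _ => d2 j t y) (fun j y _ => hb j (t, y) (by show t / 2 < t; linarith))
      (Set.mem_univ φ) (sumAbs f1 B1 (t, φ) ht).of_abs (Set.mem_univ φ)
  have hSpos : ∀ x ∈ S, 0 < x.1 := by
    intro x hx
    rw [hS] at hx
    exact hx.1
  have dd : ∀ j t, deriv (fun φ => T j (t, φ)) = fun φ => f1 j (t, φ) :=
    fun j t => funext fun φ => (d1 j t φ).deriv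
  refine ⟨fun x hx => sumAbs T B0 x (hSpos x hx), ?_, ?_, ?_, ?_, ?_⟩
  · exact (loc_unif T S hSpos B0).congr_right fun x _ => (hu x).symm
  · have e : (fun (N : ℕ) (x : ℝ × ℝ) => ∑ j ∈ Finset.range N, deriv (fun t => T j (t, x.2)) x.1)
        = fun N x => ∑ j ∈ Finset.range N, ft j x := by
      funext N x
      exact Finset.sum_congr rfl fun j _ => (dt j x.1 x.2).deriv
    rw [e]
    exact (loc_unif ft S hSpos Bt).congr_right fun x hx => ((Dt x.1 x.2 (hSpos x hx)).deriv).symm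
  · have e : (fun (N : ℕ) (x : ℝ × ℝ) => ∑ j ∈ Finset.range N, deriv (fun φ => T j (x.1, φ)) x.2)
        = fun N x => ∑ j ∈ Finset.range N, f1 j x := by
      funext N x
      exact Finset.sum_congr rfl fun j _ => (d1 j x.1 x.2).deriv
    rw [e]
    exact (loc_unif f1 S hSpos B1).congr_right fun x hx => ((D1 x.1 x.2 (hSpos x hx)).deriv).symm
  · have e : (fun (N : ℕ) (x : ℝ × ℝ) =>
          ∑ j ∈ Finset.range N, deriv (deriv (fun φ => T j (x.1, φ))) x.2)
        = fun N x => ∑ j ∈ Finset.range N, f2 j x := by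
      funext N x
      refine Finset.sum_congr rfl fun j _ => ?_
      rw [dd]
      exact (d2 j x.1 x.2).deriv
    rw [e]
    exact (loc_unif f2 S hSpos B2).congr_right fun x hx => ((D2 x.1 x.2 (hSpos x hx)).deriv).symm
  · intro t φ ht h0 h1
    rw [(Dt t φ ht).deriv, (D2 t φ ht).deriv, (D1 t φ ht).deriv, ← tsum_mul_left, ← tsum_mul_left,
      ← Summable.tsum_add ((sumAbs f2 B2 (t, φ) ht).of_abs.mul_left _)
        ((sumAbs f1 B1 (t, φ) ht).of_abs.mul_left _)]
    refine tsum_congr fun j => ?_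
    have h := jF_ode k₀ k₁ hk₀ hk₁ j φ h0 h1
    simp only [hft, hf1, hf2, hP, hF1, hF2]
    linear_combination (c j * Real.exp (-2 * j * (j + k₀ + k₁) * t)) * h
end

section
/- Let n ≥ 1 be an integer, a ≥ 0, and φ, θ ∈ ℝ. Then ∑_{l=0}^{n−1} [ exp(a·cos(φ − θ − 2πl/n)) + exp(a·cos(φ + θ − 2πl/n)) ] = 2n·I₀(a) + 4n·∑_{j=1}^{∞} I_{jn}(a) cos(jnφ) cos(jnθ), where the series on the right converges absolutely. Equivalently, with x = ρ(cos φ, sin φ), y = r(cos θ, sin θ) and a = ρr, the sum ∑_{w ∈ D₂(n)} e^{⟨x, w y⟩} over the 2n elements of the dihedral group (n rotations by 2πl/n and n reflections) equals the right-hand side; this is the generalized Bessel function of the dihedral system I₂(n) with multiplicity k ≡ 0, underlying the heat kernel of planar Brownian motion reflected at the boundary of the wedge of angle π/n. -/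
open Real Finset

/-- The modified Bessel function `I_ν(x) = ∑_{q=0}^∞ (x/2)^{2q+ν}/(q! Γ(ν+q+1))`. -/
noncomputable def modBesselI (ν x : ℝ) : ℝ :=
  ∑' q : ℕ, (x / 2) ^ (2 * (q : ℝ) + ν) / (Nat.factorial q * Real.Gamma (ν + q + 1))

lemma bes_nat (m : ℕ) (x : ℝ) : modBesselI (m : ℝ) x
    = ∑' q : ℕ, (x/2)^(q+m)/(Nat.factorial (q+m)) * ((x/2)^q/(Nat.factorial q)) := by
  unfold modBesselI
  refine tsum_congr fun q => ?_
  have h1 : (2 * (q:ℝ) + m) = ((2*q+m : ℕ) : ℝ) := by push_cast; ring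
  have h2 : ((m:ℝ) + q + 1) = ((q+m : ℕ) : ℝ) + 1 := by push_cast; ring
  rw [h1, h2, Real.rpow_natCast, Real.Gamma_nat_eq_factorial, div_mul_div_comm, ← pow_add]
  congr 1
  · congr 1; ring
  · ring

lemma cexp_hs (w : ℂ) : HasSum (fun p : ℕ => w^p/(Nat.factorial p : ℂ)) (Complex.exp w) := by
  rw [Complex.exp_eq_exp_ℂ]
  exact NormedSpace.expSeries_div_hasSum_exp w

lemma cexp_sn (w : ℂ) : Summable (fun p : ℕ => ‖w^p/(Nat.factorial p : ℂ)‖) :=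
  NormedSpace.norm_expSeries_div_summable w

lemma term_re (z t : ℝ) (p q : ℕ) :
    ((z * Complex.exp (t * Complex.I)) ^ p / (Nat.factorial p : ℂ) *
      ((z * Complex.exp (-t * Complex.I)) ^ q / (Nat.factorial q : ℂ))).re
      = z^p/(Nat.factorial p) * (z^q/(Nat.factorial q)) * Real.cos (((p:ℝ) - q) * t) := by
  have h1 : Complex.exp (((((p:ℝ) - q) * t : ℝ) : ℂ) * Complex.I)
      = Complex.exp (t * Complex.I) ^ p * Complex.exp (-t * Complex.I) ^ q := by
    rw [← Complex.exp_nat_mul, ← Complex.exp_nat_mul, ← Complex.exp_add]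
    congr 1; push_cast; ring
  rw [← Complex.exp_ofReal_mul_I_re, ← Complex.re_ofReal_mul, h1]
  congr 1
  push_cast
  rw [mul_pow, mul_pow]
  ring

lemma real_series (z t : ℝ) :
    HasSum (fun x : ℕ × ℕ => z^x.1/(Nat.factorial x.1) * (z^x.2/(Nat.factorial x.2))
      * Real.cos (((x.1:ℝ) - x.2) * t)) (Real.exp (2 * z * Real.cos t)) := by
  obtain ⟨w, hw⟩ : ∃ w : ℂ, w = z * Complex.exp (t * Complex.I) := ⟨_, rfl⟩
  obtain ⟨v, hv⟩ : ∃ v : ℂ, v = z * Complex.exp (-t * Complex.I) := ⟨_, rfl⟩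
  have hsum := summable_mul_of_summable_norm (cexp_sn w) (cexp_sn v)
  have h := HasSum.mul (cexp_hs w) (cexp_hs v) hsum
  have h2 := Complex.hasSum_re h
  have e1 : ∀ x : ℕ × ℕ, (w ^ x.1 / (Nat.factorial x.1 : ℂ) * (v ^ x.2 / (Nat.factorial x.2 : ℂ))).re
      = z^x.1/(Nat.factorial x.1) * (z^x.2/(Nat.factorial x.2))
      * Real.cos (((x.1:ℝ) - x.2) * t) := by
    intro x
    rw [hw, hv]
    exact term_re z t x.1 x.2
  have e2 : (Complex.exp w * Complex.exp v).re = Real.exp (2 * z * Real.cos t) := by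
    rw [← Complex.exp_add]
    have : w + v = ((2 * z * Real.cos t : ℝ) : ℂ) := by
      simp only [hw, hv]
      push_cast
      rw [Complex.cos]; ring
    rw [this, Complex.exp_ofReal_re]
  rw [← e2]
  simp only [e1] at h2
  exact h2

lemma jacobi_anger (a t : ℝ) :
    (Summable fun m : ℕ => modBesselI ((m:ℝ)+1) a * Real.cos (((m:ℝ)+1) * t)) ∧
    HasSum (fun m : ℕ => 2 * (modBesselI ((m:ℝ)+1) a * Real.cos (((m:ℝ)+1) * t)))
      (Real.exp (a * Real.cos t) - modBesselI 0 a) := by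
  have h := real_series (a/2) t
  let e : (ℕ × ℕ) ⊕ (ℕ × ℕ) → ℕ × ℕ :=
    Sum.elim (fun x => (x.2 + x.1, x.2)) (fun x => (x.2, x.2 + (x.1 + 1)))
  have he : Function.Bijective e := by
    constructor
    · rintro (⟨a, b⟩ | ⟨a, b⟩) (⟨c, d⟩ | ⟨c, d⟩) h <;> simp [e] at h ⊢ <;> omega
    · rintro ⟨p, q⟩
      rcases le_or_gt q p with hpq | hpq
      · exact ⟨Sum.inl (p - q, q), by simp [e]; omega⟩
      · exact ⟨Sum.inr (q - p - 1, p), by simp [e]; omega⟩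
  rw [← (Equiv.ofBijective e he).hasSum_iff] at h
  have hs := h.summable
  have hl := hs.comp_injective Sum.inl_injective
  have hr := hs.comp_injective Sum.inr_injective
  have htot := h.unique (HasSum.sum hl.hasSum hr.hasSum)
  have L : ∀ m : ℕ, ∑' q : ℕ, ((fun x : ℕ × ℕ => (a/2)^x.1/(Nat.factorial x.1) * ((a/2)^x.2/(Nat.factorial x.2))
      * Real.cos (((x.1:ℝ) - x.2) * t)) ∘ (Equiv.ofBijective e he)) (Sum.inl (m, q)) = modBesselI m a * Real.cos (m * t) := by
    intro m
    rw [bes_nat, ← tsum_mul_right]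
    refine tsum_congr fun q => ?_
    simp [e]
  have R : ∀ m : ℕ, ∑' q : ℕ, ((fun x : ℕ × ℕ => (a/2)^x.1/(Nat.factorial x.1) * ((a/2)^x.2/(Nat.factorial x.2))
      * Real.cos (((x.1:ℝ) - x.2) * t)) ∘ (Equiv.ofBijective e he)) (Sum.inr (m, q)) = modBesselI ((m:ℝ)+1) a * Real.cos (((m:ℝ)+1) * t) := by
    intro m
    have := bes_nat (m+1) a
    push_cast at this
    rw [this, ← tsum_mul_right]
    refine tsum_congr fun q => ?_
    simp only [e, Function.comp, Equiv.ofBijective_apply, Sum.elim_inr]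
    push_cast
    rw [show ((q:ℝ) - (q + (m+1))) * t = -((m+1) * t) by ring, Real.cos_neg]
    ring
  have sl := hl.prod
  have sr := hr.prod
  have tl := hl.tsum_prod
  have tr := hr.tsum_prod
  simp only [Function.comp_def] at L R sl sr tl tr htot
  simp only [L, R] at sl sr tl tr
  refine ⟨sr, ?_⟩
  rw [tl, tr, sl.tsum_eq_zero_add] at htot
  push_cast at htot
  have h5 := sr.hasSum.mul_left 2
  suffices hh : Real.exp (a * Real.cos t) - modBesselI 0 a = 2 * ∑' m : ℕ, modBesselI ((m:ℝ)+1) a * Real.cos (((m:ℝ)+1) * t) by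
    rw [hh]; exact h5
  rw [show a * Real.cos t = 2 * (a/2) * Real.cos t by ring, htot]
  simp
  ring

lemma cos_sum_zero (n m : ℕ) (hn : 1 ≤ n) (hm : ¬ n ∣ m) (α : ℝ) :
    ∑ l ∈ Finset.range n, Real.cos ((m:ℝ) * (α - 2 * π * l / n)) = 0 := by
  have hn0 : (n:ℂ) ≠ 0 := by exact_mod_cast (by omega : n ≠ 0)
  set ζ : ℂ := Complex.exp (-(2 * π * Complex.I * m / n))
  have h1 : ζ ^ n = 1 := by
    rw [← Complex.exp_nat_mul, Complex.exp_eq_one_iff]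
    exact ⟨-m, by push_cast; field_simp⟩
  have h2 : ζ ≠ 1 := by
    intro h
    obtain ⟨k, hk⟩ := Complex.exp_eq_one_iff.1 h
    have hp : (2 * π * Complex.I : ℂ) ≠ 0 := Complex.two_pi_I_ne_zero
    have : (2 * π * Complex.I : ℂ) * (-(m:ℂ)) = (2 * π * Complex.I : ℂ) * (k * n) := by
      field_simp at hk
      linear_combination (2 * π * Complex.I : ℂ) * hk
    have := mul_left_cancel₀ hp this
    have h3 : (-(m:ℤ)) = k * n := by exact_mod_cast this
    apply hm
    have : (n:ℤ) ∣ m := ⟨-k, by linarith⟩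
    exact_mod_cast this
  have h3 : ∑ l ∈ Finset.range n, ζ ^ l = 0 := by
    rw [geom_sum_eq h2, h1]; simp
  have h4 : ∀ l : ℕ, Real.cos ((m:ℝ) * (α - 2 * π * l / n)) =
      (Complex.exp (m * α * Complex.I) * ζ ^ l).re := by
    intro l
    rw [← Complex.exp_nat_mul, ← Complex.exp_add, ← Complex.exp_ofReal_mul_I_re]
    congr 2
    push_cast
    ring
  simp only [h4]
  rw [← Complex.re_sum, ← Finset.mul_sum, h3]
  simp

lemma cos_sum_mul (n j : ℕ) (hn : 1 ≤ n) (α : ℝ) :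
    ∑ l ∈ Finset.range n, Real.cos (((j:ℝ) * n) * (α - 2 * π * l / n)) = n * Real.cos (j * n * α) := by
  have hn0 : (n:ℝ) ≠ 0 := by exact_mod_cast (by omega : n ≠ 0)
  rw [Finset.sum_congr rfl (g := fun _ => Real.cos (j * n * α))]
  · simp
  intro l _
  rw [show ((j:ℝ) * n) * (α - 2 * π * l / n) = j * n * α - ((j * l : ℕ) : ℝ) * (2 * π) by
    push_cast; field_simp]
  exact Real.cos_sub_nat_mul_two_pi _ _

lemma half_sum (n : ℕ) (hn : 1 ≤ n) (a α : ℝ) :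
    HasSum (fun j : ℕ => 2 * n * (modBesselI (((j:ℝ)+1) * n) a * Real.cos (((j:ℝ)+1) * n * α)))
      (∑ l ∈ Finset.range n, Real.exp (a * Real.cos (α - 2 * π * l / n)) - n * modBesselI 0 a) := by
  have h := hasSum_sum (s := Finset.range n)
    (fun l _ => (jacobi_anger a (α - 2 * π * l / n)).2)
  rw [Finset.sum_sub_distrib, Finset.sum_const, Finset.card_range, nsmul_eq_mul] at h
  simp only [← Finset.mul_sum] at h
  have hi : Function.Injective (fun j : ℕ => (j+1) * n - 1) := by
    intro i j hij
    have h1 : 1 ≤ (i+1) * n := Nat.mul_pos (by omega) hn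
    have h2 : 1 ≤ (j+1) * n := Nat.mul_pos (by omega) hn
    have h3 : (i+1) * n = (j+1) * n := by simp only at hij; omega
    have := Nat.eq_of_mul_eq_mul_right hn h3
    omega
  rw [← hi.hasSum_iff] at h
  · convert h using 1
    funext j
    have h2 : 1 ≤ (j+1) * n := Nat.mul_pos (by omega) hn
    have h3 : (((j+1) * n - 1 : ℕ) : ℝ) + 1 = ((j:ℝ)+1) * n := by
      rw [Nat.cast_sub h2]; push_cast; ring
    have := cos_sum_mul n (j+1) hn α
    push_cast at this
    simp only [Function.comp, h3, this]
    ring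
  · intro m hm
    have : ¬ n ∣ (m+1) := by
      rintro ⟨k, hk⟩
      apply hm
      rcases k with _ | k
      · simp at hk
      · exact ⟨k, by simp only; rw [mul_comm, ← hk]; simp⟩
    have := cos_sum_zero n (m+1) hn this α
    push_cast at this
    rw [this]; simp

theorem stmt_9 (n : ℕ) (hn : 1 ≤ n) (a : ℝ) (ha : 0 ≤ a) (φ θ : ℝ) :
    (Summable fun j : ℕ =>
      |modBesselI (((j : ℝ) + 1) * n) a * Real.cos (((j : ℝ) + 1) * n * φ)
        * Real.cos (((j : ℝ) + 1) * n * θ)|)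
    ∧ ∑ l ∈ Finset.range n,
        (Real.exp (a * Real.cos (φ - θ - 2 * π * l / n))
          + Real.exp (a * Real.cos (φ + θ - 2 * π * l / n)))
      = 2 * n * modBesselI 0 a
        + 4 * n * ∑' j : ℕ, modBesselI (((j : ℝ) + 1) * n) a
            * Real.cos (((j : ℝ) + 1) * n * φ) * Real.cos (((j : ℝ) + 1) * n * θ) := by
  have hn0 : (n:ℝ) ≠ 0 := by exact_mod_cast (by omega : n ≠ 0)
  have h := (half_sum n hn a (φ - θ)).add (half_sum n hn a (φ + θ))
  have e1 : ∀ j : ℕ, 2 * n * (modBesselI (((j:ℝ)+1) * n) a * Real.cos (((j:ℝ)+1) * n * (φ - θ)))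
      + 2 * n * (modBesselI (((j:ℝ)+1) * n) a * Real.cos (((j:ℝ)+1) * n * (φ + θ)))
      = 4 * n * (modBesselI (((j : ℝ) + 1) * n) a
      * Real.cos (((j : ℝ) + 1) * n * φ) * Real.cos (((j : ℝ) + 1) * n * θ)) := by
    intro j
    rw [mul_sub, mul_add, Real.cos_sub, Real.cos_add]
    ring
  have h' := h
  simp only [e1] at h'
  have h4 : (4 * n : ℝ) ≠ 0 := by positivity
  refine ⟨((summable_mul_left_iff h4).1 h'.summable).abs, ?_⟩
  rw [← tsum_mul_left, h'.tsum_eq, Finset.sum_add_distrib]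
  ring
end

section
/- Let n ≥ 1 be an integer, a ≥ 0, and φ, θ ∈ ℝ. Then ∑_{l=0}^{n−1} [ exp(a·cos(φ − θ − 2πl/n)) − exp(a·cos(φ + θ − 2πl/n)) ] = 4n·∑_{j=1}^{∞} I_{jn}(a) sin(jnφ) sin(jnθ), where the series on the right converges absolutely. Equivalently, the signed sum ∑_{w ∈ D₂(n)} det(w) e^{⟨x, w y⟩} over the dihedral group (rotations with sign +1, reflections with sign −1), with x = ρ(cos φ, sin φ), y = r(cos θ, sin θ), a = ρr, equals the right-hand side; this identity underlies the semigroup density of planar Brownian motion killed when it first hits the boundary of the wedge of angle π/n. -/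
open Real Finset

lemma exp_term_eq (z ψ : ℝ) (p q : ℕ) :
    (z * Complex.exp (ψ * Complex.I)) ^ p / (Nat.factorial p : ℂ)
      * ((z * Complex.exp (-(ψ * Complex.I))) ^ q / (Nat.factorial q : ℂ))
        = ((z ^ (p + q) / (Nat.factorial p * Nat.factorial q) : ℝ) : ℂ)
          * Complex.exp (((((p : ℝ) - q) * ψ : ℝ) : ℂ) * Complex.I) := by
  have he : Complex.exp (((((p : ℝ) - q) * ψ : ℝ) : ℂ) * Complex.I)
      = Complex.exp (ψ * Complex.I) ^ p * Complex.exp (-(ψ * Complex.I)) ^ q := by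
    rw [← Complex.exp_nat_mul, ← Complex.exp_nat_mul, ← Complex.exp_add]
    congr 1
    push_cast
    ring
  rw [he, mul_pow, mul_pow]
  push_cast
  rw [pow_add, div_mul_div_comm]
  ring

lemma exp_total_eq (z ψ : ℝ) :
    Complex.exp (z * Complex.exp (ψ * Complex.I)) * Complex.exp (z * Complex.exp (-(ψ * Complex.I)))
      = Complex.exp ((2 * z * Real.cos ψ : ℝ) : ℂ) := by
  rw [← Complex.exp_add]
  congr 1
  push_cast
  rw [Complex.cos]
  ring_nf

lemma hasSum_exp_complex (w : ℂ) :
    HasSum (fun k : ℕ => w ^ k / (Nat.factorial k : ℂ)) (Complex.exp w) := by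
  rw [Complex.exp_eq_exp_ℂ]
  exact NormedSpace.expSeries_div_hasSum_exp w

lemma summable_mul_complex (f g : ℕ → ℂ) (hf : Summable f) (hg : Summable g) :
    Summable fun x : ℕ × ℕ => f x.1 * g x.2 := by
  have h1 : Summable fun k => ‖f k‖ := summable_norm_iff.2 hf
  have h2 : Summable fun k => ‖g k‖ := summable_norm_iff.2 hg
  exact summable_mul_of_summable_norm h1 h2

lemma hasSum_mul_complex (f g : ℕ → ℂ) (a b : ℂ) (hf : HasSum f a) (hg : HasSum g b) :
    HasSum (fun x : ℕ × ℕ => f x.1 * g x.2) (a * b) :=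
  hf.mul hg (summable_mul_complex f g hf.summable hg.summable)

lemma hasSum_exp_cos (z ψ : ℝ) :
    HasSum (fun x : ℕ × ℕ => z ^ (x.1 + x.2) / (Nat.factorial x.1 * Nat.factorial x.2)
      * Real.cos (((x.1 : ℝ) - x.2) * ψ)) (Real.exp (2 * z * Real.cos ψ)) := by
  have hu := hasSum_exp_complex (z * Complex.exp (ψ * Complex.I))
  have hv := hasSum_exp_complex (z * Complex.exp (-(ψ * Complex.I)))
  have h := hasSum_mul_complex _ _ _ _ hu hv
  have h2 := Complex.hasSum_re h
  rw [exp_total_eq, Complex.exp_ofReal_re] at h2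
  refine h2.congr_fun fun x => ?_
  rw [exp_term_eq, Complex.re_ofReal_mul, Complex.exp_ofReal_mul_I_re]

lemma sum_cos_rot (n : ℕ) (hn : 1 ≤ n) (m : ℤ) (ψ : ℝ) :
    ∑ l ∈ Finset.range n, Real.cos ((m : ℝ) * (ψ - 2 * π * l / n))
      = if (n : ℤ) ∣ m then n * Real.cos (m * ψ) else 0 := by
  have hn0 : (n : ℂ) ≠ 0 := by exact_mod_cast (by omega : n ≠ 0)
  set ζ : ℂ := Complex.exp (-(2 * π * m / n) * Complex.I) with hζ
  have hterm : ∀ l : ℕ, Real.cos ((m : ℝ) * (ψ - 2 * π * l / n))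
      = (Complex.exp ((m * ψ : ℝ) * Complex.I) * ζ ^ l).re := by
    intro l
    rw [← Complex.exp_ofReal_mul_I_re, hζ, ← Complex.exp_nat_mul, ← Complex.exp_add]
    congr 2
    push_cast
    ring
  have h1 : ∑ l ∈ Finset.range n, Real.cos ((m : ℝ) * (ψ - 2 * π * l / n))
      = (Complex.exp ((m * ψ : ℝ) * Complex.I) * ∑ l ∈ Finset.range n, ζ ^ l).re := by
    rw [Finset.mul_sum, Complex.re_sum]
    exact Finset.sum_congr rfl fun l _ => hterm l
  have hpow : ζ ^ n = 1 := by
    rw [hζ, ← Complex.exp_nat_mul, Complex.exp_eq_one_iff]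
    refine ⟨-m, ?_⟩
    push_cast
    field_simp
  have hone : ζ = 1 ↔ (n : ℤ) ∣ m := by
    rw [hζ, Complex.exp_eq_one_iff]
    constructor
    · rintro ⟨k, hk⟩
      refine ⟨-k, ?_⟩
      have h2 : (2 * π * Complex.I : ℂ) ≠ 0 := Complex.two_pi_I_ne_zero
      have h3 : (2 * π * Complex.I : ℂ) * m = (2 * π * Complex.I) * (n * -k) := by
        field_simp at hk
        linear_combination (-2 * π * Complex.I) * hk
      have := mul_left_cancel₀ h2 h3
      exact_mod_cast this
    · rintro ⟨k, rfl⟩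
      refine ⟨-k, ?_⟩
      push_cast
      field_simp
  rw [h1]
  split_ifs with hd
  · rw [hone.2 hd]
    simp only [one_pow, Finset.sum_const, Finset.card_range, nsmul_eq_mul, mul_one]
    rw [mul_comm, ← Complex.ofReal_natCast, Complex.re_ofReal_mul, Complex.exp_ofReal_mul_I_re]
  · have hne : ζ ≠ 1 := fun h => hd (hone.1 h)
    rw [geom_sum_eq hne, hpow]
    simp

/-- The coefficient of the symmetrised double series. -/
noncomputable def gTerm (n : ℕ) (z φ θ : ℝ) (x : ℕ × ℕ) : ℝ :=
  z ^ (x.1 + x.2) / (Nat.factorial x.1 * Nat.factorial x.2) *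
    (if (n : ℤ) ∣ ((x.1 : ℤ) - x.2) then
      Real.sin (((x.1 : ℝ) - x.2) * φ) * Real.sin (((x.1 : ℝ) - x.2) * θ) else 0)

lemma hasSum_gTerm (n : ℕ) (hn : 1 ≤ n) (z φ θ : ℝ) :
    HasSum (fun x => 2 * n * gTerm n z φ θ x)
      (∑ l ∈ Finset.range n,
        (Real.exp (2 * z * Real.cos (φ - θ - 2 * π * l / n))
          - Real.exp (2 * z * Real.cos (φ + θ - 2 * π * l / n)))) := by
  have h := hasSum_sum (s := Finset.range n) fun l _ =>
    (hasSum_exp_cos z (φ - θ - 2 * π * l / n)).sub (hasSum_exp_cos z (φ + θ - 2 * π * l / n))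
  refine h.congr_fun ?_
  intro x
  have h1 := sum_cos_rot n hn ((x.1 : ℤ) - x.2) (φ - θ)
  have h2 := sum_cos_rot n hn ((x.1 : ℤ) - x.2) (φ + θ)
  push_cast at h1 h2
  simp_rw [← mul_sub]
  rw [← Finset.mul_sum, Finset.sum_sub_distrib, h1, h2, gTerm]
  split_ifs with hd
  · rw [mul_sub (x.1 - x.2 : ℝ), mul_add (x.1 - x.2 : ℝ), Real.cos_sub, Real.cos_add]
    ring
  · simp

lemma modBesselI_nat (k : ℕ) (a : ℝ) : modBesselI k a
    = ∑' q : ℕ, (a / 2) ^ (q + k + q) / (Nat.factorial (q + k) * Nat.factorial q) := by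
  unfold modBesselI
  refine tsum_congr fun q => ?_
  have h1 : (k : ℝ) + q + 1 = ((q + k : ℕ) : ℝ) + 1 := by push_cast; ring
  have h2 : 2 * (q : ℝ) + k = ((q + k + q : ℕ) : ℝ) := by push_cast; ring
  rw [h1, h2, Real.Gamma_nat_eq_factorial, Real.rpow_natCast, mul_comm (Nat.factorial q : ℝ)]

lemma summable_prod_real (f : ℕ × ℕ → ℝ) (hf : Summable f) :
    (Summable fun j : ℕ => ∑' q : ℕ, f (j, q)) ∧ ∑' x, f x = ∑' j : ℕ, ∑' q : ℕ, f (j, q) :=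
  ⟨hf.prod, hf.tsum_prod⟩

lemma summable_swap_real (f : ℕ × ℕ → ℝ) (hf : Summable f) :
    (Summable fun x : ℕ × ℕ => f x.swap) ∧ ∑' x : ℕ × ℕ, f x.swap = ∑' x, f x :=
  ⟨(Equiv.prodComm ℕ ℕ).summable_iff.2 hf, (Equiv.prodComm ℕ ℕ).tsum_eq f⟩

lemma sym_double_sum (n : ℕ) (hn : 1 ≤ n) (g : ℕ × ℕ → ℝ) (hgs : Summable g)
    (hsw : ∀ p q, g (p, q) = g (q, p)) (hdiag : ∀ p, g (p, p) = 0)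
    (hdvd : ∀ p q : ℕ, ¬ ((n : ℤ) ∣ (p : ℤ) - q) → g (p, q) = 0) :
    (Summable fun j : ℕ => ∑' q : ℕ, g (q + (j + 1) * n, q)) ∧
      ∑' x, g x = 2 * ∑' j : ℕ, ∑' q : ℕ, g (q + (j + 1) * n, q) := by
  set h : ℕ × ℕ → ℝ := fun x => if x.2 < x.1 then g x else 0 with hh
  have hhs : Summable h := by
    refine Summable.of_norm_bounded hgs.abs fun x => ?_
    simp only [hh]
    split_ifs
    · exact le_rfl
    · simp
  have hsymm : ∀ x : ℕ × ℕ, g x = h x + h x.swap := by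
    rintro ⟨p, q⟩
    simp only [hh, Prod.swap_prod_mk]
    rcases lt_trichotomy p q with hpq | hpq | hpq
    · rw [if_neg (by omega), if_pos hpq, zero_add, hsw]
    · subst hpq
      simp [hdiag]
    · rw [if_pos hpq, if_neg (by omega), add_zero]
  have hhsw : Summable fun x : ℕ × ℕ => h x.swap :=
    (summable_swap_real h hhs).1
  have htg : ∑' x, g x = 2 * ∑' x, h x := by
    rw [tsum_congr hsymm, hhs.tsum_add hhsw, two_mul]
    congr 1
    exact (summable_swap_real h hhs).2
  set i : ℕ × ℕ → ℕ × ℕ := fun y => (y.2 + (y.1 + 1) * n, y.2) with hi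
  have hinj : Function.Injective i := by
    rintro ⟨j, q⟩ ⟨j', q'⟩ he
    simp only [hi, Prod.mk.injEq] at he
    obtain ⟨h1, rfl⟩ := he
    have h2 : (j + 1) * n = (j' + 1) * n := by omega
    have h3 := Nat.eq_of_mul_eq_mul_right (by omega : 0 < n) h2
    simp only [Prod.mk.injEq, and_true]
    omega
  have hsupp : Function.support h ⊆ Set.range i := by
    rintro ⟨p, q⟩ hx
    rw [Function.mem_support] at hx
    simp only [hh] at hx
    split_ifs at hx with h1
    · have h2 : (n : ℤ) ∣ (p : ℤ) - q := by
        by_contra hc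
        exact hx (hdvd p q hc)
      obtain ⟨k, hk⟩ := h2
      have hk0 : 0 < k := by
        by_contra hc
        have : (n : ℤ) * k ≤ 0 := mul_nonpos_of_nonneg_of_nonpos (by positivity) (by omega)
        omega
      obtain ⟨j, rfl⟩ : ∃ j : ℕ, k = j + 1 := ⟨(k - 1).toNat, by omega⟩
      refine ⟨(j, q), ?_⟩
      simp only [hi, Prod.mk.injEq, and_true]
      zify
      linarith
    · simp at hx
  have hhi : Summable (h ∘ i) := hhs.comp_injective hinj
  have hthi : ∑' y, h (i y) = ∑' x, h x := hinj.tsum_eq hsupp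
  have hrow : ∀ j q : ℕ, h (i (j, q)) = g (q + (j + 1) * n, q) := by
    intro j q
    have hpos : 0 < (j + 1) * n := by positivity
    simp only [hh, hi]
    rw [if_pos (by omega)]
  constructor
  · have := (summable_prod_real _ hhi).1
    simp only [Function.comp_apply, hrow] at this
    exact this
  · rw [htg, ← hthi]
    have := (summable_prod_real _ hhi).2
    simp only [Function.comp_apply, hrow] at this
    rw [← this]
    congr 1
    exact tsum_congr fun y => hrow y.1 y.2

lemma gTerm_swap (n : ℕ) (z φ θ : ℝ) (p q : ℕ) :
    gTerm n z φ θ (p, q) = gTerm n z φ θ (q, p) := by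
  simp only [gTerm]
  simp only [dvd_sub_comm (b := (p : ℤ)) (c := (q : ℤ))]
  rw [add_comm p q, mul_comm (Nat.factorial p : ℝ),
    show ((p : ℝ) - q) * φ = -(((q : ℝ) - p) * φ) by ring,
    show ((p : ℝ) - q) * θ = -(((q : ℝ) - p) * θ) by ring, Real.sin_neg, Real.sin_neg,
    neg_mul_neg]

lemma gTerm_row (n : ℕ) (a φ θ : ℝ) (j : ℕ) :
    ∑' q : ℕ, gTerm n (a / 2) φ θ (q + (j + 1) * n, q) = modBesselI (((j : ℝ) + 1) * n) a
      * Real.sin (((j : ℝ) + 1) * n * φ) * Real.sin (((j : ℝ) + 1) * n * θ) := by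
  have hc : ((j : ℝ) + 1) * n = (((j + 1) * n : ℕ) : ℝ) := by push_cast; ring
  rw [hc, modBesselI_nat, mul_assoc, ← tsum_mul_right]
  refine tsum_congr fun q => ?_
  simp only [gTerm]
  rw [if_pos ⟨(j : ℤ) + 1, by push_cast; ring⟩,
    show ((q + (j + 1) * n : ℕ) : ℝ) - q = (((j + 1) * n : ℕ) : ℝ) by push_cast; ring]

/-- For an integer `n ≥ 1`, `a ≥ 0` and `φ, θ ∈ ℝ`,
`∑_{l=0}^{n−1} [e^{a cos(φ−θ−2πl/n)} − e^{a cos(φ+θ−2πl/n)}]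
  = 4n ∑_{j≥1} I_{jn}(a) sin(jnφ) sin(jnθ)`,
the series converging absolutely. With `x = ρ(cos φ, sin φ)`, `y = r(cos θ, sin θ)`,
`a = ρr`, the left-hand side is the signed sum `∑_{w ∈ D₂(n)} det(w) e^{⟨x, wy⟩}`
underlying the heat kernel of planar Brownian motion killed at the boundary of the
wedge of angle `π/n`. -/
theorem stmt_10 (n : ℕ) (hn : 1 ≤ n) (a : ℝ) (ha : 0 ≤ a) (φ θ : ℝ) :
    (Summable fun j : ℕ =>
      |modBesselI (((j : ℝ) + 1) * n) a * Real.sin (((j : ℝ) + 1) * n * φ)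
        * Real.sin (((j : ℝ) + 1) * n * θ)|)
    ∧ ∑ l ∈ Finset.range n,
        (Real.exp (a * Real.cos (φ - θ - 2 * π * l / n))
          - Real.exp (a * Real.cos (φ + θ - 2 * π * l / n)))
      = 4 * n * ∑' j : ℕ, modBesselI (((j : ℝ) + 1) * n) a
          * Real.sin (((j : ℝ) + 1) * n * φ) * Real.sin (((j : ℝ) + 1) * n * θ) := by
  have hn0 : (n : ℝ) ≠ 0 := by exact_mod_cast (by omega : n ≠ 0)
  have hS := hasSum_gTerm n hn (a / 2) φ θ
  rw [show 2 * (a / 2) = a by ring] at hS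
  have h2n : (2 * n : ℝ) ≠ 0 := mul_ne_zero two_ne_zero hn0
  have hgs : Summable (gTerm n (a / 2) φ θ) := (summable_mul_left_iff h2n).1 hS.summable
  obtain ⟨h1, h2⟩ := sym_double_sum n hn (gTerm n (a / 2) φ θ) hgs (gTerm_swap n (a / 2) φ θ)
    (fun p => by simp [gTerm]) (fun p q hd => by simp only [gTerm, if_neg hd, mul_zero])
  simp only [gTerm_row] at h1 h2
  refine ⟨h1.abs, ?_⟩
  rw [← hS.tsum_eq, tsum_mul_left, h2]
  ring
end

section
/- Let b > −1, ν ∈ ℝ with b + ν > −2, set a = (b+ν)/2, and let ρ > 0. Then the integral ∫_0^∞ e^{−r²/2} I_b(ρ r) r^{ν+1} dr converges and equals 2^{(ν−b)/2} ρ^{b} · [Γ(a+1)/Γ(b+1)] · ₁F₁(a+1; b+1; ρ²/2). -/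
open Real MeasureTheory

/-- The confluent hypergeometric function
`₁F₁(a; c; x) = ∑_{q=0}^∞ [(Γ(a+q)/Γ(a))/(Γ(c+q)/Γ(c))] x^q/q!`. -/
noncomputable def hyp1F1 (a c x : ℝ) : ℝ :=
  ∑' q : ℕ, (Real.Gamma (a + q) / Real.Gamma a) / (Real.Gamma (c + q) / Real.Gamma c)
      * x ^ q / (Nat.factorial q)

lemma hyp1F1_summable (A c x : ℝ) (hA : 0 < A) (hc : 0 < c) (hx : 0 < x) :
    Summable (fun q : ℕ => (Real.Gamma (A + q) / Real.Gamma A) / (Real.Gamma (c + q) / Real.Gamma c)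
      * x ^ q / (Nat.factorial q)) := by
  have gA : ∀ q : ℕ, 0 < Real.Gamma (A + q) := fun q => Real.Gamma_pos_of_pos (by positivity)
  have gc : ∀ q : ℕ, 0 < Real.Gamma (c + q) := fun q => Real.Gamma_pos_of_pos (by positivity)
  have gA0 := Real.Gamma_pos_of_pos hA
  have gc0 := Real.Gamma_pos_of_pos hc
  have hpos : ∀ q : ℕ, 0 < (Real.Gamma (A + q) / Real.Gamma A) / (Real.Gamma (c + q) / Real.Gamma c)
      * x ^ q / (Nat.factorial q) := by
    intro q
    have := gA q
    have := gc q
    positivity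
  refine summable_of_ratio_test_tendsto_lt_one (l := 0) one_pos
    (Filter.Eventually.of_forall fun q => (hpos q).ne') ?_
  have key : ∀ q : ℕ, x * ((1 : ℝ) / ((q : ℝ) + 1) + (A - c) * ((1 / ((q : ℝ) + 1)) * (1 / (c + q)))) =
      ‖(Real.Gamma (A + (q + 1 : ℕ)) / Real.Gamma A) / (Real.Gamma (c + (q + 1 : ℕ)) / Real.Gamma c)
      * x ^ (q + 1) / (Nat.factorial (q + 1))‖ /
      ‖(Real.Gamma (A + q) / Real.Gamma A) / (Real.Gamma (c + q) / Real.Gamma c)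
      * x ^ q / (Nat.factorial q)‖ := by
    intro q
    rw [Real.norm_of_nonneg (hpos q).le, Real.norm_of_nonneg (hpos (q + 1)).le]
    have e1 : Real.Gamma (A + (q + 1 : ℕ)) = (A + q) * Real.Gamma (A + q) := by
      rw [← Real.Gamma_add_one (by positivity)]; push_cast; ring_nf
    have e2 : Real.Gamma (c + (q + 1 : ℕ)) = (c + q) * Real.Gamma (c + q) := by
      rw [← Real.Gamma_add_one (by positivity)]; push_cast; ring_nf
    rw [e1, e2, Nat.factorial_succ]
    have := gA q
    have := gc q
    have : 0 < c + q := by positivity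
    push_cast
    field_simp
    ring
  refine Filter.Tendsto.congr key ?_
  have t1 : Filter.Tendsto (fun q : ℕ => (1 : ℝ) / ((q : ℝ) + 1)) Filter.atTop (nhds 0) :=
    tendsto_one_div_add_atTop_nhds_zero_nat
  have t2 : Filter.Tendsto (fun q : ℕ => (1 : ℝ) / (c + (q : ℝ))) Filter.atTop (nhds 0) := by
    simp_rw [one_div]
    exact tendsto_inv_atTop_zero.comp
      (Filter.tendsto_atTop_add_const_left _ _ tendsto_natCast_atTop_atTop)
  simpa using (t1.add ((t1.mul t2).const_mul (A - c))).const_mul x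

/-- For `b > −1`, `b + ν > −2`, `a = (b+ν)/2` and `ρ > 0`, the integral
`∫_0^∞ e^{−r²/2} I_b(ρr) r^{ν+1} dr` converges and equals
`2^{(ν−b)/2} ρ^b [Γ(a+1)/Γ(b+1)] ₁F₁(a+1; b+1; ρ²/2)`. -/
theorem stmt_11 (b ν : ℝ) (hb : -1 < b) (hbv : -2 < b + ν) (a : ℝ) (ha : a = (b + ν) / 2)
    (ρ : ℝ) (hρ : 0 < ρ) :
    IntegrableOn (fun r : ℝ => Real.exp (-r ^ 2 / 2) * modBesselI b (ρ * r) * r ^ (ν + 1))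
        (Set.Ioi 0)
    ∧ ∫ r in Set.Ioi (0 : ℝ), Real.exp (-r ^ 2 / 2) * modBesselI b (ρ * r) * r ^ (ν + 1)
      = 2 ^ ((ν - b) / 2) * ρ ^ b * (Real.Gamma (a + 1) / Real.Gamma (b + 1))
          * hyp1F1 (a + 1) (b + 1) (ρ ^ 2 / 2) := by
  have hA : 0 < a + 1 := by linarith
  have hc : 0 < b + 1 := by linarith
  have hx : 0 < ρ ^ 2 / 2 := by positivity
  have hS := hyp1F1_summable (a + 1) (b + 1) (ρ ^ 2 / 2) hA hc hx
  have gA0 := Real.Gamma_pos_of_pos hA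
  have gc0 := Real.Gamma_pos_of_pos hc
  have gA : ∀ q : ℕ, 0 < Real.Gamma (a + 1 + q) := fun q => Real.Gamma_pos_of_pos (by positivity)
  have gc : ∀ q : ℕ, 0 < Real.Gamma (b + 1 + q) := fun q => Real.Gamma_pos_of_pos (by positivity)
  set t : ℕ → ℝ := fun q => (Real.Gamma (a + 1 + q) / Real.Gamma (a + 1)) /
    (Real.Gamma (b + 1 + q) / Real.Gamma (b + 1)) * (ρ ^ 2 / 2) ^ q / (Nat.factorial q) with ht
  have htpos : ∀ q, 0 < t q := by
    intro q
    have := gA q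
    have := gc q
    simp only [ht]
    positivity
  set K : ℝ := 2 ^ ((ν - b) / 2) * ρ ^ b * (Real.Gamma (a + 1) / Real.Gamma (b + 1)) with hK
  have hKpos : 0 < K := by positivity
  set F : ℕ → ℝ → ℝ := fun q r => Real.exp (-r ^ 2 / 2) *
    ((ρ * r / 2) ^ (2 * (q : ℝ) + b) / (Nat.factorial q * Real.Gamma (b + q + 1))) * r ^ (ν + 1)
    with hF
  have hFeq : ∀ q : ℕ, ∀ r ∈ Set.Ioi (0 : ℝ), ((ρ / 2) ^ (2 * (q : ℝ) + b) /
      (Nat.factorial q * Real.Gamma (b + q + 1))) *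
      (r ^ (2 * (q : ℝ) + b + (ν + 1)) * Real.exp (-(1 / 2) * r ^ (2 : ℝ))) = F q r := by
    intro q r hr
    have hr : 0 < r := hr
    simp only [hF]
    rw [show ρ * r / 2 = (ρ / 2) * r by ring, Real.mul_rpow (by positivity) hr.le,
      Real.rpow_add hr (2 * (q : ℝ) + b) (ν + 1), Real.rpow_two,
      show -(1 / 2) * r ^ 2 = -r ^ 2 / 2 by ring]
    ring
  have hq1 : ∀ q : ℕ, -1 < 2 * (q : ℝ) + b + (ν + 1) := by
    intro q
    have : (0 : ℝ) ≤ q := q.cast_nonneg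
    linarith
  have hFint : ∀ q, IntegrableOn (F q) (Set.Ioi 0) := by
    intro q
    refine IntegrableOn.congr_fun ?_ (hFeq q) measurableSet_Ioi
    exact (integrableOn_rpow_mul_exp_neg_mul_rpow (hq1 q) (by norm_num) (by norm_num)).const_mul _
  have hFval : ∀ q, ∫ r in Set.Ioi (0 : ℝ), F q r = K * t q := by
    intro q
    rw [← setIntegral_congr_fun measurableSet_Ioi (hFeq q), integral_const_mul,
      integral_rpow_mul_exp_neg_mul_rpow (by norm_num) (hq1 q) (by norm_num)]
    have e1 : (2 * (q : ℝ) + b + (ν + 1) + 1) / 2 = a + 1 + q := by rw [ha]; ring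
    have e2 : b + (q : ℝ) + 1 = b + 1 + q := by ring
    have e3 : ((1 : ℝ) / 2) ^ (-(2 * (q : ℝ) + b + (ν + 1) + 1) / 2)
        = 2 ^ ((ν - b) / 2) * 2 ^ b * 2 * 2 ^ q := by
      rw [one_div, Real.inv_rpow (by norm_num), ← Real.rpow_neg (by norm_num),
        ← Real.rpow_natCast, ← Real.rpow_add two_pos, ← Real.rpow_add_one two_ne_zero,
        ← Real.rpow_add two_pos]
      congr 1
      ring
    have e4 : (ρ / 2) ^ (2 * (q : ℝ) + b) = (ρ ^ 2) ^ q / (2 ^ q * 2 ^ q) * (ρ ^ b / 2 ^ b) := by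
      rw [Real.rpow_add (by positivity), Real.div_rpow hρ.le two_pos.le b,
        show (2 * (q : ℝ)) = ((2 * q : ℕ) : ℝ) by push_cast; ring, Real.rpow_natCast, pow_mul,
        div_pow, div_pow, ← mul_pow]
      norm_num
    rw [e1, e2, e3, e4]
    simp only [hK, ht]
    have := gA q
    have := gc q
    have h2b : (0 : ℝ) < 2 ^ b := by positivity
    rw [div_pow]
    field_simp
  have hFnn : ∀ q, ∀ r ∈ Set.Ioi (0 : ℝ), ‖F q r‖ = F q r := by
    intro q r hr
    have hr : 0 < r := hr
    have : 0 < Real.Gamma (b + q + 1) := by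
      have := gc q
      rwa [show b + (q : ℝ) + 1 = b + 1 + q by ring]
    refine Real.norm_of_nonneg ?_
    simp only [hF]
    positivity
  have hsum : Summable fun q => ∫ r in Set.Ioi (0 : ℝ), ‖F q r‖ := by
    refine (hS.mul_left K).congr fun q => ?_
    rw [← hFval q]
    exact (setIntegral_congr_fun measurableSet_Ioi (hFnn q)).symm
  have main := (hasSum_integral_of_summable_integral_norm hFint hsum).tsum_eq
  have hfun : ∀ r : ℝ, ∑' q, F q r =
      Real.exp (-r ^ 2 / 2) * modBesselI b (ρ * r) * r ^ (ν + 1) := by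
    intro r
    simp only [hF, modBesselI]
    rw [tsum_mul_right, tsum_mul_left]
  simp_rw [hfun, hFval, tsum_mul_left] at main
  have hval : ∫ r in Set.Ioi (0 : ℝ), Real.exp (-r ^ 2 / 2) * modBesselI b (ρ * r) * r ^ (ν + 1)
      = K * hyp1F1 (a + 1) (b + 1) (ρ ^ 2 / 2) := main.symm
  refine ⟨?_, hval⟩
  by_contra hni
  have h0 := integral_undef hni
  rw [hval] at h0
  have hpos : 0 < hyp1F1 (a + 1) (b + 1) (ρ ^ 2 / 2) :=
    hS.tsum_pos (fun q => (htpos q).le) 0 (htpos 0)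
  exact (mul_pos hKpos hpos).ne' h0
end

section
/- Let p ≥ 1 be an integer, k₀, k₁ ≥ 0, γ = p(k₀+k₁), b_j = 2jp + γ, and z ∈ (0,1). Then for all ρ, r ≥ 0 and φ, θ ∈ [0, π/(2p)], both of the following series converge absolutely and are equal: ∑_{j=0}^{∞} ∑_{q=0}^{∞} [q!/Γ(b_j+q+1)] L_q^{(b_j)}(ρ²/2) L_q^{(b_j)}(r²/2) P_j^{(k₀−1/2,k₁−1/2)}(cos 2pφ) P_j^{(k₀−1/2,k₁−1/2)}(cos 2pθ) (ρr/2)^{2jp} z^{2(q+jp)} = (1−z²)^{−γ−1} exp(−z²(ρ²+r²)/(2(1−z²))) · ∑_{j=0}^{∞} [1/Γ(b_j+1)] (zρr/(2(1−z²)))^{2jp} ₀F₁(b_j+1; z²ρ²r²/(4(1−z²)²)) P_j^{(k₀−1/2,k₁−1/2)}(cos 2pφ) P_j^{(k₀−1/2,k₁−1/2)}(cos 2pθ). (This is the Mehler-type generating identity for the W-invariant generalized Hermite polynomials of the even dihedral system I₂(2p), the right-hand side being the Gaussian-type kernel built from the generalized Bessel function.) -/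
open Real Finset

/-- The Laguerre polynomial
`L_q^{(α)}(x) = ∑_{m=0}^{q} [Γ(q+α+1)/(Γ(m+α+1)(q−m)!)] (−x)^m/m!`. -/
noncomputable def laguerrePoly (α : ℝ) (q : ℕ) (x : ℝ) : ℝ :=
  ∑ m ∈ Finset.range (q + 1),
    (Real.Gamma ((q : ℝ) + α + 1) / (Real.Gamma ((m : ℝ) + α + 1) * (Nat.factorial (q - m)))) *
      (-x) ^ m / (Nat.factorial m)

/-- The hypergeometric function `₀F₁(c; x) = ∑_{q=0}^∞ [Γ(c)/Γ(c+q)] x^q/q!`. -/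
noncomputable def hyp0F1 (c x : ℝ) : ℝ :=
  ∑' q : ℕ, (Real.Gamma c / Real.Gamma (c + q)) * x ^ q / (Nat.factorial q)


namespace HH

lemma gam_pos {c : ℝ} (hc : 0 < c) (n : ℕ) : 0 < Real.Gamma (n + c) :=
  Real.Gamma_pos_of_pos (by positivity)

lemma poch {c : ℝ} (hc : 0 < c) (n : ℕ) :
    (ascPochhammer ℝ n).eval c = Real.Gamma (n + c) / Real.Gamma c := by
  induction n with
  | zero =>
    have := (Real.Gamma_pos_of_pos hc).ne'
    simp [div_self this]
  | succ n ih =>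
    rw [ascPochhammer_succ_right, Polynomial.eval_mul, ih]
    have h : ((n + 1 : ℕ) : ℝ) + c = (n + c) + 1 := by push_cast; ring
    rw [h, Real.Gamma_add_one (by positivity)]
    simp
    ring

lemma binom {c : ℝ} (hc : 0 < c) {t : ℝ} (h0 : 0 ≤ t) (h1 : t < 1) :
    HasSum (fun l : ℕ => Real.Gamma (l + c) / (l.factorial : ℝ) * t ^ l)
      (Real.Gamma c * (1 - t) ^ (-c)) := by
  have h := (Real.one_div_one_sub_rpow_hasFPowerSeriesOnBall_zero c).hasSum (y := t)
    (by simp [abs_of_nonneg h0, enorm_eq_nnnorm, ← NNReal.coe_lt_coe, h1])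
  have h2 := h.mul_left (Real.Gamma c)
  have hG := (Real.Gamma_pos_of_pos hc).ne'
  convert! h2 using 1
  · funext l
    have e : Ring.choose (c + l - 1) l = Real.Gamma (l + c) / Real.Gamma c / l.factorial := by
      have := Ring.factorial_nsmul_multichoose_eq_ascPochhammer c l
      rw [Polynomial.ascPochhammer_smeval_eq_eval, poch hc] at this
      rw [← this, Ring.choose]
      have hf : (l.factorial : ℝ) ≠ 0 := by positivity
      rw [nsmul_eq_mul, mul_div_cancel_left₀ _ hf]
      congr 1; ring
    simp [e]
    field_simp
  · simp [Real.rpow_neg (by linarith : 0 ≤ 1 - t)]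

lemma swap {f F : ℕ → ℕ → ℝ} {g G : ℕ → ℝ} (hfF : ∀ m q, |f m q| ≤ F m q)
    (hf : ∀ m, HasSum (f m) (g m)) (hF : ∀ m, HasSum (F m) (G m)) (hG : Summable G) :
    Summable (fun x : ℕ × ℕ => |f x.1 x.2|) ∧ Summable g ∧
      HasSum (fun x : ℕ × ℕ => f x.1 x.2) (∑' m, g m) := by
  have hF0 : ∀ m q, 0 ≤ F m q := fun m q => (abs_nonneg _).trans (hfF m q)
  have h1 : Summable (fun x : ℕ × ℕ => F x.1 x.2) := by
    rw [summable_prod_of_nonneg (fun x => hF0 _ _)]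
    refine ⟨fun m => (hF m).summable, ?_⟩
    simpa [fun m => (hF m).tsum_eq] using hG
  have h2 : Summable (fun x : ℕ × ℕ => |f x.1 x.2|) :=
    Summable.of_nonneg_of_le (fun _ => abs_nonneg _) (fun x => hfF _ _) h1
  have h3 : HasSum (fun x : ℕ × ℕ => f x.1 x.2) (∑' x : ℕ × ℕ, f x.1 x.2) := h2.of_abs.hasSum
  have h4 := h3.prod_fiberwise hf
  refine ⟨h2, h4.summable, ?_⟩
  rwa [h4.tsum_eq]

lemma swap' {f F : ℕ → ℕ → ℝ} {g G r : ℕ → ℝ} {s : ℝ} (hfF : ∀ m q, |f m q| ≤ F m q)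
    (hf : ∀ m, HasSum (f m) (g m)) (hF : ∀ m, HasSum (F m) (G m)) (hG : Summable G)
    (hg : HasSum g s) (hr : ∀ q, HasSum (fun m => f m q) (r q)) : HasSum r s := by
  obtain ⟨-, -, h⟩ := swap hfF hf hF hG
  rw [hg.tsum_eq] at h
  have h' : HasSum (fun x : ℕ × ℕ => f x.2 x.1) s := (Equiv.prodComm ℕ ℕ).hasSum_iff.mpr h
  exact h'.prod_fiberwise hr

lemma vand (b : ℕ) : ∀ (a : ℕ) (c : ℝ), 0 < c →
    ∑ i ∈ range (a + 1), (b.choose i : ℝ) / ((a - i).factorial * Real.Gamma (i + c))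
      = Real.Gamma (a + b + c) / (a.factorial * Real.Gamma (a + c) * Real.Gamma (b + c)) := by
  induction b with
  | zero =>
    intro a c hc
    rw [Finset.sum_range_succ']
    have := (Real.Gamma_pos_of_pos hc).ne'
    have := (gam_pos hc a).ne'
    simp
    field_simp
  | succ b ih =>
    intro a c hc
    rw [Finset.sum_range_succ']
    have g0 := (Real.Gamma_pos_of_pos hc).ne'
    have g1 := (gam_pos hc b).ne'
    have e1 : ((b + 1 : ℕ) : ℝ) + c = (b + c) + 1 := by push_cast; ring
    cases a with
    | zero =>
      have e2 : ((0 : ℕ) : ℝ) + ((b + 1 : ℕ) : ℝ) + c = ((b + 1 : ℕ) : ℝ) + c := by simp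
      rw [e2]
      have := (gam_pos hc (b + 1)).ne'
      simp only [Finset.range_zero, Finset.sum_empty]
      simp at this ⊢
      field_simp
    | succ a =>
      have h1 := ih (a + 1) c hc
      rw [Finset.sum_range_succ'] at h1
      have h2 := ih a (c + 1) (by linarith)
      have g2 := (gam_pos hc (a + 1)).ne'
      have e3 : (a : ℝ) + (c + 1) = ((a + 1 : ℕ) : ℝ) + c := by push_cast; ring
      have e4 : (b : ℝ) + (c + 1) = b + c + 1 := by ring
      have e5 : (a : ℝ) + b + (c + 1) = ((a + 1 : ℕ) : ℝ) + b + c := by push_cast; ring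
      have e6 : ((a + 1 : ℕ) : ℝ) + ((b + 1 : ℕ) : ℝ) + c
        = (((a + 1 : ℕ) : ℝ) + b + c) + 1 := by push_cast; ring
      rw [e3, e4, e5] at h2
      have hbc : (b : ℝ) + c ≠ 0 := by positivity
      rw [e6, e1]
      rw [Real.Gamma_add_one hbc] at h2 ⊢
      rw [Real.Gamma_add_one (by positivity)]
      have key : ∑ k ∈ range (a + 1), ((b + 1).choose (k + 1) : ℝ)
            / ((a + 1 - (k + 1)).factorial * Real.Gamma ((k + 1 : ℕ) + c))
          = ∑ k ∈ range (a + 1), (b.choose k : ℝ)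
              / ((a - k).factorial * Real.Gamma (k + (c + 1)))
          + ∑ k ∈ range (a + 1), (b.choose (k + 1) : ℝ)
            / ((a + 1 - (k + 1)).factorial * Real.Gamma ((k + 1 : ℕ) + c)) := by
        rw [← Finset.sum_add_distrib]
        refine Finset.sum_congr rfl fun k _ => ?_
        have e7 : (k : ℝ) + (c + 1) = ((k + 1 : ℕ) : ℝ) + c := by push_cast; ring
        rw [Nat.choose_succ_succ, e7, Nat.add_sub_add_right]
        push_cast
        ring
      rw [key, h2, add_assoc, Nat.choose_zero_right]
      rw [Nat.choose_zero_right] at h1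
      rw [h1, Nat.factorial_succ]
      push_cast
      push_cast at g2
      field_simp
      ring


lemma Hsum0 {c : ℝ} (hc : 0 < c) {t : ℝ} (h0 : 0 ≤ t) (h1 : t < 1) (N : ℕ) :
    HasSum (fun q : ℕ => Real.Gamma (q + c) / (q.factorial : ℝ) * (q.choose N : ℝ) * t ^ q)
      (Real.Gamma (N + c) / (N.factorial : ℝ) * (t / (1 - t)) ^ N * (1 - t) ^ (-c)) := by
  rw [← hasSum_nat_add_iff' N]
  have hz : ∑ i ∈ range N, Real.Gamma (i + c) / (i.factorial : ℝ) * (i.choose N : ℝ) * t ^ i = 0 := by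
    refine Finset.sum_eq_zero fun i hi => ?_
    rw [Nat.choose_eq_zero_of_lt (Finset.mem_range.1 hi)]
    simp
  rw [hz, sub_zero]
  have hp : 0 < 1 - t := by linarith
  have h := (binom (c := N + c) (by positivity) h0 h1).mul_left (t ^ N / (N.factorial : ℝ))
  convert! h using 1
  · funext l
    have e : (l : ℝ) + (N + c) = ((l + N : ℕ) : ℝ) + c := by push_cast; ring
    rw [e, Nat.add_choose, Nat.cast_div (Nat.factorial_mul_factorial_dvd_factorial_add l N)
      (by positivity)]
    have a1 : (l.factorial : ℝ) ≠ 0 := by positivity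
    have a2 : (N.factorial : ℝ) ≠ 0 := by positivity
    have a3 : ((l + N).factorial : ℝ) ≠ 0 := by positivity
    rw [pow_add]
    push_cast
    field_simp
  · rw [neg_add, Real.rpow_add hp, Real.rpow_neg hp.le (N : ℝ), Real.rpow_natCast, div_pow]
    field_simp

lemma choose_prod (q m n : ℕ) : ((q.choose m : ℝ) * q.choose n)
    = ∑ j ∈ range (n + 1), (m.choose j : ℝ) * ((m + (n - j)).choose m) * q.choose (m + (n - j)) := by
  norm_cast
  rcases lt_or_ge q m with h | h
  · rw [Nat.choose_eq_zero_of_lt h, zero_mul]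
    symm
    refine Finset.sum_eq_zero fun j _ => ?_
    rw [Nat.choose_eq_zero_of_lt (by omega : q < m + (n - j)), mul_zero]
  · obtain ⟨d, rfl⟩ := Nat.exists_eq_add_of_le h
    rw [Nat.add_choose_eq m d n, Finset.Nat.sum_antidiagonal_eq_sum_range_succ_mk, Finset.mul_sum]
    refine Finset.sum_congr rfl fun j _ => ?_
    have := Nat.choose_mul (n := m + d) (k := m + (n - j)) (s := m) (by omega)
    simp only [Nat.add_sub_cancel_left] at this
    rw [mul_assoc (m.choose j), mul_comm ((m + (n - j)).choose m), this]
    ring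

lemma coef {c : ℝ} (hc : 0 < c) (m n j : ℕ) (hj : j ≤ n) :
    (m.choose j : ℝ) * ((m + (n - j)).choose m) * (Real.Gamma ((m + (n - j) : ℕ) + c)
        / ((m + (n - j)).factorial : ℝ))
      = Real.Gamma (m + c) * Real.Gamma (n + c) / (n.factorial : ℝ) *
        ∑ k ∈ range (m + 1), (k.choose j : ℝ) * n.choose k
          / ((m - k).factorial * Real.Gamma (k + c)) := by
  rcases lt_or_ge m j with h | h
  · rw [Nat.choose_eq_zero_of_lt h, Finset.sum_eq_zero]
    · simp
    · intro k hk
      have := Finset.mem_range.1 hk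
      rw [Nat.choose_eq_zero_of_lt (by omega : k < j)]
      simp
  · obtain ⟨a, rfl⟩ := Nat.exists_eq_add_of_le h
    obtain ⟨b, rfl⟩ := Nat.exists_eq_add_of_le hj
    rw [add_assoc j a 1, Finset.sum_range_add, Finset.sum_eq_zero, zero_add]
    · have hv := vand b a (c + j) (by positivity)
      have e : ∑ x ∈ range (a + 1), ((j + x).choose j : ℝ) * (j + b).choose (j + x)
            / ((j + a - (j + x)).factorial * Real.Gamma ((j + x : ℕ) + c))
          = ((j + b).choose j : ℝ) * ∑ i ∈ range (a + 1), (b.choose i : ℝ)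
            / ((a - i).factorial * Real.Gamma (i + (c + j))) := by
        rw [Finset.mul_sum]
        refine Finset.sum_congr rfl fun i _ => ?_
        have := Nat.choose_mul (n := j + b) (k := j + i) (s := j) (by omega)
        simp only [Nat.add_sub_cancel_left] at this
        have t2 : ((j + b).choose (j + i) : ℝ) * (j + i).choose j
          = (j + b).choose j * b.choose i := by exact_mod_cast this
        rw [mul_comm ((j + i).choose j : ℝ), t2, Nat.add_sub_add_left]
        have e7 : (i : ℝ) + (c + j) = ((j + i : ℕ) : ℝ) + c := by push_cast; ring
        rw [e7]
        ring
      rw [e, hv, Nat.add_sub_cancel_left]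
      have e1 : (a : ℝ) + b + (c + j) = ((j + a + b : ℕ) : ℝ) + c := by push_cast; ring
      have e2 : (a : ℝ) + (c + j) = ((j + a : ℕ) : ℝ) + c := by push_cast; ring
      have e3 : (b : ℝ) + (c + j) = ((j + b : ℕ) : ℝ) + c := by push_cast; ring
      rw [e1, e2, e3]
      have g1 := (gam_pos hc (j + a)).ne'
      have g2 := (gam_pos hc (j + b)).ne'
      have c1 : ((j + a).choose j : ℝ) = (j + a).factorial / (j.factorial * a.factorial) :=
        Nat.cast_add_choose ℝ
      have c2 : ((j + b).choose j : ℝ) = (j + b).factorial / (j.factorial * b.factorial) :=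
        Nat.cast_add_choose ℝ
      have c3 : ((j + a + b).choose (j + a) : ℝ)
          = (j + a + b).factorial / ((j + a).factorial * b.factorial) := Nat.cast_add_choose ℝ
      rw [c1, c2, c3]
      have f1 : ((j + a).factorial : ℝ) ≠ 0 := by positivity
      have f2 : ((j + b).factorial : ℝ) ≠ 0 := by positivity
      have f3 : ((j + a + b).factorial : ℝ) ≠ 0 := by positivity
      field_simp
    · intro k hk
      rw [Nat.choose_eq_zero_of_lt (Finset.mem_range.1 hk)]
      simp

lemma expand (τ : ℝ) (m n k : ℕ) (hk : k ≤ m) :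
    τ ^ n * τ ^ (m - k) * (1 + τ) ^ k * (n.choose k : ℝ)
      = ∑ j ∈ range (n + 1), (k.choose j : ℝ) * n.choose k * τ ^ (m + (n - j)) := by
  rcases lt_or_ge n k with h | h
  · rw [Nat.choose_eq_zero_of_lt h]; simp
  · rw [add_pow]
    have : ∑ x ∈ range (k + 1), (1 : ℝ) ^ x * τ ^ (k - x) * (k.choose x : ℝ)
        = ∑ x ∈ range (n + 1), (1 : ℝ) ^ x * τ ^ (k - x) * (k.choose x : ℝ) := by
      refine Finset.sum_subset (Finset.range_mono (by omega)) fun x _ hx => ?_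
      rw [Nat.choose_eq_zero_of_lt (by simpa using hx)]; simp
    rw [this, Finset.mul_sum, Finset.sum_mul]
    refine Finset.sum_congr rfl fun j _ => ?_
    rcases lt_or_ge k j with h' | h'
    · rw [Nat.choose_eq_zero_of_lt h']; simp
    · have : m + (n - j) = n + (m - k) + (k - j) := by omega
      rw [this, pow_add, pow_add, one_pow]; ring

lemma Hsum {c : ℝ} (hc : 0 < c) {t : ℝ} (h0 : 0 ≤ t) (h1 : t < 1) (m n : ℕ) :
    HasSum (fun q : ℕ => Real.Gamma (q + c) / (q.factorial : ℝ) * (q.choose m * q.choose n : ℝ)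
        * t ^ q)
      ((1 - t) ^ (-c) * (Real.Gamma (m + c) * Real.Gamma (n + c) / (n.factorial : ℝ)) *
        ∑ k ∈ range (m + 1), (t / (1 - t)) ^ n * (t / (1 - t)) ^ (m - k) * (1 + t / (1 - t)) ^ k
          * (n.choose k : ℝ) / ((m - k).factorial * Real.Gamma (k + c))) := by
  have h := hasSum_sum (s := range (n + 1)) fun j (_ : j ∈ range (n + 1)) =>
    (Hsum0 hc h0 h1 (m + (n - j))).mul_left ((m.choose j : ℝ) * ((m + (n - j)).choose m))
  convert! h using 1
  · funext q
    rw [choose_prod, Finset.mul_sum, Finset.sum_mul]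
    refine Finset.sum_congr rfl fun j _ => ?_
    ring
  · set τ := t / (1 - t)
    have e : ∑ k ∈ range (m + 1), τ ^ n * τ ^ (m - k) * (1 + τ) ^ k
          * (n.choose k : ℝ) / ((m - k).factorial * Real.Gamma (k + c))
        = ∑ j ∈ range (n + 1), (∑ k ∈ range (m + 1), (k.choose j : ℝ) * n.choose k
          / ((m - k).factorial * Real.Gamma (k + c))) * τ ^ (m + (n - j)) := by
      simp_rw [Finset.sum_mul]
      rw [Finset.sum_comm]
      refine Finset.sum_congr rfl fun k hk => ?_
      rw [expand τ m n k (by have := Finset.mem_range.1 hk; omega), Finset.sum_div]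
      refine Finset.sum_congr rfl fun j _ => ?_
      ring
    rw [e, Finset.mul_sum]
    refine Finset.sum_congr rfl fun j hj => ?_
    have := coef hc m n j (by have := Finset.mem_range.1 hj; omega)
    linear_combination (-(1 - t) ^ (-c) * τ ^ (m + (n - j))) * this

lemma gam_lower {c : ℝ} (hc : 1 ≤ c) (n : ℕ) :
    Real.Gamma c * (n.factorial : ℝ) ≤ Real.Gamma (n + c) := by
  induction n with
  | zero => simp
  | succ n ih =>
    have h : ((n + 1 : ℕ) : ℝ) + c = (n + c) + 1 := by push_cast; ring
    rw [h, Real.Gamma_add_one (by positivity), Nat.factorial_succ]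
    have h1 : 0 < Real.Gamma c := Real.Gamma_pos_of_pos (by linarith)
    have h2 : ((n : ℝ) + 1) ≤ n + c := by linarith
    calc Real.Gamma c * ((((n + 1) * n.factorial : ℕ)) : ℝ)
        = (n + 1) * (Real.Gamma c * n.factorial) := by push_cast; ring
      _ ≤ (n + c) * Real.Gamma (n + c) := by gcongr

/-- `B c x = ∑ x^k / (Γ(k+c) k!)`. -/
noncomputable def B (c x : ℝ) : ℝ := ∑' k : ℕ, x ^ k / (Real.Gamma (k + c) * k.factorial)

lemma B_bound {c : ℝ} (hc : 1 ≤ c) (x : ℝ) (k : ℕ) :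
    ‖x ^ k / (Real.Gamma (k + c) * k.factorial)‖ ≤ (1 / Real.Gamma c) * (|x| ^ k / k.factorial) := by
  have h1 : 0 < Real.Gamma c := Real.Gamma_pos_of_pos (by linarith)
  have h2 := gam_lower hc k
  have h3 := gam_pos (by linarith : 0 < c) k
  have h4 : (1 : ℝ) ≤ k.factorial := by exact_mod_cast Nat.one_le_iff_ne_zero.2 (Nat.factorial_ne_zero k)
  have h5 : Real.Gamma c ≤ Real.Gamma (k + c) := by nlinarith
  rw [Real.norm_eq_abs, abs_div, abs_mul, abs_of_pos h3, abs_pow, Nat.abs_cast]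
  calc |x| ^ k / (Real.Gamma (k + c) * k.factorial) ≤ |x| ^ k / (Real.Gamma c * k.factorial) := by gcongr
    _ = _ := by field_simp

lemma B_summable {c : ℝ} (hc : 1 ≤ c) (x : ℝ) :
    Summable fun k : ℕ => ‖x ^ k / (Real.Gamma (k + c) * k.factorial)‖ :=
  Summable.of_nonneg_of_le (fun _ => norm_nonneg _) (B_bound hc x)
    ((Real.summable_pow_div_factorial |x|).mul_left _)

lemma exp_tsum (x : ℝ) : ∑' k : ℕ, x ^ k / (k.factorial : ℝ) = Real.exp x := by
  rw [Real.exp_eq_exp_ℝ, NormedSpace.exp_eq_tsum_div]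

lemma exp_summable (x : ℝ) : Summable fun k : ℕ => ‖x ^ k / (k.factorial : ℝ)‖ := by
  have := Real.summable_pow_div_factorial |x|
  simpa [abs_div, abs_pow] using this

lemma B_nonneg {c : ℝ} (hc : 1 ≤ c) {x : ℝ} (hx : 0 ≤ x) : 0 ≤ B c x :=
  tsum_nonneg fun k => by have := gam_pos (by linarith : 0 < c) k; positivity

lemma B_le {c : ℝ} (hc : 1 ≤ c) {x : ℝ} (hx : 0 ≤ x) : B c x ≤ (1 / Real.Gamma c) * Real.exp x := by
  rw [← exp_tsum, ← tsum_mul_left]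
  refine Summable.tsum_le_tsum (fun k => ?_) (B_summable hc x).of_norm
    ((Real.summable_pow_div_factorial x).mul_left _)
  have := B_bound hc x k
  rw [abs_of_nonneg hx] at this
  exact (Real.le_norm_self _).trans this

/-- Laguerre polynomial at `-u` with parameter `c - 1`. -/
noncomputable def lp (c : ℝ) (q : ℕ) (u : ℝ) : ℝ :=
  ∑ m ∈ range (q + 1), Real.Gamma (q + c) / (Real.Gamma (m + c) * q.factorial) * q.choose m * u ^ m

lemma lp_eq (α : ℝ) (q : ℕ) (x : ℝ) : laguerrePoly α q x = lp (α + 1) q (-x) := by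
  unfold laguerrePoly lp
  refine Finset.sum_congr rfl fun m hm => ?_
  have hm' : m ≤ q := by have := Finset.mem_range.1 hm; omega
  rw [Nat.cast_choose ℝ hm', ← add_assoc, ← add_assoc]
  have : (q.factorial : ℝ) ≠ 0 := by positivity
  field_simp

lemma lp_hasSum (c : ℝ) (q : ℕ) (u : ℝ) :
    HasSum (fun m : ℕ => Real.Gamma (q + c) / (Real.Gamma (m + c) * q.factorial) * q.choose m * u ^ m)
      (lp c q u) := by
  refine hasSum_sum_of_ne_finset_zero fun m hm => ?_
  rw [Nat.choose_eq_zero_of_lt (by simpa using hm)]; simp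

lemma lp_summable {c : ℝ} (hc : 0 < c) (q : ℕ) (u : ℝ) :
    Summable (fun m : ℕ => ‖Real.Gamma (q + c) / (Real.Gamma (m + c) * q.factorial) * q.choose m * u ^ m‖) := by
  refine (lp_hasSum c q |u|).summable.congr fun m => ?_
  have := gam_pos hc q
  have := gam_pos hc m
  simp [abs_mul, abs_div, abs_of_pos, *]

lemma lp_abs {c : ℝ} (hc : 0 < c) (q : ℕ) (u : ℝ) : |lp c q u| ≤ lp c q |u| := by
  unfold lp
  refine (Finset.abs_sum_le_sum_abs _ _).trans (le_of_eq ?_)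
  refine Finset.sum_congr rfl fun m _ => ?_
  have := gam_pos hc q
  have := gam_pos hc m
  simp [abs_mul, abs_div, abs_of_pos, *]

lemma stepB {c : ℝ} (hc : 1 ≤ c) (s X : ℝ) :
    HasSum (fun n : ℕ => s ^ n / Real.Gamma (n + c) * lp c n X) (B c (s * X) * Real.exp s) := by
  have h := hasSum_sum_range_mul_of_summable_norm (B_summable hc (s * X)) (exp_summable s)
  rw [exp_tsum] at h
  convert! h using 1
  funext n
  unfold lp
  rw [Finset.mul_sum]
  refine Finset.sum_congr rfl fun m hm => ?_
  have hm' : m ≤ n := by have := Finset.mem_range.1 hm; omega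
  have g1 := (gam_pos (by linarith : 0 < c) n).ne'
  have g2 := (gam_pos (by linarith : 0 < c) m).ne'
  have : (n.factorial : ℝ) ≠ 0 := by positivity
  rw [Nat.cast_choose ℝ hm', mul_pow]
  have e : s ^ n = s ^ m * s ^ (n - m) := by rw [← pow_add]; congr 1; omega
  rw [e]
  field_simp

lemma stepA_g {c : ℝ} (hc : 0 < c) (t : ℝ) (n : ℕ) (u : ℝ) :
    HasSum (fun m : ℕ => u ^ m / Real.Gamma (m + c) *
      ((1 - t) ^ (-c) * (Real.Gamma (m + c) * Real.Gamma (n + c) / (n.factorial : ℝ)) *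
        ∑ k ∈ range (m + 1), (t / (1 - t)) ^ n * (t / (1 - t)) ^ (m - k) * (1 + t / (1 - t)) ^ k
          * (n.choose k : ℝ) / ((m - k).factorial * Real.Gamma (k + c))))
      ((t / (1 - t)) ^ n * (1 - t) ^ (-c) *
        (lp c n (u * (1 + t / (1 - t))) * Real.exp (u * (t / (1 - t))))) := by
  set τ := t / (1 - t)
  have h := (hasSum_sum_range_mul_of_summable_norm (lp_summable hc n (u * (1 + τ)))
    (exp_summable (u * τ))).mul_left (τ ^ n * (1 - t) ^ (-c))
  rw [exp_tsum, (lp_hasSum c n _).tsum_eq] at h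
  convert! h using 1
  funext m
  rw [Finset.mul_sum, Finset.mul_sum, Finset.mul_sum]
  refine Finset.sum_congr rfl fun k hk => ?_
  have hm' : k ≤ m := by have := Finset.mem_range.1 hk; omega
  have g1 := (gam_pos hc n).ne'
  have g2 := (gam_pos hc m).ne'
  have g3 := (gam_pos hc k).ne'
  have : (n.factorial : ℝ) ≠ 0 := by positivity
  rw [mul_pow, mul_pow]
  have e : u ^ m = u ^ k * u ^ (m - k) := by rw [← pow_add]; congr 1; omega
  rw [e]
  field_simp

lemma stepA {c : ℝ} (hc : 0 < c) {t : ℝ} (h0 : 0 ≤ t) (h1 : t < 1) (n : ℕ) (u : ℝ) :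
    HasSum (fun q : ℕ => (q.choose n : ℝ) * lp c q u * t ^ q)
      ((t / (1 - t)) ^ n * (1 - t) ^ (-c) *
        (lp c n (u * (1 + t / (1 - t))) * Real.exp (u * (t / (1 - t))))) := by
  refine swap' (f := fun m q => u ^ m / Real.Gamma (m + c) *
      (Real.Gamma (q + c) / (q.factorial : ℝ) * (q.choose m * q.choose n : ℝ) * t ^ q))
    (F := fun m q => |u| ^ m / Real.Gamma (m + c) *
      (Real.Gamma (q + c) / (q.factorial : ℝ) * (q.choose m * q.choose n : ℝ) * t ^ q))
    ?_ (fun m => (Hsum hc h0 h1 m n).mul_left _) (fun m => (Hsum hc h0 h1 m n).mul_left _)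
    (stepA_g hc t n |u|).summable (stepA_g hc t n u) ?_
  · intro m q
    have := gam_pos hc q
    have := gam_pos hc m
    apply le_of_eq
    simp [abs_mul, abs_div, abs_of_pos, *, abs_of_nonneg h0]
  · intro q
    have h := (lp_hasSum c q u).mul_left ((q.choose n : ℝ) * t ^ q)
    convert! h using 1
    · funext m
      have g2 := (gam_pos hc m).ne'
      field_simp
    · ring

/-- Hardy–Hille formula. -/
lemma hardyHille {c : ℝ} (hc : 1 ≤ c) {t : ℝ} (h0 : 0 ≤ t) (h1 : t < 1) (u v : ℝ) :
    HasSum (fun q : ℕ => (q.factorial : ℝ) / Real.Gamma (q + c) * lp c q u * lp c q v * t ^ q)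
      ((1 - t) ^ (-c) * Real.exp ((u + v) * (t / (1 - t))) * B c (u * v * (t / (1 - t) ^ 2))) := by
  have hc0 : 0 < c := by linarith
  have hp : 0 < 1 - t := by linarith
  have hg : ∀ u v : ℝ, HasSum (fun n : ℕ => v ^ n / Real.Gamma (n + c) *
      ((t / (1 - t)) ^ n * (1 - t) ^ (-c) *
        (lp c n (u * (1 + t / (1 - t))) * Real.exp (u * (t / (1 - t))))))
      ((1 - t) ^ (-c) * Real.exp ((u + v) * (t / (1 - t))) * B c (u * v * (t / (1 - t) ^ 2))) := by
    intro u v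
    have h := (stepB hc (v * (t / (1 - t))) (u * (1 + t / (1 - t)))).mul_left
      ((1 - t) ^ (-c) * Real.exp (u * (t / (1 - t))))
    convert! h using 1
    · funext n
      rw [mul_pow]; ring
    · have e : v * (t / (1 - t)) * (u * (1 + t / (1 - t))) = u * v * (t / (1 - t) ^ 2) := by
        field_simp; ring
      rw [e, add_mul, Real.exp_add]; ring
  refine swap' (f := fun n q => v ^ n / Real.Gamma (n + c) *
      ((q.choose n : ℝ) * lp c q u * t ^ q))
    (F := fun n q => |v| ^ n / Real.Gamma (n + c) *
      ((q.choose n : ℝ) * lp c q |u| * t ^ q))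
    ?_ (fun n => (stepA hc0 h0 h1 n u).mul_left _) (fun n => (stepA hc0 h0 h1 n |u|).mul_left _)
    (hg |u| |v|).summable (hg u v) ?_
  · intro m q
    have := gam_pos hc0 m
    have h2 := lp_abs hc0 q u
    simp only [abs_mul, abs_div, abs_of_pos this, abs_pow, Nat.abs_cast, abs_of_nonneg h0]
    gcongr
  · intro q
    have h := (lp_hasSum c q v).mul_left ((q.factorial : ℝ) / Real.Gamma (q + c) * lp c q u * t ^ q)
    convert! h using 1
    · funext m
      have g1 := (gam_pos hc0 q).ne'
      have g2 := (gam_pos hc0 m).ne'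
      have : (q.factorial : ℝ) ≠ 0 := by positivity
      field_simp
    · ring

lemma binom_bound {c : ℝ} (hc : 0 < c) (n : ℕ) :
    Real.Gamma (n + c) / (Real.Gamma c * n.factorial) ≤ 2 ^ n * 2 ^ c := by
  have h := binom hc (t := 1 / 2) (by norm_num) (by norm_num)
  have hG := Real.Gamma_pos_of_pos hc
  have h2 := le_hasSum h n fun m _ => by
    have := gam_pos hc m
    positivity
  have e : ((1 : ℝ) - 1 / 2) ^ (-c) = 2 ^ c := by
    rw [show (1 : ℝ) - 1 / 2 = 2⁻¹ by norm_num, Real.inv_rpow (by norm_num), Real.rpow_neg (by norm_num), inv_inv]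
  rw [e, one_div, inv_pow] at h2
  rw [div_le_iff₀ (by positivity)]
  rw [← div_eq_mul_inv, div_div, div_le_iff₀ (by positivity)] at h2
  linarith

lemma jacobi_bound {α β : ℝ} (hα : -1 < α) (hβ : -1 < β) (j : ℕ) {x : ℝ} (h1 : -1 ≤ x) (h2 : x ≤ 1) :
    |jacobiPoly α β j x| ≤ (2 : ℝ) ^ (α + 1) * 2 ^ (β + 1) * 8 ^ j := by
  unfold jacobiPoly
  have hterm : ∀ s ∈ range (j + 1),
    |(Real.Gamma ((j : ℝ) + α + 1) / (Real.Gamma ((s : ℝ) + α + 1) * (Nat.factorial (j - s)))) *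
    (Real.Gamma ((j : ℝ) + β + 1) / (Real.Gamma ((j : ℝ) - s + β + 1) * (Nat.factorial s))) *
    ((x - 1) / 2) ^ s * ((x + 1) / 2) ^ (j - s)| ≤ (2 : ℝ) ^ (α + 1) * 2 ^ (β + 1) * 4 ^ j := by
    intro s hs
    have hs' : s ≤ j := by have := Finset.mem_range.1 hs; omega
    obtain ⟨d, rfl⟩ := Nat.exists_eq_add_of_le hs'
    have c1 : 0 < (s : ℝ) + α + 1 := by have : (0 : ℝ) ≤ s := by positivity
                                        linarith
    have c2 : 0 < (d : ℝ) + β + 1 := by have : (0 : ℝ) ≤ d := by positivity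
                                        linarith
    have b1 := binom_bound c1 d
    have b2 := binom_bound c2 s
    have e1 : (d : ℝ) + (s + α + 1) = ((s + d : ℕ) : ℝ) + α + 1 := by push_cast; ring
    have e2 : (s : ℝ) + (d + β + 1) = ((s + d : ℕ) : ℝ) + β + 1 := by push_cast; ring
    have e3 : ((s + d : ℕ) : ℝ) - s + β + 1 = d + β + 1 := by push_cast; ring
    rw [e1] at b1
    rw [e2] at b2
    rw [e3, Nat.add_sub_cancel_left]
    have p1 : 0 < Real.Gamma (((s + d : ℕ) : ℝ) + α + 1) := by
      rw [← e1]; exact gam_pos c1 d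
    have p2 : 0 < Real.Gamma (((s + d : ℕ) : ℝ) + β + 1) := by
      rw [← e2]; exact gam_pos c2 s
    have p3 := Real.Gamma_pos_of_pos c1
    have p4 := Real.Gamma_pos_of_pos c2
    have x1 : |((x - 1) / 2) ^ s| ≤ 1 := by
      rw [abs_pow]; exact pow_le_one₀ (abs_nonneg _) (abs_le.2 ⟨by linarith, by linarith⟩)
    have x2 : |((x + 1) / 2) ^ d| ≤ 1 := by
      rw [abs_pow]; exact pow_le_one₀ (abs_nonneg _) (abs_le.2 ⟨by linarith, by linarith⟩)
    rw [abs_mul, abs_mul, abs_mul, abs_of_pos (by positivity), abs_of_pos (by positivity)]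
    calc _ ≤ (2 ^ d * 2 ^ ((s : ℝ) + α + 1)) * (2 ^ s * 2 ^ ((d : ℝ) + β + 1)) * 1 * 1 := by
            gcongr
      _ = (2 : ℝ) ^ (α + 1) * 2 ^ (β + 1) * 4 ^ (s + d) := by
        rw [add_assoc (s : ℝ), add_assoc (d : ℝ), Real.rpow_add (by norm_num), Real.rpow_add (by norm_num) (d : ℝ),
          Real.rpow_natCast, Real.rpow_natCast, show (4 : ℝ) = 2 * 2 by norm_num, mul_pow, pow_add]
        ring
  refine (Finset.abs_sum_le_sum_abs _ _).trans ((Finset.sum_le_sum hterm).trans ?_)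
  rw [Finset.sum_const, Finset.card_range, nsmul_eq_mul]
  have h3 : ((j + 1 : ℕ) : ℝ) ≤ 2 ^ j := by exact_mod_cast Nat.lt_two_pow_self
  calc _ ≤ (2 : ℝ) ^ j * ((2 : ℝ) ^ (α + 1) * 2 ^ (β + 1) * 4 ^ j) := by gcongr
    _ = _ := by rw [show (8 : ℝ) = 2 * 4 by norm_num, mul_pow]; ring

lemma hyp_eq {c : ℝ} (x : ℝ) : hyp0F1 c x = Real.Gamma c * B c x := by
  unfold hyp0F1 B
  rw [← tsum_mul_left]
  refine tsum_congr fun k => ?_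
  rw [add_comm c]
  ring

end HH

/-- Mehler-type generating identity for the `W`-invariant generalized
Hermite polynomials of the even dihedral system `I₂(2p)`: with `γ = p(k₀+k₁)`,
`b_j = 2jp + γ`, `z ∈ (0,1)`, `ρ, r ≥ 0`, `φ, θ ∈ [0, π/(2p)]`, the double series
`∑_{j,q} [q!/Γ(b_j+q+1)] L_q^{(b_j)}(ρ²/2) L_q^{(b_j)}(r²/2)
  P_j(cos 2pφ) P_j(cos 2pθ) (ρr/2)^{2jp} z^{2(q+jp)}` (with `P_j = P_j^{(k₀−1/2,k₁−1/2)}`)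
converges absolutely and equals
`(1−z²)^{−γ−1} e^{−z²(ρ²+r²)/(2(1−z²))} ∑_j [1/Γ(b_j+1)] (zρr/(2(1−z²)))^{2jp}
  ₀F₁(b_j+1; z²ρ²r²/(4(1−z²)²)) P_j(cos 2pφ) P_j(cos 2pθ)`,
the latter series also converging absolutely. -/
theorem stmt_12 (p : ℕ) (hp : 1 ≤ p) (k₀ k₁ : ℝ) (hk₀ : 0 ≤ k₀) (hk₁ : 0 ≤ k₁)
    (γ : ℝ) (hγ : γ = p * (k₀ + k₁)) (b : ℕ → ℝ) (hb : ∀ j : ℕ, b j = 2 * j * p + γ)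
    (z : ℝ) (hz : z ∈ Set.Ioo (0 : ℝ) 1) (ρ r φ θ : ℝ) (hρ : 0 ≤ ρ) (hr : 0 ≤ r)
    (hφ : φ ∈ Set.Icc 0 (π / (2 * p))) (hθ : θ ∈ Set.Icc 0 (π / (2 * p)))
    (T : ℕ × ℕ → ℝ)
    (hT : ∀ j q : ℕ, T (j, q)
      = (Nat.factorial q / Real.Gamma (b j + q + 1))
          * laguerrePoly (b j) q (ρ ^ 2 / 2) * laguerrePoly (b j) q (r ^ 2 / 2)
          * jacobiPoly (k₀ - 1 / 2) (k₁ - 1 / 2) j (Real.cos (2 * p * φ))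
          * jacobiPoly (k₀ - 1 / 2) (k₁ - 1 / 2) j (Real.cos (2 * p * θ))
          * (ρ * r / 2) ^ (2 * j * p) * z ^ (2 * (q + j * p)))
    (S : ℕ → ℝ)
    (hS : ∀ j : ℕ, S j
      = (1 / Real.Gamma (b j + 1)) * (z * ρ * r / (2 * (1 - z ^ 2))) ^ (2 * j * p)
          * hyp0F1 (b j + 1) (z ^ 2 * ρ ^ 2 * r ^ 2 / (4 * (1 - z ^ 2) ^ 2))
          * jacobiPoly (k₀ - 1 / 2) (k₁ - 1 / 2) j (Real.cos (2 * p * φ))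
          * jacobiPoly (k₀ - 1 / 2) (k₁ - 1 / 2) j (Real.cos (2 * p * θ))) :
    Summable (fun x : ℕ × ℕ => |T x|) ∧ Summable (fun j : ℕ => |S j|)
    ∧ ∑' x : ℕ × ℕ, T x
        = (1 - z ^ 2) ^ (-γ - 1) * Real.exp (-(z ^ 2 * (ρ ^ 2 + r ^ 2)) / (2 * (1 - z ^ 2)))
            * ∑' j : ℕ, S j := by

  obtain ⟨hz0, hz1⟩ := hz
  have hγ0 : 0 ≤ γ := by rw [hγ]; positivity
  have hbe : ∀ j, b j + 1 = ((2 * j * p : ℕ) : ℝ) + (γ + 1) := fun j => by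
    rw [hb]; push_cast; ring
  have hc : ∀ j, 1 ≤ b j + 1 := fun j => by
    rw [hbe]; have : (0 : ℝ) ≤ ((2 * j * p : ℕ) : ℝ) := by positivity
    linarith
  set t := z ^ 2 with ht
  have ht0 : 0 ≤ t := by positivity
  have ht1 : t < 1 := by rw [ht]; nlinarith
  have hp1 : 0 < 1 - t := by linarith
  set P : ℕ → ℝ := fun j => jacobiPoly (k₀ - 1 / 2) (k₁ - 1 / 2) j (Real.cos (2 * p * φ))
          * jacobiPoly (k₀ - 1 / 2) (k₁ - 1 / 2) j (Real.cos (2 * p * θ)) with hP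
  set w := z * ρ * r / (2 * (1 - t)) with hw
  have hw0 : 0 ≤ w := by positivity
  set X := t * ρ ^ 2 * r ^ 2 / (4 * (1 - t) ^ 2) with hX
  have hX0 : 0 ≤ X := by positivity
  have hS' : ∀ j, S j = w ^ (2 * j * p) * HH.B (b j + 1) X * P j := fun j => by
    rw [hS, HH.hyp_eq, hP]
    have := (Real.Gamma_pos_of_pos (by linarith [hc j] : 0 < b j + 1)).ne'
    field_simp
  have hT' : ∀ j q, T (j, q) = (P j * (ρ * r / 2) ^ (2 * j * p) * z ^ (2 * j * p)) *
      ((q.factorial : ℝ) / Real.Gamma (q + (b j + 1)) * HH.lp (b j + 1) q (-(ρ ^ 2 / 2))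
        * HH.lp (b j + 1) q (-(r ^ 2 / 2)) * t ^ q) := fun j q => by
    rw [hT, HH.lp_eq, HH.lp_eq, hP]
    have e1 : b j + q + 1 = q + (b j + 1) := by ring
    have e2 : z ^ (2 * (q + j * p)) = z ^ (2 * j * p) * t ^ q := by
      rw [ht, ← pow_mul, ← pow_add]; congr 1; ring
    rw [e1, e2]
    ring
  have hpow : ∀ j, (ρ * r / 2) ^ (2 * j * p) * z ^ (2 * j * p) * (1 - t) ^ (-(b j + 1))
      = (1 - t) ^ (-γ - 1) * w ^ (2 * j * p) := fun j => by
    have e1 : -(b j + 1) = (-γ - 1) + -((2 * j * p : ℕ) : ℝ) := by rw [hbe]; ring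
    have e2 : w = (ρ * r / 2) * z * (1 - t)⁻¹ := by rw [hw]; field_simp
    rw [e1, Real.rpow_add hp1, Real.rpow_neg hp1.le ((2 * j * p : ℕ) : ℝ), Real.rpow_natCast, e2, mul_pow, mul_pow, inv_pow]
    ring
  have hSs : Summable (fun j : ℕ => |S j|) := by
    set K : ℝ := (2 : ℝ) ^ (k₀ - 1 / 2 + 1) * 2 ^ (k₁ - 1 / 2 + 1) with hK
    have hK0 : 0 ≤ K := by positivity
    have hG1 : 0 < Real.Gamma (γ + 1) := Real.Gamma_pos_of_pos (by linarith)
    refine Summable.of_nonneg_of_le (fun _ => abs_nonneg _) (fun j => ?_)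
      ((Real.summable_pow_div_factorial (64 * w ^ (2 * p))).mul_left
        (K ^ 2 * Real.exp X / Real.Gamma (γ + 1)))
    have hPj : |P j| ≤ (K * 8 ^ j) * (K * 8 ^ j) := by
      rw [hP, abs_mul]
      exact mul_le_mul
        (HH.jacobi_bound (by linarith) (by linarith) j (Real.neg_one_le_cos _) (Real.cos_le_one _))
        (HH.jacobi_bound (by linarith) (by linarith) j (Real.neg_one_le_cos _) (Real.cos_le_one _))
        (abs_nonneg _) (by positivity)
    have hB : HH.B (b j + 1) X ≤ 1 / (Real.Gamma (γ + 1) * j.factorial) * Real.exp X := by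
      refine (HH.B_le (hc j) hX0).trans ?_
      have h1 : Real.Gamma (γ + 1) * j.factorial ≤ Real.Gamma (b j + 1) := by
        rw [hbe]
        refine le_trans ?_ (HH.gam_lower (by linarith) _)
        have : (j.factorial : ℝ) ≤ (2 * j * p).factorial := by
          exact_mod_cast Nat.factorial_le (by nlinarith)
        gcongr
      gcongr
    rw [hS', abs_mul, abs_mul, abs_of_nonneg (HH.B_nonneg (hc j) hX0), abs_of_nonneg (by positivity)]
    calc _ ≤ w ^ (2 * j * p) * (1 / (Real.Gamma (γ + 1) * j.factorial) * Real.exp X)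
          * ((K * 8 ^ j) * (K * 8 ^ j)) := by gcongr
      _ = _ := by
        have e64 : (64 * w ^ (2 * p)) ^ j = 8 ^ j * 8 ^ j * w ^ (2 * j * p) := by
          rw [mul_pow, ← pow_mul, show (64 : ℝ) = 8 * 8 by norm_num, mul_pow,
            show 2 * p * j = 2 * j * p by ring]
        rw [e64]
        field_simp
  have hsum : ∀ (M u v : ℝ) (j : ℕ), u * v = ρ ^ 2 / 2 * (r ^ 2 / 2) →
      HasSum (fun q : ℕ => (M * (ρ * r / 2) ^ (2 * j * p) * z ^ (2 * j * p)) *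
      ((q.factorial : ℝ) / Real.Gamma (q + (b j + 1)) * HH.lp (b j + 1) q u
        * HH.lp (b j + 1) q v * t ^ q)) ((1 - t) ^ (-γ - 1) * Real.exp ((u + v) * (t / (1 - t))) *
          (w ^ (2 * j * p) * HH.B (b j + 1) X * M)) := by
    intro M u v j huv
    have h := (HH.hardyHille (hc j) ht0 ht1 u v).mul_left
      (M * (ρ * r / 2) ^ (2 * j * p) * z ^ (2 * j * p))
    convert! h using 1
    have e : u * v * (t / (1 - t) ^ 2) = X := by rw [huv, hX]; field_simp; ring
    rw [e]
    linear_combination (-M * Real.exp ((u + v) * (t / (1 - t))) * HH.B (b j + 1) X) * hpow j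
  have hmain := HH.swap (f := fun j q => T (j, q))
    (F := fun j q => (|P j| * (ρ * r / 2) ^ (2 * j * p) * z ^ (2 * j * p)) *
      ((q.factorial : ℝ) / Real.Gamma (q + (b j + 1)) * HH.lp (b j + 1) q (ρ ^ 2 / 2)
        * HH.lp (b j + 1) q (r ^ 2 / 2) * t ^ q))
    (g := fun j => (1 - t) ^ (-γ - 1) * Real.exp ((-(ρ ^ 2 / 2) + -(r ^ 2 / 2)) * (t / (1 - t))) * S j)
    (G := fun j => (1 - t) ^ (-γ - 1) * Real.exp ((ρ ^ 2 / 2 + r ^ 2 / 2) * (t / (1 - t))) * |S j|)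
    (by
      intro j q
      have hcj : 0 < b j + 1 := by linarith [hc j]
      have h1 := HH.lp_abs hcj q (-(ρ ^ 2 / 2))
      have h2 := HH.lp_abs hcj q (-(r ^ 2 / 2))
      rw [abs_neg, abs_of_nonneg (by positivity : 0 ≤ ρ ^ 2 / 2)] at h1
      rw [abs_neg, abs_of_nonneg (by positivity : 0 ≤ r ^ 2 / 2)] at h2
      have h3 := HH.gam_pos hcj q
      have h4 : 0 ≤ HH.lp (b j + 1) q (ρ ^ 2 / 2) := (abs_nonneg _).trans h1
      have h5 : 0 ≤ ρ * r / 2 := by positivity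
      rw [hT']
      simp only [abs_mul, abs_div, abs_pow, Nat.abs_cast, abs_of_pos h3, abs_of_nonneg ht0,
        abs_of_nonneg hρ, abs_of_nonneg hr, abs_of_pos hz0, abs_of_pos (two_pos : (0 : ℝ) < 2)]
      gcongr)
    (fun j => by
      have := hsum (P j) (-(ρ ^ 2 / 2)) (-(r ^ 2 / 2)) j (by ring)
      rw [← hS'] at this
      convert! this using 1; funext q; exact hT' j q)
    (fun j => by
      have := hsum |P j| (ρ ^ 2 / 2) (r ^ 2 / 2) j rfl
      have eS : |S j| = w ^ (2 * j * p) * HH.B (b j + 1) X * |P j| := by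
        rw [hS', abs_mul, abs_of_nonneg (mul_nonneg (by positivity) (HH.B_nonneg (hc j) hX0))]
      rw [eS]
      exact this)
    (hSs.mul_left _)
  refine ⟨hmain.1, hSs, ?_⟩
  have h := hmain.2.2.tsum_eq
  rw [tsum_mul_left] at h
  have e : (-(ρ ^ 2 / 2) + -(r ^ 2 / 2)) * (t / (1 - t)) = -(t * (ρ ^ 2 + r ^ 2)) / (2 * (1 - t)) := by
    field_simp; ring
  rw [e] at h
  exact h
end

section
/- Let p ≥ 1 be an integer, k₀, k₁ ≥ 0, γ = p(k₀+k₁), and let j be a non-negative integer. Define on the open wedge C = {(r cos θ, r sin θ) : r > 0, 0 < θ < π/(2p)} the function h(r cos θ, r sin θ) = r^{2jp} P_j^{(k₀−1/2,k₁−1/2)}(cos 2pθ) and the weight ω(r cos θ, r sin θ) = r^{γ}(sin pθ)^{k₀}(cos pθ)^{k₁}. Then h satisfies Δh(x) + 2⟨∇h(x), ∇ log ω(x)⟩ = 0 for every x ∈ C; that is, h is harmonic for the W-invariant Dunkl Laplacian of the even dihedral system I₂(2p). -/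
open Real Finset

/-- First partial derivative (in the first coordinate) of a function on `ℝ²`. -/
noncomputable def pd1 (f : ℝ × ℝ → ℝ) (x : ℝ × ℝ) : ℝ :=
  deriv (fun s => f (s, x.2)) x.1

/-- First partial derivative (in the second coordinate) of a function on `ℝ²`. -/
noncomputable def pd2 (f : ℝ × ℝ → ℝ) (x : ℝ × ℝ) : ℝ :=
  deriv (fun s => f (x.1, s)) x.2

open Filter Topology

lemma pd1_congr {f g : ℝ × ℝ → ℝ} {q : ℝ × ℝ} (hfg : f =ᶠ[𝓝 q] g) : pd1 f q = pd1 g q := by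
  unfold pd1
  apply EventuallyEq.deriv_eq
  have hc : Tendsto (fun s : ℝ => (s, q.2)) (𝓝 q.1) (𝓝 q) := by
    have : ContinuousAt (fun s : ℝ => (s, q.2)) q.1 := by fun_prop
    exact this
  exact hc.eventually hfg

lemma pd2_congr {f g : ℝ × ℝ → ℝ} {q : ℝ × ℝ} (hfg : f =ᶠ[𝓝 q] g) : pd2 f q = pd2 g q := by
  unfold pd2
  apply EventuallyEq.deriv_eq
  have hc : Tendsto (fun s : ℝ => (q.1, s)) (𝓝 q.2) (𝓝 q) := by
    have : ContinuousAt (fun s : ℝ => (q.1, s)) q.2 := by fun_prop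
    exact this
  exact hc.eventually hfg

lemma pd1_congr' {f g : ℝ × ℝ → ℝ} {q : ℝ × ℝ} (hfg : f =ᶠ[𝓝 q] g) : pd1 f =ᶠ[𝓝 q] pd1 g := by
  filter_upwards [eventually_eventually_nhds.2 hfg] with y hy using pd1_congr hy

lemma pd2_congr' {f g : ℝ × ℝ → ℝ} {q : ℝ × ℝ} (hfg : f =ᶠ[𝓝 q] g) : pd2 f =ᶠ[𝓝 q] pd2 g := by
  filter_upwards [eventually_eventually_nhds.2 hfg] with y hy using pd2_congr hy

/-- Real part of `(x+iy)^n`. -/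
noncomputable def zre (n : ℕ) (q : ℝ × ℝ) : ℝ := ((⟨q.1, q.2⟩ : ℂ) ^ n).re
/-- Imaginary part of `(x+iy)^n`. -/
noncomputable def zim (n : ℕ) (q : ℝ × ℝ) : ℝ := ((⟨q.1, q.2⟩ : ℂ) ^ n).im

lemma hasDerivAt_z1 (n : ℕ) (x y : ℝ) :
    HasDerivAt (fun s : ℝ => (⟨s, y⟩ : ℂ) ^ n) (n * (⟨x, y⟩ : ℂ) ^ (n - 1)) x := by
  have h0 : HasDerivAt (fun s : ℝ => (s : ℂ) + y * Complex.I) 1 x :=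
    (Complex.ofRealCLM.hasDerivAt (x := x)).add_const _
  have h1 := h0.pow n
  simpa [← Complex.mk_eq_add_mul_I, Pi.pow_def] using h1

lemma hasDerivAt_z2 (n : ℕ) (x y : ℝ) :
    HasDerivAt (fun s : ℝ => (⟨x, s⟩ : ℂ) ^ n) (n * (⟨x, y⟩ : ℂ) ^ (n - 1) * Complex.I) y := by
  have h0 : HasDerivAt (fun s : ℝ => (x : ℂ) + s * Complex.I) (1 * Complex.I) y :=
    ((Complex.ofRealCLM.hasDerivAt (x := y)).mul_const _).const_add _
  have h1 := h0.pow n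
  simpa [← Complex.mk_eq_add_mul_I, Pi.pow_def] using h1

lemma hre {f : ℝ → ℂ} {f' : ℂ} {x : ℝ} (hf : HasDerivAt f f' x) :
    HasDerivAt (fun s => (f s).re) f'.re x :=
  Complex.reCLM.hasFDerivAt.comp_hasDerivAt x hf

lemma him {f : ℝ → ℂ} {f' : ℂ} {x : ℝ} (hf : HasDerivAt f f' x) :
    HasDerivAt (fun s => (f s).im) f'.im x :=
  Complex.imCLM.hasFDerivAt.comp_hasDerivAt x hf

lemma zre1 (n : ℕ) (x y : ℝ) :
    HasDerivAt (fun s => zre n (s, y)) (n * zre (n - 1) (x, y)) x := by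
  have := hre (hasDerivAt_z1 n x y)
  simpa [zre] using this

lemma zim1 (n : ℕ) (x y : ℝ) :
    HasDerivAt (fun s => zim n (s, y)) (n * zim (n - 1) (x, y)) x := by
  have := him (hasDerivAt_z1 n x y)
  simpa [zim] using this

lemma zre2 (n : ℕ) (x y : ℝ) :
    HasDerivAt (fun s => zre n (x, s)) (-(n * zim (n - 1) (x, y))) y := by
  have := hre (hasDerivAt_z2 n x y)
  simpa [zre, zim] using this

lemma zim2 (n : ℕ) (x y : ℝ) :
    HasDerivAt (fun s => zim n (x, s)) (n * zre (n - 1) (x, y)) y := by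
  have := him (hasDerivAt_z2 n x y)
  simpa [zre, zim] using this

lemma zre_polar (n : ℕ) (r θ : ℝ) : zre n (r * cos θ, r * sin θ) = r ^ n * cos (n * θ) := by
  have : (⟨r * cos θ, r * sin θ⟩ : ℂ) = r * (Complex.cos θ + Complex.sin θ * Complex.I) := by
    apply Complex.ext <;> simp [← Complex.ofReal_cos, ← Complex.ofReal_sin]
  rw [zre, this, mul_pow, Complex.cos_add_sin_mul_I_pow]
  have e1 : Complex.cos (n * θ) = ((cos (n * θ) : ℝ) : ℂ) := by push_cast; rfl
  have e2 : Complex.sin (n * θ) = ((sin (n * θ) : ℝ) : ℂ) := by push_cast; rfl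
  rw [e1, e2, ← Complex.ofReal_pow, Complex.re_ofReal_mul]
  simp [-Complex.ofReal_cos, -Complex.ofReal_sin]

lemma zim_polar (n : ℕ) (r θ : ℝ) : zim n (r * cos θ, r * sin θ) = r ^ n * sin (n * θ) := by
  have : (⟨r * cos θ, r * sin θ⟩ : ℂ) = r * (Complex.cos θ + Complex.sin θ * Complex.I) := by
    apply Complex.ext <;> simp [← Complex.ofReal_cos, ← Complex.ofReal_sin]
  rw [zim, this, mul_pow, Complex.cos_add_sin_mul_I_pow]
  have e1 : Complex.cos (n * θ) = ((cos (n * θ) : ℝ) : ℂ) := by push_cast; rfl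
  have e2 : Complex.sin (n * θ) = ((sin (n * θ) : ℝ) : ℂ) := by push_cast; rfl
  rw [e1, e2, ← Complex.ofReal_pow, Complex.im_ofReal_mul]
  simp [-Complex.ofReal_cos, -Complex.ofReal_sin]

/-- Points near a point of the wedge are in the wedge. -/
lemma wedge_nhds (p : ℕ) (hp : 1 ≤ p) (P : ℝ × ℝ → Prop)
    (hP : ∀ r θ : ℝ, 0 < r → 0 < θ → θ < π / (2 * p) → P (r * cos θ, r * sin θ))
    (r θ : ℝ) (hr : 0 < r) (h0 : 0 < θ) (h1 : θ < π / (2 * p)) :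
    ∀ᶠ q in 𝓝 (r * cos θ, r * sin θ), P q := by
  have hp' : (1 : ℝ) ≤ p := by exact_mod_cast hp
  have hle : π / (2 * p) ≤ π := by
    apply div_le_self pi_pos.le; linarith
  have hz : (⟨r * cos θ, r * sin θ⟩ : ℂ) = r * (Complex.cos θ + Complex.sin θ * Complex.I) := by
    apply Complex.ext <;> simp [← Complex.ofReal_cos, ← Complex.ofReal_sin]
  have harg : Complex.arg ⟨r * cos θ, r * sin θ⟩ = θ := by
    rw [hz, Complex.arg_mul_cos_add_sin_mul_I hr]
    constructor <;> linarith [pi_pos]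
  have hslit : (⟨r * cos θ, r * sin θ⟩ : ℂ) ∈ Complex.slitPlane := by
    rw [Complex.mem_slitPlane_iff]
    right
    have : 0 < sin θ := sin_pos_of_pos_of_lt_pi h0 (by linarith)
    exact (mul_pos hr this).ne'
  have hcZ : Continuous (fun q : ℝ × ℝ => (⟨q.1, q.2⟩ : ℂ)) := by
    have : (fun q : ℝ × ℝ => (⟨q.1, q.2⟩ : ℂ)) = fun q => (q.1 : ℂ) + q.2 * Complex.I := by
      funext q; exact Complex.mk_eq_add_mul_I _ _
    rw [this]; fun_prop
  have hc : ContinuousAt (fun q : ℝ × ℝ => Complex.arg ⟨q.1, q.2⟩) (r * cos θ, r * sin θ) :=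
    ContinuousAt.comp (g := Complex.arg) (f := fun q : ℝ × ℝ => (⟨q.1, q.2⟩ : ℂ))
      (Complex.continuousAt_arg hslit) hcZ.continuousAt
  have hm : Set.Ioo 0 (π / (2 * p)) ∈ 𝓝 (Complex.arg ⟨r * cos θ, r * sin θ⟩) := by
    rw [harg]; exact Ioo_mem_nhds h0 h1
  filter_upwards [hc hm] with q hq
  obtain ⟨hq0, hq1⟩ := hq
  simp only at hq0 hq1
  have hne : (⟨q.1, q.2⟩ : ℂ) ≠ 0 := by
    intro h; rw [h] at hq0; simp at hq0
  have := hP ‖(⟨q.1, q.2⟩ : ℂ)‖ (Complex.arg ⟨q.1, q.2⟩) (norm_pos_iff.2 hne) hq0 hq1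
  rwa [Complex.norm_mul_cos_arg, Complex.norm_mul_sin_arg] at this

/-- derivative of a monomial along a curve -/
lemma mono_deriv {A B : ℝ → ℝ} {A' B' x : ℝ} (hA : HasDerivAt A A' x) (hB : HasDerivAt B B' x)
    (c : ℝ) (m n : ℕ) :
    HasDerivAt (fun s => c * (A s ^ m * B s ^ n))
      (c * (m * A x ^ (m - 1) * A' * B x ^ n + A x ^ m * (n * B x ^ (n - 1) * B'))) x :=
  ((hA.pow m).mul (hB.pow n)).const_mul c

lemma mono_deriv2 {A B a b : ℝ → ℝ} {A' B' a' b' x : ℝ}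
    (hA : HasDerivAt A A' x) (hB : HasDerivAt B B' x)
    (ha : HasDerivAt a a' x) (hb : HasDerivAt b b' x) (hA0 : A x ≠ 0) (hB0 : B x ≠ 0)
    (c : ℝ) (m n : ℕ) :
    HasDerivAt (fun s => c * (m * A s ^ (m - 1) * a s * B s ^ n
        + A s ^ m * (n * B s ^ (n - 1) * b s)))
      (c * (A x ^ m * B x ^ n) * (m * (m - 1) * A' * a x / A x ^ 2 + m * a' / A x
        + m * n * a x * B' / (A x * B x) + m * n * A' * b x / (A x * B x)
        + n * (n - 1) * B' * b x / B x ^ 2 + n * b' / B x)) x := by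
  have h := (((((hA.pow (m - 1)).const_mul (m : ℝ)).mul ha).mul (hB.pow n)).add
    ((hA.pow m).mul (((hB.pow (n - 1)).const_mul (n : ℝ)).mul hb))).const_mul c
  refine h.congr_deriv ?_
  simp only [Pi.pow_apply, Pi.mul_apply]
  rcases m with _ | _ | m <;> rcases n with _ | _ | n <;> simp <;> field_simp <;> ring

lemma mono_red (m : ℕ) (A : ℝ) (hA : A ≠ 0) : (m : ℝ) * A ^ (m - 1) = m * A ^ m / A := by
  rcases m with _ | m
  · simp
  · simp; field_simp; ring

/-- The telescoping identity. -/
lemma telescope (k₀ k₁ : ℝ) (hk₀ : 0 ≤ k₀) (hk₁ : 0 ≤ k₁) (j : ℕ) (A B : ℝ) (c : ℕ → ℝ)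
    (hc : ∀ s, s < j → c (s + 1) * ((s + 1) * (s + k₀ + 1 / 2))
      = - (c s * ((j - s) * ((j - s : ℝ) + k₁ - 1 / 2)))) :
    ∑ s ∈ range (j + 1), c s * (A ^ (2 * (j - s)) * B ^ (2 * s)) *
      (2 * s * (2 * s - 1 + 2 * k₀) * A ^ 2 + 2 * (j - s) * (2 * (j - s) - 1 + 2 * k₁) * B ^ 2)
      = 0 := by
  have key : ∀ n, n ≤ j → ∑ s ∈ range n, c s * (A ^ (2 * (j - s)) * B ^ (2 * s)) *
      (2 * s * (2 * s - 1 + 2 * k₀) * A ^ 2 + 2 * (j - s) * (2 * (j - s) - 1 + 2 * k₁) * B ^ 2)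
      = - (c n * (A ^ (2 * (j - n)) * B ^ (2 * n)) * (2 * n * (2 * n - 1 + 2 * k₀) * A ^ 2)) := by
    intro n
    induction n with
    | zero => simp
    | succ n ih =>
      intro hn
      rw [sum_range_succ, ih (by omega)]
      have h1 := hc n (by omega)
      obtain ⟨t, rfl⟩ : ∃ t, j = n + 1 + t := ⟨j - (n + 1), by omega⟩
      have e1 : n + 1 + t - n = t + 1 := by omega
      have e2 : n + 1 + t - (n + 1) = t := by omega
      rw [e1, e2]
      push_cast at h1 ⊢
      linear_combination (4 * A ^ (2 * t + 2) * B ^ (2 * n + 2)) * h1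
  rw [sum_range_succ, key j le_rfl]
  simp

lemma jacobi_coeff (k₀ k₁ : ℝ) (hk₀ : 0 ≤ k₀) (hk₁ : 0 ≤ k₁) (j : ℕ) (X Y : ℝ) (s : ℕ)
    (hs : s < j) :
    (fun s : ℕ => (-1 : ℝ) ^ s * ((X / (Gamma ((s : ℝ) + (k₀ - 1 / 2) + 1) * (Nat.factorial (j - s)))) *
      (Y / (Gamma ((j : ℝ) - s + (k₁ - 1 / 2) + 1) * (Nat.factorial s))))) (s + 1)
        * ((s + 1) * (s + k₀ + 1 / 2))
      = - ((fun s : ℕ => (-1 : ℝ) ^ s *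
        ((X / (Gamma ((s : ℝ) + (k₀ - 1 / 2) + 1) * (Nat.factorial (j - s)))) *
      (Y / (Gamma ((j : ℝ) - s + (k₁ - 1 / 2) + 1) * (Nat.factorial s))))) s
        * ((j - s) * ((j - s : ℝ) + k₁ - 1 / 2))) := by
  obtain ⟨t, rfl⟩ : ∃ t, j = s + 1 + t := ⟨j - (s + 1), by omega⟩
  have e1 : s + 1 + t - s = t + 1 := by omega
  have e2 : s + 1 + t - (s + 1) = t := by omega
  simp only [e1, e2]
  push_cast [Nat.factorial_succ]
  have hs0 : (0 : ℝ) ≤ s := Nat.cast_nonneg s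
  have ht0 : (0 : ℝ) ≤ t := Nat.cast_nonneg t
  have p1 : 0 < (s : ℝ) + k₀ + 1 / 2 := by positivity
  have p2 : 0 < (t : ℝ) + k₁ + 1 / 2 := by positivity
  have g1 : Gamma ((s : ℝ) + 1 + (k₀ - 1 / 2) + 1) = (s + k₀ + 1 / 2) * Gamma (s + k₀ + 1 / 2) := by
    rw [← Gamma_add_one p1.ne']; congr 1; ring
  have g2 : Gamma ((s : ℝ) + 1 + t - s + (k₁ - 1 / 2) + 1)
      = (t + k₁ + 1 / 2) * Gamma (t + k₁ + 1 / 2) := by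
    rw [← Gamma_add_one p2.ne']; congr 1; ring
  have g3 : (s : ℝ) + (k₀ - 1 / 2) + 1 = s + k₀ + 1 / 2 := by ring
  have g4 : (s : ℝ) + 1 + t - (s + 1) + (k₁ - 1 / 2) + 1 = t + k₁ + 1 / 2 := by ring
  have g5 : ((s : ℝ) + 1 + t - s) = t + 1 := by ring
  have g6 : ((t : ℝ) + 1 + k₁ - 1 / 2) = t + k₁ + 1 / 2 := by ring
  rw [g1, g2, g3, g4, g5, g6]
  have q1 := (Gamma_pos_of_pos p1).ne'
  have q2 := (Gamma_pos_of_pos p2).ne'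
  have f1 : (Nat.factorial s : ℝ) ≠ 0 := by positivity
  have f2 : (Nat.factorial t : ℝ) ≠ 0 := by positivity
  have p3 : (s : ℝ) + 1 ≠ 0 := by positivity
  have p4 : (t : ℝ) + 1 ≠ 0 := by positivity
  generalize (s : ℝ) + k₀ + 1 / 2 = u at *
  generalize (t : ℝ) + k₁ + 1 / 2 = v at *
  have p1' := p1.ne'
  have p2' := p2.ne'
  field_simp
  ring

/-- The `W`-invariant harmonic
`h(r cos θ, r sin θ) = r^{2jp} P_j^{(k₀−1/2,k₁−1/2)}(cos 2pθ)` of the even dihedral system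
`I₂(2p)` satisfies `Δh + 2⟨∇h, ∇ log ω⟩ = 0` on the wedge `0 < θ < π/(2p)`, where
`ω(r cos θ, r sin θ) = r^γ (sin pθ)^{k₀}(cos pθ)^{k₁}` and `γ = p(k₀+k₁)`. -/
theorem stmt_13 (p : ℕ) (hp : 1 ≤ p) (k₀ k₁ : ℝ) (hk₀ : 0 ≤ k₀) (hk₁ : 0 ≤ k₁)
    (γ : ℝ) (hγ : γ = p * (k₀ + k₁)) (j : ℕ)
    (h : ℝ × ℝ → ℝ)
    (hh : ∀ r θ : ℝ, 0 < r → 0 < θ → θ < π / (2 * p) →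
        h (r * cos θ, r * sin θ)
          = r ^ (2 * j * p) * jacobiPoly (k₀ - 1 / 2) (k₁ - 1 / 2) j (cos (2 * p * θ)))
    (ω : ℝ × ℝ → ℝ)
    (hω : ∀ r θ : ℝ, 0 < r → 0 < θ → θ < π / (2 * p) →
        ω (r * cos θ, r * sin θ) = r ^ γ * sin (p * θ) ^ k₀ * cos (p * θ) ^ k₁) :
    ∀ r θ : ℝ, 0 < r → 0 < θ → θ < π / (2 * p) →
      pd1 (pd1 h) (r * cos θ, r * sin θ) + pd2 (pd2 h) (r * cos θ, r * sin θ)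
        + 2 * (pd1 h (r * cos θ, r * sin θ) * pd1 (fun y => log (ω y)) (r * cos θ, r * sin θ)
            + pd2 h (r * cos θ, r * sin θ) * pd2 (fun y => log (ω y)) (r * cos θ, r * sin θ))
      = 0 := by
  intro r θ hr hθ0 hθ1
  have hp' : (1 : ℝ) ≤ p := by exact_mod_cast hp
  have hang : ∀ θ : ℝ, 0 < θ → θ < π / (2 * p) → 0 < sin (p * θ) ∧ 0 < cos (p * θ) := by
    intro θ h0 h1
    rw [lt_div_iff₀ (by positivity)] at h1
    have : 0 < p * θ := by positivity
    have h2 : p * θ < π / 2 := by linarith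
    exact ⟨sin_pos_of_pos_of_lt_pi this (by linarith [pi_pos]),
      cos_pos_of_mem_Ioo ⟨by linarith [pi_pos], h2⟩⟩
  obtain ⟨c, hcdef⟩ : ∃ c : ℕ → ℝ, c = fun s : ℕ => (-1 : ℝ) ^ s *
    ((Gamma ((j : ℝ) + (k₀ - 1 / 2) + 1) /
      (Gamma ((s : ℝ) + (k₀ - 1 / 2) + 1) * (Nat.factorial (j - s)))) *
      (Gamma ((j : ℝ) + (k₁ - 1 / 2) + 1) /
        (Gamma ((j : ℝ) - s + (k₁ - 1 / 2) + 1) * (Nat.factorial s)))) := ⟨_, rfl⟩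
  have hc : ∀ s : ℕ, s < j → c (s + 1) * ((s + 1) * (s + k₀ + 1 / 2))
      = - (c s * ((j - s) * ((j - s : ℝ) + k₁ - 1 / 2))) := by
    intro s hs
    rw [hcdef]
    exact jacobi_coeff k₀ k₁ hk₀ hk₁ j _ _ s hs
  -- local forms
  have hH : ∀ r θ : ℝ, 0 < r → 0 < θ → θ < π / (2 * p) → h (r * cos θ, r * sin θ) =
      (fun q => ∑ s ∈ range (j + 1), c s * (zre p q ^ (2 * (j - s)) * zim p q ^ (2 * s)))
        (r * cos θ, r * sin θ) := by
    intro r θ hr h0 h1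
    rw [hh r θ hr h0 h1]
    simp only [jacobiPoly, zre_polar, zim_polar]
    rw [mul_sum]
    refine sum_congr rfl fun s hs => ?_
    have hs' : s ≤ j := by simpa [Nat.lt_succ_iff] using hs
    have e0 : (2 : ℝ) * p * θ = 2 * (p * θ) := by ring
    have e1 : (cos (2 * p * θ) - 1) / 2 = (-1) * sin (p * θ) ^ 2 := by
      rw [e0, cos_two_mul, cos_sq']; ring
    have e2 : (cos (2 * p * θ) + 1) / 2 = cos (p * θ) ^ 2 := by
      rw [e0, cos_two_mul]; ring
    rw [e1, e2, hcdef]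
    have e3 : r ^ (2 * j * p) = (r ^ p) ^ (2 * (j - s)) * (r ^ p) ^ (2 * s) := by
      rw [← pow_add, ← pow_mul]; congr 1
      rw [← mul_add, Nat.sub_add_cancel hs']; ring
    rw [e3, mul_pow (-1 : ℝ), mul_pow, mul_pow, ← pow_mul, ← pow_mul]
    ring
  have hW : ∀ r θ : ℝ, 0 < r → 0 < θ → θ < π / (2 * p) → log (ω (r * cos θ, r * sin θ)) =
      (fun q => k₀ * log (zim p q) + k₁ * log (zre p q)) (r * cos θ, r * sin θ) := by
    intro r θ hr h0 h1
    obtain ⟨hs, hco⟩ := hang θ h0 h1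
    rw [hω r θ hr h0 h1]
    simp only [zre_polar, zim_polar]
    have hrp : 0 < r ^ p := by positivity
    rw [log_mul (by positivity) (by positivity), log_mul (by positivity) (by positivity),
      log_rpow hr, log_rpow hs, log_rpow hco, log_mul hrp.ne' hs.ne', log_mul hrp.ne' hco.ne',
      log_pow, hγ]
    ring
  have hHe : h =ᶠ[𝓝 (r * cos θ, r * sin θ)] (fun q => ∑ s ∈ range (j + 1),
      c s * (zre p q ^ (2 * (j - s)) * zim p q ^ (2 * s))) := wedge_nhds p hp _ hH r θ hr hθ0 hθ1
  have hWe : (fun y => log (ω y)) =ᶠ[𝓝 (r * cos θ, r * sin θ)]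
      (fun q => k₀ * log (zim p q) + k₁ * log (zre p q)) :=
    wedge_nhds p hp _ hW r θ hr hθ0 hθ1
  obtain ⟨hs, hco⟩ := hang θ hθ0 hθ1
  have hA : 0 < zre p (r * cos θ, r * sin θ) := by rw [zre_polar]; positivity
  have hB : 0 < zim p (r * cos θ, r * sin θ) := by rw [zim_polar]; positivity
  rw [pd1_congr (pd1_congr' hHe), pd2_congr (pd2_congr' hHe), pd1_congr hHe, pd2_congr hHe,
    pd1_congr hWe, pd2_congr hWe]
  generalize r * cos θ = x at *
  generalize r * sin θ = y at *
  -- first derivatives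
  have d1 : pd1 (fun q => ∑ s ∈ range (j + 1),
      c s * (zre p q ^ (2 * (j - s)) * zim p q ^ (2 * s))) =
      fun q => ∑ s ∈ range (j + 1), c s * (((2 * (j - s) : ℕ) : ℝ) * zre p q ^ (2 * (j - s) - 1)
        * (p * zre (p - 1) q) * zim p q ^ (2 * s) + zre p q ^ (2 * (j - s)) *
        (((2 * s : ℕ) : ℝ) * zim p q ^ (2 * s - 1) * (p * zim (p - 1) q))) := by
    funext q
    exact (HasDerivAt.fun_sum fun s _ => mono_deriv (zre1 p q.1 q.2) (zim1 p q.1 q.2) (c s)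
      (2 * (j - s)) (2 * s)).deriv
  have d2 : pd2 (fun q => ∑ s ∈ range (j + 1),
      c s * (zre p q ^ (2 * (j - s)) * zim p q ^ (2 * s))) =
      fun q => ∑ s ∈ range (j + 1), c s * (((2 * (j - s) : ℕ) : ℝ) * zre p q ^ (2 * (j - s) - 1)
        * (-(p * zim (p - 1) q)) * zim p q ^ (2 * s) + zre p q ^ (2 * (j - s)) *
        (((2 * s : ℕ) : ℝ) * zim p q ^ (2 * s - 1) * (p * zre (p - 1) q))) := by
    funext q
    exact (HasDerivAt.fun_sum fun s _ => mono_deriv (zre2 p q.1 q.2) (zim2 p q.1 q.2) (c s)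
      (2 * (j - s)) (2 * s)).deriv
  rw [d1, d2]
  -- second derivatives
  have d11 := (HasDerivAt.fun_sum (u := range (j + 1)) fun s _ => mono_deriv2 (zre1 p x y)
    (zim1 p x y) ((zre1 (p - 1) x y).const_mul (p : ℝ)) ((zim1 (p - 1) x y).const_mul (p : ℝ))
    hA.ne' hB.ne' (c s) (2 * (j - s)) (2 * s)).deriv
  have d22 := (HasDerivAt.fun_sum (u := range (j + 1)) fun s _ => mono_deriv2 (zre2 p x y)
    (zim2 p x y) ((zim2 (p - 1) x y).const_mul (p : ℝ)).neg ((zre2 (p - 1) x y).const_mul (p : ℝ))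
    hA.ne' hB.ne' (c s) (2 * (j - s)) (2 * s)).deriv
  have l1 : pd1 (fun q => k₀ * log (zim p q) + k₁ * log (zre p q)) (x, y) =
      k₀ * (p * zim (p - 1) (x, y) / zim p (x, y))
        + k₁ * (p * zre (p - 1) (x, y) / zre p (x, y)) :=
    ((((zim1 p x y).log hB.ne').const_mul k₀).add (((zre1 p x y).log hA.ne').const_mul k₁)).deriv
  have l2 : pd2 (fun q => k₀ * log (zim p q) + k₁ * log (zre p q)) (x, y) =
      k₀ * (p * zre (p - 1) (x, y) / zim p (x, y))
        + k₁ * (-(p * zim (p - 1) (x, y)) / zre p (x, y)) :=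
    ((((zim2 p x y).log hB.ne').const_mul k₀).add (((zre2 p x y).log hA.ne').const_mul k₁)).deriv
  rw [l1, l2]
  have t1 : ∀ f : ℝ × ℝ → ℝ, pd1 f (x, y) = deriv (fun s => f (s, y)) x := fun f => rfl
  have t2 : ∀ f : ℝ × ℝ → ℝ, pd2 f (x, y) = deriv (fun s => f (x, s)) y := fun f => rfl
  rw [t1, t2]
  refine (congrArg₂ (fun u v => u + v + _) d11 d22).trans ?_
  simp only [Pi.neg_apply, sum_mul, mul_sum, ← sum_add_distrib]
  have T := telescope k₀ k₁ hk₀ hk₁ j (zre p (x, y)) (zim p (x, y)) c hc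
  have T2 := congrArg (fun u => ((p * zre (p - 1) (x, y)) ^ 2 + (p * zim (p - 1) (x, y)) ^ 2)
    / (zre p (x, y) ^ 2 * zim p (x, y) ^ 2) * u) T
  simp only [mul_zero, mul_sum] at T2
  rw [← T2]
  refine sum_congr rfl fun s hs => ?_
  have hs' : s ≤ j := by simpa [Nat.lt_succ_iff] using hs
  have m1 := mono_red (2 * (j - s)) _ hA.ne'
  have m2 := mono_red (2 * s) _ hB.ne'
  rw [m1, m2]
  have e1 : ((2 * (j - s) : ℕ) : ℝ) = 2 * (j - s) := by push_cast [Nat.cast_sub hs']; ring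
  have e2 : ((2 * s : ℕ) : ℝ) = 2 * s := by push_cast; ring
  rw [e1, e2]
  have hA' := hA.ne'
  have hB' := hB.ne'
  generalize zre p (x, y) = A at *
  generalize zim p (x, y) = B at *
  generalize A ^ (2 * (j - s)) = A1 at *
  generalize B ^ (2 * s) = B1 at *
  field_simp
  ring
end

section
/- Let p ≥ 1 be an integer, k₀, k₁ ≥ 0, γ = p(k₀+k₁), and let j, q be non-negative integers. On the open wedge C = {(r cos θ, r sin θ) : r > 0, 0 < θ < π/(2p)} define the weight ω(r cos θ, r sin θ) = r^{γ}(sin pθ)^{k₀}(cos pθ)^{k₁}, the operator D u = Δu + 2⟨∇u, ∇ log ω⟩ on smooth functions on C, the function h(r cos θ, r sin θ) = r^{2jp} P_j^{(k₀−1/2,k₁−1/2)}(cos 2pθ), and f(x) = |x|^{2q} h(x). Then each iterate D^m f is smooth on C, D^m f = 0 for all m > q, and ∑_{m=0}^{q} [(−1/2)^m/m!] (D^m f)(x) = (−2)^q q! · L_q^{(2jp+γ)}(|x|²/2) · h(x) for all x ∈ C. (Up to normalization, the right-hand side is the W-invariant generalized Hermite polynomial H^W_{2q,2jp} of the even dihedral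 system: the image of |x|^{2q}h(x) under e^{−Δ_k^W/2} is a product of a univariate Laguerre polynomial in |x|²/2 and a Jacobi polynomial in cos 2pθ.) -/
open Real Finset

/-- The `W`-invariant Dunkl Laplacian `D u = Δu + 2⟨∇u, ∇ log ω⟩` associated with a
weight `ω` on `ℝ²`. -/
noncomputable def Dop (ω : ℝ × ℝ → ℝ) (f : ℝ × ℝ → ℝ) : ℝ × ℝ → ℝ := fun x =>
  pd1 (pd1 f) x + pd2 (pd2 f) x
    + 2 * (pd1 f x * pd1 (fun y => Real.log (ω y)) x
        + pd2 f x * pd2 (fun y => Real.log (ω y)) x)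

noncomputable def zA (p : ℕ) (x : ℝ × ℝ) : ℝ := (((x.1 : ℂ) + x.2 * Complex.I) ^ p).re

noncomputable def zB (p : ℕ) (x : ℝ × ℝ) : ℝ := (((x.1 : ℂ) + x.2 * Complex.I) ^ p).im

noncomputable def zR (x : ℝ × ℝ) : ℝ := x.1 ^ 2 + x.2 ^ 2

lemma z_hasDerivAt1 (p : ℕ) (x y : ℝ) :
    HasDerivAt (fun s : ℝ => ((s : ℂ) + y * Complex.I) ^ p)
      (p * ((x : ℂ) + y * Complex.I) ^ (p - 1)) x := by
  have h0 : HasDerivAt (fun s : ℝ => (s : ℂ) + y * Complex.I) 1 x :=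
    (HasDerivAt.ofReal_comp (hasDerivAt_id x)).add_const _ |>.congr_deriv (by simp)
  simpa using h0.fun_pow p

lemma z_hasDerivAt2 (p : ℕ) (x y : ℝ) :
    HasDerivAt (fun s : ℝ => ((x : ℂ) + s * Complex.I) ^ p)
      (p * ((x : ℂ) + y * Complex.I) ^ (p - 1) * Complex.I) y := by
  have h0 : HasDerivAt (fun s : ℝ => (x : ℂ) + s * Complex.I) Complex.I y :=
    ((HasDerivAt.ofReal_comp (hasDerivAt_id y)).mul_const Complex.I).const_add _
      |>.congr_deriv (by simp)
  simpa using h0.fun_pow p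

lemma re_hasDerivAt {g : ℝ → ℂ} {g' : ℂ} {x : ℝ} (hg : HasDerivAt g g' x) :
    HasDerivAt (fun s => (g s).re) g'.re x :=
  Complex.reCLM.hasFDerivAt.comp_hasDerivAt x hg

lemma im_hasDerivAt {g : ℝ → ℂ} {g' : ℂ} {x : ℝ} (hg : HasDerivAt g g' x) :
    HasDerivAt (fun s => (g s).im) g'.im x :=
  Complex.imCLM.hasFDerivAt.comp_hasDerivAt x hg

lemma zA_d1 (p : ℕ) (x y : ℝ) :
    HasDerivAt (fun s => zA p (s, y)) (p * zA (p - 1) (x, y)) x :=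
  (re_hasDerivAt (z_hasDerivAt1 p x y)).congr_deriv (by simp [zA])

lemma zB_d1 (p : ℕ) (x y : ℝ) :
    HasDerivAt (fun s => zB p (s, y)) (p * zB (p - 1) (x, y)) x :=
  (im_hasDerivAt (z_hasDerivAt1 p x y)).congr_deriv (by simp [zB])

lemma zA_d2 (p : ℕ) (x y : ℝ) :
    HasDerivAt (fun s => zA p (x, s)) (-(p * zB (p - 1) (x, y))) y :=
  (re_hasDerivAt (z_hasDerivAt2 p x y)).congr_deriv (by simp [zB])

lemma zB_d2 (p : ℕ) (x y : ℝ) :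
    HasDerivAt (fun s => zB p (x, s)) (p * zA (p - 1) (x, y)) y :=
  (im_hasDerivAt (z_hasDerivAt2 p x y)).congr_deriv (by simp [zA])

lemma zR_d1 (x y : ℝ) : HasDerivAt (fun s => zR (s, y)) (2 * x) x := by
  simpa [zR] using ((hasDerivAt_id x).fun_pow 2).add_const (y ^ 2)

lemma zR_d2 (x y : ℝ) : HasDerivAt (fun s => zR (x, s)) (2 * y) y := by
  simpa [zR] using ((hasDerivAt_id y).fun_pow 2).const_add (x ^ 2)

lemma zA_euler (p : ℕ) (hp : 1 ≤ p) (x : ℝ × ℝ) :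
    x.1 * zA (p - 1) x - x.2 * zB (p - 1) x = zA p x := by
  obtain ⟨n, rfl⟩ : ∃ n, p = n + 1 := ⟨p - 1, by omega⟩
  simp [zA, zB, pow_succ]
  ring

lemma zB_euler (p : ℕ) (hp : 1 ≤ p) (x : ℝ × ℝ) :
    x.1 * zB (p - 1) x + x.2 * zA (p - 1) x = zB p x := by
  obtain ⟨n, rfl⟩ : ∃ n, p = n + 1 := ⟨p - 1, by omega⟩
  simp [zA, zB, pow_succ]
  ring

lemma zA_polar (p : ℕ) (r θ : ℝ) : zA p (r * cos θ, r * sin θ) = r ^ p * cos (p * θ) := by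
  have : (((r * cos θ : ℝ) : ℂ) + ((r * sin θ : ℝ) : ℂ) * Complex.I) ^ p
      = ((r ^ p : ℝ) : ℂ) * (((cos (p * θ) : ℝ) : ℂ) + ((sin (p * θ) : ℝ) : ℂ) * Complex.I) := by
    push_cast
    rw [← Complex.cos_add_sin_mul_I_pow, ← mul_pow]
    ring
  simp only [zA]
  rw [this]
  simp [-Complex.ofReal_cos, -Complex.ofReal_sin, -Complex.ofReal_pow]

lemma zB_polar (p : ℕ) (r θ : ℝ) : zB p (r * cos θ, r * sin θ) = r ^ p * sin (p * θ) := by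
  have : (((r * cos θ : ℝ) : ℂ) + ((r * sin θ : ℝ) : ℂ) * Complex.I) ^ p
      = ((r ^ p : ℝ) : ℂ) * (((cos (p * θ) : ℝ) : ℂ) + ((sin (p * θ) : ℝ) : ℂ) * Complex.I) := by
    push_cast
    rw [← Complex.cos_add_sin_mul_I_pow, ← mul_pow]
    ring
  simp only [zB]
  rw [this]
  simp [-Complex.ofReal_cos, -Complex.ofReal_sin, -Complex.ofReal_pow]

lemma zR_polar (r θ : ℝ) : zR (r * cos θ, r * sin θ) = r ^ 2 := by
  simp only [zR]
  linear_combination r ^ 2 * sin_sq_add_cos_sq θ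

lemma z_contDiff (p : ℕ) :
    ContDiff ℝ (⊤ : ℕ∞) (fun x : ℝ × ℝ => ((x.1 : ℂ) + x.2 * Complex.I) ^ p) := by
  have h1 : ContDiff ℝ (⊤ : ℕ∞) (fun x : ℝ × ℝ => (x.1 : ℂ)) :=
    Complex.ofRealCLM.contDiff.comp contDiff_fst
  have h2 : ContDiff ℝ (⊤ : ℕ∞) (fun x : ℝ × ℝ => (x.2 : ℂ)) :=
    Complex.ofRealCLM.contDiff.comp contDiff_snd
  exact (h1.add (h2.mul contDiff_const)).pow p

lemma zA_contDiff (p : ℕ) : ContDiff ℝ (⊤ : ℕ∞) (zA p) :=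
  Complex.reCLM.contDiff.comp (z_contDiff p)

lemma zB_contDiff (p : ℕ) : ContDiff ℝ (⊤ : ℕ∞) (zB p) :=
  Complex.imCLM.contDiff.comp (z_contDiff p)

lemma zR_contDiff : ContDiff ℝ (⊤ : ℕ∞) zR := by
  unfold zR
  fun_prop

/-- The monomial `R^q B^{2s} A^{2t}`. -/
noncomputable def zM (p q s t : ℕ) (x : ℝ × ℝ) : ℝ :=
  zR x ^ q * zB p x ^ (2 * s) * zA p x ^ (2 * t)

lemma zM_contDiff (p q s t : ℕ) : ContDiff ℝ (⊤ : ℕ∞) (zM p q s t) :=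
  ((zR_contDiff.pow q).mul ((zB_contDiff p).pow _)).mul ((zA_contDiff p).pow _)

lemma pow_logderiv {u : ℝ → ℝ} {u' x : ℝ} (n : ℕ) (hu : HasDerivAt u u' x) (h0 : u x ≠ 0) :
    HasDerivAt (fun s => u s ^ n) (u x ^ n * (n * (u' / u x))) x := by
  refine (hu.fun_pow n).congr_deriv ?_
  rcases n with _ | n
  · simp
  · simp only [Nat.add_sub_cancel, pow_succ]
    field_simp

lemma mono_logderiv {r b a : ℝ → ℝ} {r' b' a' x : ℝ} (q s t : ℕ)
    (hr : HasDerivAt r r' x) (hb : HasDerivAt b b' x) (ha : HasDerivAt a a' x)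
    (r0 : r x ≠ 0) (b0 : b x ≠ 0) (a0 : a x ≠ 0) :
    HasDerivAt (fun z => r z ^ q * b z ^ (2 * s) * a z ^ (2 * t))
      ((r x ^ q * b x ^ (2 * s) * a x ^ (2 * t)) *
        (q * (r' / r x) + 2 * s * (b' / b x) + 2 * t * (a' / a x))) x := by
  refine (((pow_logderiv q hr r0).fun_mul (pow_logderiv (2 * s) hb b0)).fun_mul
    (pow_logderiv (2 * t) ha a0)).congr_deriv ?_
  push_cast
  ring

noncomputable def l1 (p q s t : ℕ) (x : ℝ × ℝ) : ℝ :=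
  q * (2 * x.1 / zR x) + 2 * s * (p * zB (p - 1) x / zB p x)
    + 2 * t * (p * zA (p - 1) x / zA p x)

noncomputable def l2 (p q s t : ℕ) (x : ℝ × ℝ) : ℝ :=
  q * (2 * x.2 / zR x) + 2 * s * (p * zA (p - 1) x / zB p x)
    + 2 * t * (-(p * zB (p - 1) x) / zA p x)

def Good (p : ℕ) (x : ℝ × ℝ) : Prop := zR x ≠ 0 ∧ zB p x ≠ 0 ∧ zA p x ≠ 0

lemma zM_d1 (p q s t : ℕ) (x y : ℝ) (hg : Good p (x, y)) :
    HasDerivAt (fun z => zM p q s t (z, y)) (zM p q s t (x, y) * l1 p q s t (x, y)) x :=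
  mono_logderiv q s t (zR_d1 x y) (zB_d1 p x y) (zA_d1 p x y) hg.1 hg.2.1 hg.2.2

lemma zM_d2 (p q s t : ℕ) (x y : ℝ) (hg : Good p (x, y)) :
    HasDerivAt (fun z => zM p q s t (x, z)) (zM p q s t (x, y) * l2 p q s t (x, y)) y :=
  mono_logderiv q s t (zR_d2 x y) (zB_d2 p x y) (zA_d2 p x y) hg.1 hg.2.1 hg.2.2

lemma l1_d1 (p q s t : ℕ) (x y : ℝ) (hg : Good p (x, y)) :
    HasDerivAt (fun z => l1 p q s t (z, y))
      (q * ((2 * zR (x, y) - 2 * x * (2 * x)) / zR (x, y) ^ 2)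
        + 2 * s * (((p * (((p - 1 : ℕ) : ℝ) * zB (p - 1 - 1) (x, y))) * zB p (x, y)
            - p * zB (p - 1) (x, y) * (p * zB (p - 1) (x, y))) / zB p (x, y) ^ 2)
        + 2 * t * (((p * (((p - 1 : ℕ) : ℝ) * zA (p - 1 - 1) (x, y))) * zA p (x, y)
            - p * zA (p - 1) (x, y) * (p * zA (p - 1) (x, y))) / zA p (x, y) ^ 2)) x := by
  have e1 : HasDerivAt (fun z : ℝ => 2 * z) 2 x := by
    simpa using (hasDerivAt_id x).const_mul (2 : ℝ)
  exact (((e1.fun_div (zR_d1 x y) hg.1).const_mul (q : ℝ)).fun_add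
    ((((zB_d1 (p - 1) x y).const_mul (p : ℝ)).fun_div (zB_d1 p x y) hg.2.1).const_mul
      (2 * s : ℝ))).fun_add
    ((((zA_d1 (p - 1) x y).const_mul (p : ℝ)).fun_div (zA_d1 p x y) hg.2.2).const_mul
      (2 * t : ℝ))

lemma l2_d2 (p q s t : ℕ) (x y : ℝ) (hg : Good p (x, y)) :
    HasDerivAt (fun z => l2 p q s t (x, z))
      (q * ((2 * zR (x, y) - 2 * y * (2 * y)) / zR (x, y) ^ 2)
        + 2 * s * (((p * -(((p - 1 : ℕ) : ℝ) * zB (p - 1 - 1) (x, y))) * zB p (x, y)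
            - p * zA (p - 1) (x, y) * (p * zA (p - 1) (x, y))) / zB p (x, y) ^ 2)
        + 2 * t * ((-(p * (((p - 1 : ℕ) : ℝ) * zA (p - 1 - 1) (x, y))) * zA p (x, y)
            - -(p * zB (p - 1) (x, y)) * -(p * zB (p - 1) (x, y))) / zA p (x, y) ^ 2)) y := by
  have e1 : HasDerivAt (fun z : ℝ => 2 * z) 2 y := by
    simpa using (hasDerivAt_id y).const_mul (2 : ℝ)
  exact (((e1.fun_div (zR_d2 x y) hg.1).const_mul (q : ℝ)).fun_add
    ((((zA_d2 (p - 1) x y).const_mul (p : ℝ)).fun_div (zB_d2 p x y) hg.2.1).const_mul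
      (2 * s : ℝ))).fun_add
    ((((zB_d2 (p - 1) x y).const_mul (p : ℝ)).fun_neg.fun_div (zA_d2 p x y) hg.2.2).const_mul
      (2 * t : ℝ))

lemma pd1_congr_s14 {C : Set (ℝ × ℝ)} (hC : IsOpen C) {u v : ℝ × ℝ → ℝ} (huv : Set.EqOn u v C)
    {x : ℝ × ℝ} (hx : x ∈ C) : pd1 u x = pd1 v x := by
  refine Filter.EventuallyEq.deriv_eq ?_
  have hc : ContinuousAt (fun s : ℝ => (s, x.2)) x.1 := by fun_prop
  filter_upwards [hc.preimage_mem_nhds (hC.mem_nhds hx)] with s hs using huv hs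

lemma pd2_congr_s14 {C : Set (ℝ × ℝ)} (hC : IsOpen C) {u v : ℝ × ℝ → ℝ} (huv : Set.EqOn u v C)
    {x : ℝ × ℝ} (hx : x ∈ C) : pd2 u x = pd2 v x := by
  refine Filter.EventuallyEq.deriv_eq ?_
  have hc : ContinuousAt (fun s : ℝ => (x.1, s)) x.2 := by fun_prop
  filter_upwards [hc.preimage_mem_nhds (hC.mem_nhds hx)] with s hs using huv hs

lemma Dop_congr {C : Set (ℝ × ℝ)} (hC : IsOpen C) {u v w w' : ℝ × ℝ → ℝ}
    (huv : Set.EqOn u v C) (hw : Set.EqOn (fun y => Real.log (w y)) w' C)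
    {x : ℝ × ℝ} (hx : x ∈ C) : Dop w u x = pd1 (pd1 v) x + pd2 (pd2 v) x
      + 2 * (pd1 v x * pd1 w' x + pd2 v x * pd2 w' x) := by
  unfold Dop
  rw [pd1_congr_s14 hC (fun y hy => pd1_congr_s14 hC huv hy) hx,
    pd2_congr_s14 hC (fun y hy => pd2_congr_s14 hC huv hy) hx,
    pd1_congr_s14 hC huv hx, pd2_congr_s14 hC huv hx, pd1_congr_s14 hC hw hx, pd2_congr_s14 hC hw hx]

noncomputable def zF (p j : ℕ) (a : ℕ → ℝ) (q : ℕ) (x : ℝ × ℝ) : ℝ :=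
  ∑ s ∈ range (j + 1), a s * zM p q s (j - s) x

lemma zF_contDiff (p j : ℕ) (a : ℕ → ℝ) (q : ℕ) : ContDiff ℝ (⊤ : ℕ∞) (zF p j a q) := by
  unfold zF
  exact ContDiff.sum fun s _ => contDiff_const.mul (zM_contDiff _ _ _ _)

lemma zF_pd1 (p j : ℕ) (a : ℕ → ℝ) (q : ℕ) (x : ℝ × ℝ) (hg : Good p x) :
    pd1 (zF p j a q) x = ∑ s ∈ range (j + 1), a s * (zM p q s (j - s) x * l1 p q s (j - s) x) :=
  (HasDerivAt.fun_sum fun s _ => (zM_d1 p q s (j - s) x.1 x.2 hg).const_mul (a s)).deriv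

lemma zF_pd2 (p j : ℕ) (a : ℕ → ℝ) (q : ℕ) (x : ℝ × ℝ) (hg : Good p x) :
    pd2 (zF p j a q) x = ∑ s ∈ range (j + 1), a s * (zM p q s (j - s) x * l2 p q s (j - s) x) :=
  (HasDerivAt.fun_sum fun s _ => (zM_d2 p q s (j - s) x.1 x.2 hg).const_mul (a s)).deriv

lemma zlog_pd1 (p : ℕ) (k₀ k₁ : ℝ) (x : ℝ × ℝ) (hg : Good p x) :
    pd1 (fun y => k₀ * log (zB p y) + k₁ * log (zA p y)) x
      = k₀ * (p * zB (p - 1) x / zB p x) + k₁ * (p * zA (p - 1) x / zA p x) :=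
  ((((zB_d1 p x.1 x.2).log hg.2.1).const_mul k₀).fun_add
    (((zA_d1 p x.1 x.2).log hg.2.2).const_mul k₁)).deriv

lemma zlog_pd2 (p : ℕ) (k₀ k₁ : ℝ) (x : ℝ × ℝ) (hg : Good p x) :
    pd2 (fun y => k₀ * log (zB p y) + k₁ * log (zA p y)) x
      = k₀ * (p * zA (p - 1) x / zB p x) + k₁ * (-(p * zB (p - 1) x) / zA p x) :=
  ((((zB_d2 p x.1 x.2).log hg.2.1).const_mul k₀).fun_add
    (((zA_d2 p x.1 x.2).log hg.2.2).const_mul k₁)).deriv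

/-- The algebraic identity behind the computation of `D` on a monomial. -/
lemma alg_identity (p q s t k₀ k₁ x y R A B A1 B1 A2 B2 p1 : ℝ) (hR : R = x ^ 2 + y ^ 2)
    (hA : x * A1 - y * B1 = A) (hB : x * B1 + y * A1 = B) (R0 : R ≠ 0) (A0 : A ≠ 0) (B0 : B ≠ 0) :
    (q * (2 * x / R) + 2 * s * (p * B1 / B) + 2 * t * (p * A1 / A)) ^ 2
    + (q * (2 * y / R) + 2 * s * (p * A1 / B) + 2 * t * (-(p * B1) / A)) ^ 2
    + (q * ((2 * R - 2 * x * (2 * x)) / R ^ 2)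
        + 2 * s * (((p * (p1 * B2)) * B - p * B1 * (p * B1)) / B ^ 2)
        + 2 * t * (((p * (p1 * A2)) * A - p * A1 * (p * A1)) / A ^ 2))
    + (q * ((2 * R - 2 * y * (2 * y)) / R ^ 2)
        + 2 * s * (((p * -(p1 * B2)) * B - p * A1 * (p * A1)) / B ^ 2)
        + 2 * t * ((-(p * (p1 * A2)) * A - -(p * B1) * -(p * B1)) / A ^ 2))
    + 2 * ((q * (2 * x / R) + 2 * s * (p * B1 / B) + 2 * t * (p * A1 / A))
          * (k₀ * (p * B1 / B) + k₁ * (p * A1 / A))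
        + (q * (2 * y / R) + 2 * s * (p * A1 / B) + 2 * t * (-(p * B1) / A))
          * (k₀ * (p * A1 / B) + k₁ * (-(p * B1) / A)))
    = 4 * q * (q + 2 * (s + t) * p + p * (k₀ + k₁)) / R
      + 4 * p ^ 2 * (A1 ^ 2 + B1 ^ 2) * (s * (s + (k₀ - 1 / 2)) / B ^ 2 + t * (t + (k₁ - 1 / 2)) / A ^ 2) := by
  have e1 : x / R * (A1 / A) - y / R * (B1 / A) = 1 / R := by
    rw [← hA] at A0 ⊢; field_simp
  have e2 : x / R * (B1 / B) + y / R * (A1 / B) = 1 / R := by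
    rw [← hB] at B0 ⊢; field_simp
  have e3 : (x / R) ^ 2 + (y / R) ^ 2 = 1 / R := by
    have : x ^ 2 + y ^ 2 = R := hR.symm
    field_simp; linarith
  have e4 : A / A ^ 2 = 1 / A := by field_simp
  have e5 : B / B ^ 2 = 1 / B := by field_simp
  have e6 : R / R ^ 2 = 1 / R := by field_simp
  linear_combination (4 * q ^ 2 - 4 * q) * e3 + 4 * q * e6 + (8 * q * p * t + 4 * q * p * k₁) * e1
    + (8 * q * p * s + 4 * q * p * k₀) * e2

lemma telescope_s14 (j : ℕ) (a : ℕ → ℝ) (α β A B : ℝ) (A0 : A ≠ 0) (B0 : B ≠ 0)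
    (ha : ∀ s < j, a (s + 1) * (((s : ℝ) + 1) * (s + 1 + α))
      = -(a s * (((j : ℝ) - s) * (j - s + β)))) :
    ∑ s ∈ range (j + 1), a s * (B ^ (2 * s) * A ^ (2 * (j - s))) *
      ((s : ℝ) * (s + α) / B ^ 2 + ((j : ℝ) - s) * (j - s + β) / A ^ 2) = 0 := by
  simp only [mul_add, sum_add_distrib]
  rw [sum_range_succ', sum_range_succ _ j]
  simp only [Nat.cast_zero, zero_mul, zero_div, mul_zero, sub_self, add_zero]
  rw [← sum_add_distrib]
  refine sum_eq_zero fun s hs => ?_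
  have hs' := mem_range.mp hs
  have h1 := ha s hs'
  obtain ⟨n, rfl⟩ : ∃ n, j = s + 1 + n := ⟨j - (s + 1), by omega⟩
  have i1 : s + 1 + n - (s + 1) = n := by omega
  have i2 : s + 1 + n - s = n + 1 := by omega
  rw [i1, i2]
  push_cast at h1 ⊢
  have : B ^ (2 * (s + 1)) / B ^ 2 = B ^ (2 * s) := by
    rw [mul_add, pow_add]; field_simp
  have h2 : A ^ (2 * (n + 1)) / A ^ 2 = A ^ (2 * n) := by
    rw [mul_add, pow_add]; field_simp
  linear_combination B ^ (2 * s) * A ^ (2 * n) * h1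
    + a (s + 1) * A ^ (2 * n) * ((s + 1 : ℝ) * (s + 1 + α)) * this
    + a s * B ^ (2 * s) * (((s : ℝ) + 1 + n - s) * (s + 1 + n - s + β)) * h2

lemma D_zF {C : Set (ℝ × ℝ)} (hC : IsOpen C) (p : ℕ) (hp : 1 ≤ p) (j : ℕ) (a : ℕ → ℝ)
    (k₀ k₁ : ℝ) (hgood : ∀ x ∈ C, Good p x) (w u : ℝ × ℝ → ℝ) (c : ℝ)
    (hw : Set.EqOn (fun y => Real.log (w y))
      (fun y => k₀ * log (zB p y) + k₁ * log (zA p y)) C)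
    (ha : ∀ s < j, a (s + 1) * (((s : ℝ) + 1) * (s + 1 + (k₀ - 1 / 2)))
      = -(a s * (((j : ℝ) - s) * (j - s + (k₁ - 1 / 2)))))
    (q : ℕ) (hu : Set.EqOn u (fun x => c * zF p j a q x) C) (x : ℝ × ℝ) (hx : x ∈ C) :
    Dop w u x = c * (4 * q * (q + 2 * j * p + p * (k₀ + k₁)) / zR x * zF p j a q x) := by
  have hu' : Set.EqOn u (zF p j (fun s => c * a s) q) C := fun y hy => by
    rw [hu hy]; simp only [zF, mul_sum, mul_assoc]
  have hg := hgood x hx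
  rw [Dop_congr hC hu' hw hx, pd1_congr_s14 hC (fun y hy => zF_pd1 p j _ q y (hgood y hy)) hx,
    pd2_congr_s14 hC (fun y hy => zF_pd2 p j _ q y (hgood y hy)) hx,
    zF_pd1 p j _ q x hg, zF_pd2 p j _ q x hg, zlog_pd1 p k₀ k₁ x hg, zlog_pd2 p k₀ k₁ x hg]
  have d1 := (HasDerivAt.fun_sum (u := range (j + 1)) fun s _ =>
    ((zM_d1 p q s (j - s) x.1 x.2 hg).fun_mul
      (l1_d1 p q s (j - s) x.1 x.2 hg)).const_mul (c * a s)).deriv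
  have d2 := (HasDerivAt.fun_sum (u := range (j + 1)) fun s _ =>
    ((zM_d2 p q s (j - s) x.1 x.2 hg).fun_mul
      (l2_d2 p q s (j - s) x.1 x.2 hg)).const_mul (c * a s)).deriv
  unfold pd1 pd2
  rw [d1, d2]
  have tel := telescope_s14 j a (k₀ - 1 / 2) (k₁ - 1 / 2) (zA p x) (zB p x) hg.2.2 hg.2.1 ha
  have tel2 : ∑ s ∈ range (j + 1), (c * (4 * p ^ 2 * (zA (p - 1) x ^ 2 + zB (p - 1) x ^ 2)
      * zR x ^ q)) * (a s * (zB p x ^ (2 * s) * zA p x ^ (2 * (j - s))) *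
      ((s : ℝ) * (s + (k₀ - 1 / 2)) / zB p x ^ 2
        + ((j : ℝ) - s) * (j - s + (k₁ - 1 / 2)) / zA p x ^ 2)) = 0 := by
    rw [← mul_sum, tel, mul_zero]
  rw [← add_zero (c * _), ← tel2, zF]
  simp only [mul_sum, sum_mul]
  simp only [← sum_add_distrib, mul_sum]
  refine sum_congr rfl fun s hs => ?_
  have hs' : s ≤ j := by have := mem_range.mp hs; omega
  have key := alg_identity p q s ((j - s : ℕ) : ℝ) k₀ k₁ x.1 x.2 (zR x) (zA p x) (zB p x)
    (zA (p - 1) x) (zB (p - 1) x) (zA (p - 1 - 1) x) (zB (p - 1 - 1) x) ((p - 1 : ℕ) : ℝ) rfl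
    (zA_euler p hp x) (zB_euler p hp x) hg.1 hg.2.2 hg.2.1
  rw [Nat.cast_sub hs'] at key
  simp only [Prod.mk.eta, l1, l2, Nat.cast_sub hs']
  simp only [zM]
  linear_combination c * a s * (zR x ^ q * zB p x ^ (2 * s) * zA p x ^ (2 * (j - s))) * key

noncomputable def jc (α β : ℝ) (j s : ℕ) : ℝ :=
    (Real.Gamma ((j : ℝ) + α + 1) / (Real.Gamma ((s : ℝ) + α + 1) * (Nat.factorial (j - s)))) *
    (Real.Gamma ((j : ℝ) + β + 1) / (Real.Gamma ((j : ℝ) - s + β + 1) * (Nat.factorial s))) *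
    (-1) ^ s

lemma jc_rec (k₀ k₁ : ℝ) (hk₀ : 0 ≤ k₀) (hk₁ : 0 ≤ k₁) (j s : ℕ) (hs : s < j) :
    jc (k₀ - 1 / 2) (k₁ - 1 / 2) j (s + 1) * (((s : ℝ) + 1) * (s + 1 + (k₀ - 1 / 2)))
      = -(jc (k₀ - 1 / 2) (k₁ - 1 / 2) j s * (((j : ℝ) - s) * (j - s + (k₁ - 1 / 2)))) := by
  obtain ⟨n, rfl⟩ : ∃ n, j = s + 1 + n := ⟨j - (s + 1), by omega⟩
  have i1 : s + 1 + n - (s + 1) = n := by omega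
  have i2 : s + 1 + n - s = n + 1 := by omega
  unfold jc
  rw [i1, i2, Nat.factorial_succ, Nat.factorial_succ]
  have hs0 : (0 : ℝ) ≤ s := Nat.cast_nonneg s
  have hn0 : (0 : ℝ) ≤ n := Nat.cast_nonneg n
  have p1 : (0 : ℝ) < s + (k₀ - 1 / 2) + 1 := by linarith
  have p2 : (0 : ℝ) < n + (k₁ - 1 / 2) + 1 := by linarith
  have g1 := Real.Gamma_add_one p1.ne'
  have g2 := Real.Gamma_add_one p2.ne'
  have e1 : (((s + 1 : ℕ) : ℝ) + (k₀ - 1 / 2) + 1) = s + (k₀ - 1 / 2) + 1 + 1 := by push_cast; ring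
  have e2 : (((s + 1 + n : ℕ) : ℝ) - s + (k₁ - 1 / 2) + 1) = n + (k₁ - 1 / 2) + 1 + 1 := by
    push_cast; ring
  have e3 : (((s + 1 + n : ℕ) : ℝ) - ((s + 1 : ℕ) : ℝ) + (k₁ - 1 / 2) + 1)
      = n + (k₁ - 1 / 2) + 1 := by
    push_cast; ring
  rw [e1, e2, e3, g1, g2]
  have q1 := (Real.Gamma_pos_of_pos p1).ne'
  have q2 := (Real.Gamma_pos_of_pos p2).ne'
  generalize Real.Gamma (s + (k₀ - 1 / 2) + 1) = G1 at *
  generalize Real.Gamma (n + (k₁ - 1 / 2) + 1) = G2 at *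
  generalize Real.Gamma (((s + 1 + n : ℕ) : ℝ) + (k₀ - 1 / 2) + 1) = G3 at *
  generalize Real.Gamma (((s + 1 + n : ℕ) : ℝ) + (k₁ - 1 / 2) + 1) = G4 at *
  have e4 : ((s + 1 + n : ℕ) : ℝ) - s = n + 1 := by push_cast; ring
  have f1 : (Nat.factorial s : ℝ) ≠ 0 := by positivity
  have f2 : (Nat.factorial n : ℝ) ≠ 0 := by positivity
  rw [e4]
  generalize hX : (s : ℝ) + (k₀ - 1 / 2) + 1 = X at *
  generalize hY : (n : ℝ) + (k₁ - 1 / 2) + 1 = Y at *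
  have hX' : (s : ℝ) + 1 + (k₀ - 1 / 2) = X := by rw [← hX]; ring
  have hY' : (n : ℝ) + 1 + (k₁ - 1 / 2) = Y := by rw [← hY]; ring
  rw [hX', hY']
  push_cast
  have u1 : (s : ℝ) + 1 ≠ 0 := by positivity
  have u2 : (n : ℝ) + 1 ≠ 0 := by positivity
  have v1 := p1.ne'
  have v2 := p2.ne'
  rw [pow_succ]
  field_simp

lemma wedge_open (p : ℕ) (hp : 1 ≤ p) :
    IsOpen {x : ℝ × ℝ | ∃ r θ : ℝ, 0 < r ∧ 0 < θ ∧ θ < π / (2 * p) ∧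
        x = (r * cos θ, r * sin θ)} := by
  have hp' : (1 : ℝ) ≤ p := by exact_mod_cast hp
  have hle : π / (2 * p) ≤ π := by
    rw [div_le_iff₀ (by positivity)]; nlinarith [pi_pos]
  have := polarCoord.isOpen_image_symm_of_subset_target
    (t := Set.Ioi 0 ×ˢ Set.Ioo 0 (π / (2 * p))) (isOpen_Ioi.prod isOpen_Ioo) (by
      rw [polarCoord_target]
      refine Set.prod_mono le_rfl (Set.Ioo_subset_Ioo (by linarith [pi_pos]) hle))
  convert this using 1
  ext x
  simp only [Set.mem_setOf_eq, Set.mem_image, Set.mem_prod, Set.mem_Ioi, Set.mem_Ioo, Prod.exists,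
    polarCoord_symm_apply]
  constructor
  · rintro ⟨r, θ, h1, h2, h3, rfl⟩; exact ⟨r, θ, ⟨h1, h2, h3⟩, rfl⟩
  · rintro ⟨r, θ, ⟨h1, h2, h3⟩, rfl⟩; exact ⟨r, θ, h1, h2, h3, rfl⟩

/-- For the even dihedral system `I₂(2p)` with weight
`ω(r cos θ, r sin θ) = r^γ (sin pθ)^{k₀}(cos pθ)^{k₁}`, `γ = p(k₀+k₁)`, the `W`-invariant
Dunkl Laplacian `D = Δ + 2⟨∇ log ω, ∇·⟩` applied to `f(x) = |x|^{2q} h(x)`, with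
`h(r cos θ, r sin θ) = r^{2jp} P_j^{(k₀−1/2,k₁−1/2)}(cos 2pθ)`, satisfies: each iterate
`D^m f` is smooth on the wedge `C`, `D^m f = 0` on `C` for `m > q`, and
`e^{−D/2}f = ∑_{m=0}^{q} (−1/2)^m D^m f/m! = (−2)^q q! L_q^{(2jp+γ)}(|x|²/2) h(x)` on `C`. -/
theorem stmt_14 (p : ℕ) (hp : 1 ≤ p) (k₀ k₁ : ℝ) (hk₀ : 0 ≤ k₀) (hk₁ : 0 ≤ k₁)
    (γ : ℝ) (hγ : γ = p * (k₀ + k₁)) (j q : ℕ)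
    (C : Set (ℝ × ℝ))
    (hC : C = {x : ℝ × ℝ | ∃ r θ : ℝ, 0 < r ∧ 0 < θ ∧ θ < π / (2 * p) ∧
        x = (r * cos θ, r * sin θ)})
    (ω : ℝ × ℝ → ℝ)
    (hω : ∀ r θ : ℝ, 0 < r → 0 < θ → θ < π / (2 * p) →
        ω (r * cos θ, r * sin θ) = r ^ γ * sin (p * θ) ^ k₀ * cos (p * θ) ^ k₁)
    (h : ℝ × ℝ → ℝ)
    (hh : ∀ r θ : ℝ, 0 < r → 0 < θ → θ < π / (2 * p) →
        h (r * cos θ, r * sin θ)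
          = r ^ (2 * j * p) * jacobiPoly (k₀ - 1 / 2) (k₁ - 1 / 2) j (cos (2 * p * θ)))
    (f : ℝ × ℝ → ℝ) (hf : ∀ x : ℝ × ℝ, f x = (x.1 ^ 2 + x.2 ^ 2) ^ q * h x) :
    (∀ m : ℕ, ContDiffOn ℝ (⊤ : ℕ∞) ((Dop ω)^[m] f) C)
    ∧ (∀ m : ℕ, q < m → ∀ x ∈ C, (Dop ω)^[m] f x = 0)
    ∧ (∀ x ∈ C,
        ∑ m ∈ Finset.range (q + 1),
            ((-1 / 2 : ℝ)) ^ m / (Nat.factorial m) * ((Dop ω)^[m] f) x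
          = (-2 : ℝ) ^ q * (Nat.factorial q)
              * laguerrePoly (2 * j * p + γ) q ((x.1 ^ 2 + x.2 ^ 2) / 2) * h x) := by
  have hp' : (1 : ℝ) ≤ p := by exact_mod_cast hp
  have hop : IsOpen C := hC ▸ wedge_open p hp
  have hang : ∀ θ : ℝ, 0 < θ → θ < π / (2 * p) → 0 < sin (p * θ) ∧ 0 < cos (p * θ) := by
    intro θ h1 h2
    rw [lt_div_iff₀ (by positivity)] at h2
    have h3 : 0 < p * θ := by positivity
    exact ⟨sin_pos_of_pos_of_lt_pi h3 (by nlinarith [pi_pos]),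
      cos_pos_of_mem_Ioo ⟨by linarith [pi_pos], by linarith⟩⟩
  have hgood : ∀ x ∈ C, Good p x := by
    intro x hx
    rw [hC] at hx
    obtain ⟨r, θ, h1, h2, h3, rfl⟩ := hx
    obtain ⟨hs, hc⟩ := hang θ h2 h3
    refine ⟨?_, ?_, ?_⟩
    · rw [zR_polar]; positivity
    · rw [zB_polar]; positivity
    · rw [zA_polar]; positivity
  have hw : Set.EqOn (fun y => Real.log (ω y))
      (fun y => k₀ * log (zB p y) + k₁ * log (zA p y)) C := by
    intro x hx
    rw [hC] at hx
    obtain ⟨r, θ, h1, h2, h3, rfl⟩ := hx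
    obtain ⟨hs, hc⟩ := hang θ h2 h3
    simp only [hω r θ h1 h2 h3, zA_polar, zB_polar]
    rw [log_mul (by positivity) (by positivity), log_mul (by positivity) (by positivity),
      log_mul (by positivity) (by positivity), log_mul (by positivity) (by positivity),
      log_rpow h1, log_rpow hs, log_rpow hc, log_pow, hγ]
    ring
  set a : ℕ → ℝ := jc (k₀ - 1 / 2) (k₁ - 1 / 2) j with ha_def
  have ha := fun s hs => jc_rec k₀ k₁ hk₀ hk₁ j s hs
  have hH : ∀ n : ℕ, ∀ x ∈ C, zF p j a n x = (x.1 ^ 2 + x.2 ^ 2) ^ n * h x := by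
    intro n x hx
    rw [hC] at hx
    obtain ⟨r, θ, h1, h2, h3, rfl⟩ := hx
    rw [hh r θ h1 h2 h3]
    unfold zF jacobiPoly
    rw [mul_sum, mul_sum]
    refine sum_congr rfl fun s hs => ?_
    have hs' : s ≤ j := by have := mem_range.mp hs; omega
    have c2 : cos (2 * p * θ) = 2 * cos (p * θ) ^ 2 - 1 := by rw [mul_assoc, cos_two_mul]
    have c3 : (cos (2 * p * θ) - 1) / 2 = (-1) * sin (p * θ) ^ 2 := by
      rw [c2]; linear_combination sin_sq_add_cos_sq (p * θ)
    have c4 : (cos (2 * p * θ) + 1) / 2 = cos (p * θ) ^ 2 := by rw [c2]; ring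
    rw [c3, c4]
    simp only [ha_def, jc, zM, zA_polar, zB_polar]
    obtain ⟨n, rfl⟩ := Nat.exists_eq_add_of_le hs'
    rw [Nat.add_sub_cancel_left]
    simp only [zR]
    ring
  have hγ0 : 0 ≤ γ := by rw [hγ]; positivity
  set b : ℝ := 2 * j * p + γ with hb
  have hb0 : 0 ≤ b := by rw [hb]; positivity
  have hR : ∀ x ∈ C, zR x ≠ 0 := fun x hx => (hgood x hx).1
  -- the iterates
  have hit : ∀ m n : ℕ, m + n = q → Set.EqOn ((Dop ω)^[m] f)
      (fun x => (4 ^ m * (q.factorial / n.factorial)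
        * (Real.Gamma (q + b + 1) / Real.Gamma (n + b + 1))) * zF p j a n x) C := by
    intro m
    induction m with
    | zero =>
      intro n hn x hx
      obtain rfl : n = q := by omega
      have g : Real.Gamma (n + b + 1) ≠ 0 := (Real.Gamma_pos_of_pos (by positivity)).ne'
      have g2 : (n.factorial : ℝ) ≠ 0 := by positivity
      simp only [Function.iterate_zero, id, hf x, hH n x hx]
      field_simp
    | succ m ih =>
      intro n hn x hx
      rw [Function.iterate_succ_apply']
      rw [D_zF hop p hp j a k₀ k₁ hgood ω _ _ hw ha (n + 1) (ih (n + 1) (by omega)) x hx]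
      have e : 2 * (j : ℝ) * p + p * (k₀ + k₁) = b := by rw [hb, hγ]
      have p1 : 0 < (n : ℝ) + b + 1 := by positivity
      have g1 := Real.Gamma_add_one p1.ne'
      have e1 : ((n + 1 : ℕ) : ℝ) + b + 1 = n + b + 1 + 1 := by push_cast; ring
      have e2 : ((n + 1 : ℕ) : ℝ) + 2 * j * p + p * (k₀ + k₁) = n + b + 1 := by
        rw [add_assoc, e]; push_cast; ring
      have q1 := (Real.Gamma_pos_of_pos p1).ne'
      have u2 : (n : ℝ) + 1 ≠ 0 := by positivity
      have f2 : (Nat.factorial n : ℝ) ≠ 0 := by positivity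
      have r0 : x.1 ^ 2 + x.2 ^ 2 ≠ 0 := hR x hx
      rw [e1, e2, g1, Nat.factorial_succ]
      simp only [hH _ x hx, zR, pow_succ]
      have v := p1.ne'
      generalize Real.Gamma (n + b + 1) = G at *
      generalize (n : ℝ) + b + 1 = Y at *
      push_cast
      field_simp
  have hzero : ∀ m : ℕ, q < m → Set.EqOn ((Dop ω)^[m] f) (fun x => 0 * zF p j a 0 x) C := by
    intro m hm
    induction m, hm using Nat.le_induction with
    | base =>
      intro x hx
      rw [Nat.succ_eq_add_one, Function.iterate_succ_apply',
        D_zF hop p hp j a k₀ k₁ hgood ω _ _ hw ha 0 (hit q 0 (by omega)) x hx]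
      simp
    | succ m hm ih =>
      intro x hx
      rw [Function.iterate_succ_apply',
        D_zF hop p hp j a k₀ k₁ hgood ω _ _ hw ha 0 ih x hx]
      simp
  refine ⟨?_, ?_, ?_⟩
  · intro m
    by_cases hm : q < m
    · exact ((contDiff_const.mul (zF_contDiff p j a 0)).contDiffOn).congr (hzero m hm)
    · exact ((contDiff_const.mul (zF_contDiff p j a (q - m))).contDiffOn).congr
        (hit m (q - m) (by omega))
  · intro m hm x hx
    rw [hzero m hm hx]; simp
  · intro x hx
    rw [laguerrePoly, ← sum_range_reflect]
    simp only [mul_sum, sum_mul]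
    refine sum_congr rfl fun n hn => ?_
    have hn' : n ≤ q := by have := mem_range.mp hn; omega
    obtain ⟨m, rfl⟩ := Nat.exists_eq_add_of_le hn'
    have i1 : n + m + 1 - 1 - n = m := by omega
    rw [i1, hit m n (by omega) hx, Nat.add_sub_cancel_left]
    simp only [hH _ x hx]
    have q1 := (Real.Gamma_pos_of_pos (show 0 < (n : ℝ) + b + 1 by positivity)).ne'
    have f1 : (Nat.factorial m : ℝ) ≠ 0 := by positivity
    have f2 : (Nat.factorial n : ℝ) ≠ 0 := by positivity
    have s1 : (-1 / 2 : ℝ) ^ m * 4 ^ m = (-2) ^ m := by rw [← mul_pow]; norm_num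
    have s2 : (-2 : ℝ) ^ n * (-((x.1 ^ 2 + x.2 ^ 2) / 2)) ^ n = (x.1 ^ 2 + x.2 ^ 2) ^ n := by
      rw [← mul_pow]; congr 1; ring
    rw [pow_add]
    generalize Real.Gamma (((n + m : ℕ) : ℝ) + b + 1) = G1
    generalize Real.Gamma ((n : ℝ) + b + 1) = G2 at *
    calc _ = ((-1 / 2 : ℝ) ^ m * 4 ^ m) * (x.1 ^ 2 + x.2 ^ 2) ^ n * ((n + m).factorial /
            (m.factorial * n.factorial) * (G1 / G2) * h x) := by
            field_simp
      _ = (-2) ^ m * ((-2 : ℝ) ^ n * (-((x.1 ^ 2 + x.2 ^ 2) / 2)) ^ n) * ((n + m).factorial /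
            (m.factorial * n.factorial) * (G1 / G2) * h x) := by rw [s1, s2]
      _ = _ := by
            generalize (-((x.1 ^ 2 + x.2 ^ 2) / 2)) ^ n = T
            field_simp
end

section
/- Let k₀, k₁ ≥ 0 and let F : ℝ → ℝ be twice continuously differentiable. Define g(θ) = F(cos²θ). Then for every θ ∈ (0, π/2), with z = cos²θ: (1/2)g''(θ) + (k₀ cot θ − k₁ tan θ) g'(θ) = 2z(1−z) F''(z) + [ (2k₁+1) − (2k₀+2k₁+2) z ] F'(z). That is, the map θ ↦ cos²θ intertwines the angular generator (1/2)∂²_θ + (k₀ cot θ − k₁ tan θ)∂_θ of the dihedral radial Dunkl process with the generator 2z(1−z)∂²_z + (d − (d+d')z)∂_z of the Jacobi process of parameters d = 2k₁+1, d' = 2k₀+1. -/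
open Real

/-- For `k₀, k₁ ≥ 0` and a `C²` function `F : ℝ → ℝ`, the function
`g(θ) = F(cos²θ)` satisfies, on `(0, π/2)`, with `z = cos²θ`,
`(1/2)g'' + (k₀ cot θ − k₁ tan θ) g' = 2z(1−z)F''(z) + [(2k₁+1) − (2k₀+2k₁+2)z]F'(z)`:
the map `θ ↦ cos²θ` intertwines the angular dihedral generator with the generator of
the Jacobi process of parameters `d = 2k₁+1`, `d' = 2k₀+1`. -/
theorem stmt_15 (k₀ k₁ : ℝ) (hk₀ : 0 ≤ k₀) (hk₁ : 0 ≤ k₁)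
    (F : ℝ → ℝ) (hF : ContDiff ℝ 2 F)
    (g : ℝ → ℝ) (hg : ∀ θ : ℝ, g θ = F (cos θ ^ 2)) :
    ∀ θ : ℝ, 0 < θ → θ < π / 2 →
      (1 / 2) * deriv (deriv g) θ + (k₀ * Real.cot θ - k₁ * Real.tan θ) * deriv g θ
        = 2 * cos θ ^ 2 * (1 - cos θ ^ 2) * deriv (deriv F) (cos θ ^ 2)
          + ((2 * k₁ + 1) - (2 * k₀ + 2 * k₁ + 2) * cos θ ^ 2) * deriv F (cos θ ^ 2) := by
  intro θ h0 h1
  have hs : sin θ ≠ 0 := (sin_pos_of_pos_of_lt_pi h0 (by linarith [pi_pos])).ne'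
  have hc : cos θ ≠ 0 := (cos_pos_of_mem_Ioo ⟨by linarith, h1⟩).ne'
  have hF1 : Differentiable ℝ F := hF.differentiable (by norm_num)
  have hF2 : Differentiable ℝ (deriv F) := by
    have h : ContDiff ℝ (1 + 1) F := by simpa [one_add_one_eq_two] using hF
    exact (contDiff_succ_iff_deriv.1 h).2.2.differentiable (by norm_num)
  have hz : ∀ x : ℝ, HasDerivAt (fun x => cos x ^ 2) (-2 * sin x * cos x) x := by
    intro x
    refine HasDerivAt.congr_deriv ((hasDerivAt_cos x).pow 2) ?_
    norm_num
    ring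
  have hgf : g = fun x => F (cos x ^ 2) := funext hg
  have hd : deriv g = fun x => deriv F (cos x ^ 2) * (-2 * sin x * cos x) := by
    funext x
    rw [hgf]
    exact ((hF1 (cos x ^ 2)).hasDerivAt.comp x (hz x)).deriv
  have hsc : HasDerivAt (fun x => -2 * sin x * cos x)
      (-2 * cos θ * cos θ + -2 * sin θ * (-sin θ)) θ :=
    ((hasDerivAt_sin θ).const_mul (-2)).mul (hasDerivAt_cos θ)
  have hd2 := (((hF2 (cos θ ^ 2)).hasDerivAt.comp θ (hz θ)).mul hsc).deriv
  have hd3 : deriv (deriv g) θ = deriv (deriv F) (cos θ ^ 2) * (-2 * sin θ * cos θ)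
      * (-2 * sin θ * cos θ)
      + deriv F (cos θ ^ 2) * (-2 * cos θ * cos θ + -2 * sin θ * (-sin θ)) := by
    rw [hd]
    exact hd2
  rw [hd3, hd, Real.cot_eq_cos_div_sin, Real.tan_eq_sin_div_cos]
  beta_reduce
  have hsq : sin θ ^ 2 = 1 - cos θ ^ 2 := sin_sq θ
  generalize deriv (deriv F) (cos θ ^ 2) = A
  generalize deriv F (cos θ ^ 2) = B
  have e : (k₀ * (cos θ / sin θ) - k₁ * (sin θ / cos θ)) * (B * (-2 * sin θ * cos θ))
      = -2 * B * (k₀ * cos θ ^ 2 - k₁ * sin θ ^ 2) := by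
    field_simp
  rw [e]
  linear_combination (2 * A * cos θ ^ 2 + B + 2 * k₁ * B) * hsq
end
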